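/- arXiv:math/9811074 — 3 statements merged into one kernel-verified Lean document; each statement's English description precedes it below -/
import Mathlib

section
/- Let p₀,p₁,p₂,p₃ ∈ ℝ³ span a small simplex S that contains its own circumcenter, with edge lengths y₁ = |p₀−p₁|, y₂ = |p₀−p₂|, y₃ = |p₀−p₃|, y₄ = |p₂−p₃|, y₅ = |p₁−p₃|, y₆ = |p₁−p₂|. Suppose y₄ ∈ [2.51, 2√2] and one of the following holds: (1) y₁ ∈ [2.06, 2.51] and y₂,y₃,y₅,y₆ ∈ [2, 2.51]; (2) y₂ ∈ [2.08, 2.51] and y₁,y₃,y₅,y₆ ∈ [2, 2.51]; (3) y₅ ∈ [2.2, 2.51] and y₁,y₂,y₃,y₆ ∈ [2, 2.51]; (4) y₄ ∈ [2.58, 2√2], y₅ ∈ [2.12, 2.51], and y₁,y₂,y₃,y₆ ∈ [2, 2.51]. Then vor(S) < 0. -/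
open MeasureTheory Real

noncomputable section

abbrev E3 : Type := EuclideanSpace ℝ (Fin 3)

/-- The density of the regular octahedron. -/
def δoct : ℝ := (-3 * π + 12 * arccos (1 / Real.sqrt 3)) / Real.sqrt 8

/-- The circumradius `η(a,b,c)` of a triangle with side lengths `a`, `b`, `c`. -/
def eta (a b c : ℝ) : ℝ :=
  a * b * c / Real.sqrt ((a + b + c) * (b + c - a) * (a + c - b) * (a + b - c))

/-- A simplex is small if all six edge lengths are at least `2` and each of the
four triangular faces has circumradius at most `√2`. -/
def IsSmall (p₀ p₁ p₂ p₃ : E3) : Prop :=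
  (2 ≤ dist p₀ p₁ ∧ 2 ≤ dist p₀ p₂ ∧ 2 ≤ dist p₀ p₃ ∧
    2 ≤ dist p₁ p₂ ∧ 2 ≤ dist p₁ p₃ ∧ 2 ≤ dist p₂ p₃) ∧
  eta (dist p₀ p₁) (dist p₀ p₂) (dist p₁ p₂) ≤ Real.sqrt 2 ∧
  eta (dist p₀ p₁) (dist p₀ p₃) (dist p₁ p₃) ≤ Real.sqrt 2 ∧
  eta (dist p₀ p₂) (dist p₀ p₃) (dist p₂ p₃) ≤ Real.sqrt 2 ∧
  eta (dist p₁ p₂) (dist p₁ p₃) (dist p₂ p₃) ≤ Real.sqrt 2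

/-- `S = conv {p₀, p₁, p₂, p₃}` contains its own circumcenter. -/
def ContainsCircumcenter (p₀ p₁ p₂ p₃ : E3) : Prop :=
  ∃ c ∈ convexHull ℝ ({p₀, p₁, p₂, p₃} : Set E3),
    dist c p₀ = dist c p₁ ∧ dist c p₀ = dist c p₂ ∧ dist c p₀ = dist c p₃

/-- The Voronoi score of the simplex `S = conv {p₀, p₁, p₂, p₃}` at the vertex `p₀`:
`vor(S) = 4·(-δ_oct · vol {x ∈ S : |x-p₀| ≤ |x-pⱼ|, j = 1,2,3} + vol (B(p₀,1) ∩ C(S)))`,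
where `C(S)` is the cone over `S` with apex `p₀`. -/
def vor (p₀ p₁ p₂ p₃ : E3) : ℝ :=
  4 * (-δoct * (volume {x ∈ convexHull ℝ ({p₀, p₁, p₂, p₃} : Set E3) |
        dist x p₀ ≤ dist x p₁ ∧ dist x p₀ ≤ dist x p₂ ∧ dist x p₀ ≤ dist x p₃}).toReal +
      (volume (Metric.closedBall p₀ 1 ∩
        {y : E3 | ∃ x ∈ convexHull ℝ ({p₀, p₁, p₂, p₃} : Set E3), ∃ t : ℝ, 0 ≤ t ∧
          y = p₀ + t • (x - p₀)})).toReal)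

/-!
In the coordinates `x = p₀ + ∑ i, xᵢ • (pᵢ - p₀)` the Voronoi cell of `p₀` contains six tetrahedra
spanned by `p₀`, the midpoint of an edge at `p₀`, the circumcenter of a face through that edge, and
the circumcenter of the simplex; this bounds its volume from below by a rational expression in the
squared edge lengths divided by the square root of the Gram determinant. Girard's theorem turns the
solid angle at `p₀` into a sum of dihedral angles, and reading these as arguments of complex numbers
gives `tan (Ω / 2) = √det / A`, with `A` a polynomial in the edge lengths and their squares.

Replacing the arctangent by a tangent line, the edge lengths by chords of the square root, and the
circumradius terms of the faces by affine functions reduces the negativity of the score to a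
polynomial inequality in the squared edge lengths on finitely many boxes. On each box it is checked
in exact rational arithmetic, by expanding at the corner and bounding the Horner coefficients.
-/

section ArctanBounds

open Filter Finset

theorem hasSum_arctan_alternating {x : ℝ} (h₀ : 0 ≤ x) (h₁ : x < 1) :
    Tendsto (fun n ↦ ∑ i ∈ range n, (-1) ^ i * (x ^ (2 * i + 1) / ↑(2 * i + 1))) atTop
      (nhds (arctan x)) := by
  simpa only [mul_div_assoc] using
    (hasSum_arctan (x := x) (by rwa [norm_of_nonneg h₀])).tendsto_sum_nat

theorem antitone_pow_div {x : ℝ} (h₀ : 0 ≤ x) (h₁ : x < 1) :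
    Antitone fun i : ℕ ↦ x ^ (2 * i + 1) / ((2 * i + 1 : ℕ) : ℝ) := by
  intro i j hij
  exact div_le_div₀ (by positivity) (pow_le_pow_of_le_one h₀ h₁.le (by omega)) (by positivity)
    (by gcongr)

theorem sum_range_le_arctan {x : ℝ} (h₀ : 0 ≤ x) (h₁ : x < 1) (k : ℕ) :
    ∑ i ∈ range (2 * k), (-1) ^ i * (x ^ (2 * i + 1) / ↑(2 * i + 1)) ≤ arctan x :=
  (antitone_pow_div h₀ h₁).alternating_series_le_tendsto (hasSum_arctan_alternating h₀ h₁) k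

theorem arctan_le_sum_range {x : ℝ} (h₀ : 0 ≤ x) (h₁ : x < 1) (k : ℕ) :
    arctan x ≤ ∑ i ∈ range (2 * k + 1), (-1) ^ i * (x ^ (2 * i + 1) / ↑(2 * i + 1)) :=
  (antitone_pow_div h₀ h₁).tendsto_le_alternating_series (hasSum_arctan_alternating h₀ h₁) k

theorem concaveOn_arctan : ConcaveOn ℝ (Set.Ici 0) arctan := by
  refine AntitoneOn.concaveOn_of_deriv (convex_Ici 0) continuous_arctan.continuousOn
    differentiable_arctan.differentiableOn fun a ha b hb hab ↦ ?_
  rw [interior_Ici, Set.mem_Ioi] at ha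
  simp only [Real.deriv_arctan]
  gcongr

theorem arctan_le_tangent {t₀ t : ℝ} (h₀ : 0 ≤ t₀) (ht : 0 ≤ t) :
    arctan t ≤ arctan t₀ + (t - t₀) / (1 + t₀ ^ 2) := by
  have hd := hasDerivAt_arctan t₀
  rcases lt_trichotomy t t₀ with h | rfl | h
  · have := concaveOn_arctan.le_slope_of_hasDerivAt ht h₀ h hd
    rw [slope_def_field, le_div_iff₀ (sub_pos.2 h)] at this
    linear_combination this
  · simp
  · have := concaveOn_arctan.slope_le_of_hasDerivAt h₀ ht h hd
    rw [slope_def_field, div_le_iff₀ (sub_pos.2 h)] at this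
    linear_combination this

theorem arctan_le_linear {t : ℝ} (ht : 0 ≤ t) : arctan t ≤ 0.02176 + 0.9 * t := by
  have htan := arctan_le_tangent (t₀ := 1 / 3) (by norm_num) ht
  have hsum := arctan_le_sum_range (x := 1 / 3) (by norm_num) (by norm_num) 2
  norm_num [sum_range_succ] at htan hsum ⊢
  linarith

theorem δoct_eq : δoct = 3 * √2 * arctan (3 - 2 * √2) := by
  have hsq : √2 ^ 2 = 2 := sq_sqrt zero_le_two
  have hone : 1 < √2 := one_lt_sqrt_two
  have harccos : arccos (1 / √3) = π / 4 + arctan (3 - 2 * √2) := by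
    have harg : √(1 - (1 / √3) ^ 2) / (1 / √3) = √2 := by
      rw [div_pow, sq_sqrt zero_le_three, one_pow, div_div_eq_mul_div, div_one,
        ← sqrt_mul (by norm_num)]
      norm_num
    rw [arccos_eq_arctan (by positivity), harg, ← arctan_one, arctan_add (by linarith)]
    congr 1
    rw [eq_div_iff (by linarith)]
    linear_combination 2 * hsq
  have hsqrt8 : √8 = 2 * √2 := by
    rw [show (8 : ℝ) = 2 ^ 2 * 2 by norm_num, sqrt_mul (by norm_num), sqrt_sq zero_le_two]
  rw [δoct, harccos, hsqrt8, div_eq_iff (by positivity)]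
  linear_combination -6 * arctan (3 - 2 * √2) * hsq

theorem lt_δoct : 0.7209 < δoct := by
  have hlow : 1.4142135 ≤ √2 := le_sqrt_of_sq_le (by norm_num)
  have hupp : √2 ≤ 1.4142136 := sqrt_le_iff.2 (by norm_num)
  have hsum := sum_range_le_arctan (x := 0.1715728) (by norm_num) (by norm_num) 2
  have harctan : (0.169918 : ℝ) ≤ arctan (3 - 2 * √2) := by
    calc (0.169918 : ℝ) ≤ _ := by norm_num [sum_range_succ]
      _ ≤ arctan 0.1715728 := hsum
      _ ≤ arctan (3 - 2 * √2) := arctan_le_arctan_iff.2 (by linarith)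
  rw [δoct_eq]
  nlinarith

end ArctanBounds

/-- A polynomial with rational coefficients in the variables `s 0, s 1, s 2, …`, in nested Horner
form: in `horner p q = p + s 0 * q` the polynomial `p` involves `s 1, s 2, …` only, and these are
the variables `s 0, s 1, …` of its own representation. The kernel evaluates the polynomial
inequalities of this file in this form. -/
inductive HornerPoly : Type
  | const (a : ℚ) : HornerPoly
  | horner (p q : HornerPoly) : HornerPoly

namespace HornerPoly

/-- The value of a polynomial at the point `s`. -/
def eval : HornerPoly → (ℕ → ℝ) → ℝ
  | const a, _ => a
  | horner p q, s => p.eval (fun i ↦ s (i + 1)) + s 0 * q.eval s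

/-- The indeterminate `s i`. -/
def var : ℕ → HornerPoly
  | 0 => horner (const 0) (const 1)
  | i + 1 => horner (var i) (const 0)

/-- Addition of a constant. -/
def addConst (a : ℚ) : HornerPoly → HornerPoly
  | const b => const (a + b)
  | horner p q => horner (addConst a p) q

/-- Addition of polynomials. -/
def add : HornerPoly → HornerPoly → HornerPoly
  | const a, r => addConst a r
  | horner p q, const b => horner (addConst b p) q
  | horner p q, horner p' q' => horner (add p p') (add q q')

/-- Multiplication by a constant. -/
def smul (a : ℚ) : HornerPoly → HornerPoly
  | const b => const (a * b)
  | horner p q => horner (smul a p) (smul a q)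

/-- The polynomial in `s 0` obtained by applying `f` to each coefficient, a polynomial in the
other variables. -/
def mapCoeff (f : HornerPoly → HornerPoly) : HornerPoly → HornerPoly
  | const b => horner (f (const b)) (const 0)
  | horner p q => horner (f p) (mapCoeff f q)

/-- Multiplication of polynomials. -/
def mul : HornerPoly → HornerPoly → HornerPoly
  | const a, r => smul a r
  | horner p q, r => add (mapCoeff (mul p) r) (horner (const 0) (mul q r))

instance : Add HornerPoly := ⟨add⟩
instance : Sub HornerPoly := ⟨fun p q ↦ add p (smul (-1) q)⟩
instance : Mul HornerPoly := ⟨mul⟩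
instance : RatCast HornerPoly := ⟨const⟩

theorem eval_ratCast (a : ℚ) (s : ℕ → ℝ) : eval (a : HornerPoly) s = a := rfl

theorem eval_var (i : ℕ) (s : ℕ → ℝ) : (var i).eval s = s i := by
  induction i generalizing s with
  | zero => simp [var, eval]
  | succ i ih => simp [var, eval, ih]

theorem eval_addConst (a : ℚ) (p : HornerPoly) (s : ℕ → ℝ) :
    (addConst a p).eval s = a + p.eval s := by
  induction p generalizing s with
  | const b => simp [addConst, eval]
  | horner p q ihp => simp only [addConst, eval, ihp, add_assoc]

theorem eval_add (p q : HornerPoly) (s : ℕ → ℝ) : (p + q).eval s = p.eval s + q.eval s := by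
  change (add p q).eval s = _
  induction p generalizing q s with
  | const a => simp only [add, eval, eval_addConst]
  | horner p r ihp ihr =>
    cases q with
    | const b => simp only [add, eval, eval_addConst]; ring
    | horner p' r' => simp only [add, eval, ihp, ihr]; ring

theorem eval_smul (a : ℚ) (p : HornerPoly) (s : ℕ → ℝ) : (smul a p).eval s = a * p.eval s := by
  induction p generalizing s with
  | const b => simp [smul, eval]
  | horner p q ihp ihq => simp only [smul, eval, ihp, ihq]; ring

theorem eval_sub (p q : HornerPoly) (s : ℕ → ℝ) : (p - q).eval s = p.eval s - q.eval s := by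
  change (p + smul (-1) q).eval s = _
  rw [eval_add, eval_smul]
  push_cast
  ring

theorem eval_mapCoeff {f : HornerPoly → HornerPoly} {s : ℕ → ℝ} {c : ℝ}
    (hf : ∀ p, (f p).eval (fun i ↦ s (i + 1)) = c * p.eval (fun i ↦ s (i + 1)))
    (p : HornerPoly) : (mapCoeff f p).eval s = c * p.eval s := by
  induction p with
  | const b => simp [mapCoeff, eval, hf]
  | horner p q _ ihq => simp only [mapCoeff, eval, hf, ihq]; ring

theorem eval_mul (p q : HornerPoly) (s : ℕ → ℝ) : (p * q).eval s = p.eval s * q.eval s := by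
  change (mul p q).eval s = _
  induction p generalizing q s with
  | const a => simp only [mul, eval, eval_smul]
  | horner p r ihp ihr =>
    change (mapCoeff (mul p) q + horner (const 0) (mul r q) : HornerPoly).eval s = _
    rw [eval_add, eval_mapCoeff (c := p.eval fun i ↦ s (i + 1)) fun _ ↦ ihp _ _]
    simp only [eval, ihr]
    push_cast
    ring

/-- Replacement of every coefficient by its positive part. -/
def posPart : HornerPoly → HornerPoly
  | const a => const (max a 0)
  | horner p q => horner (posPart p) (posPart q)

/-- A polynomial without `s 0` (but with the same numbering of variables as the coefficients) that
bounds the given one from above on the unit cube. -/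
def collapse : HornerPoly → HornerPoly
  | const a => const a
  | horner p q => p + posPart (collapse q)

/-- A sufficient test for a polynomial in `n` variables to be nonpositive on the unit cube. -/
def nonposOnCube : ℕ → HornerPoly → Bool
  | _, const a => a ≤ 0
  | 0, horner _ _ => false
  | n + 1, horner p q => nonposOnCube n p && nonposOnCube n (p + collapse q)

variable {s : ℕ → ℝ}

theorem eval_posPart_nonneg (hs : ∀ i, 0 ≤ s i) (p : HornerPoly) : 0 ≤ (posPart p).eval s := by
  induction p generalizing s with
  | const a => simp [posPart, eval]
  | horner p q ihp ihq =>
    exact add_nonneg (ihp fun i ↦ hs _) (mul_nonneg (hs 0) (ihq hs))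

theorem eval_le_eval_posPart (hs : ∀ i, 0 ≤ s i) (p : HornerPoly) :
    p.eval s ≤ (posPart p).eval s := by
  induction p generalizing s with
  | const a => simp [posPart, eval]
  | horner p q ihp ihq =>
    exact add_le_add (ihp fun i ↦ hs _) (mul_le_mul_of_nonneg_left (ihq hs) (hs 0))

theorem eval_le_eval_collapse (hs : ∀ i, s i ∈ Set.Icc 0 1) (p : HornerPoly) :
    p.eval s ≤ (collapse p).eval (fun i ↦ s (i + 1)) := by
  induction p with
  | const a => exact le_rfl
  | horner p q _ ihq =>
    have hs' : ∀ i, 0 ≤ s (i + 1) := fun i ↦ (hs _).1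
    rw [eval, collapse, eval_add]
    gcongr
    calc s 0 * q.eval s
        ≤ s 0 * (posPart (collapse q)).eval (fun i ↦ s (i + 1)) :=
          mul_le_mul_of_nonneg_left (ihq.trans (eval_le_eval_posPart hs' _)) (hs 0).1
      _ ≤ _ := mul_le_of_le_one_left (eval_posPart_nonneg hs' _) (hs 0).2

theorem eval_nonpos {n : ℕ} {p : HornerPoly} (h : nonposOnCube n p = true)
    (hs : ∀ i, s i ∈ Set.Icc 0 1) : p.eval s ≤ 0 := by
  induction n, p using nonposOnCube.induct generalizing s with
  | case1 n a => simpa [nonposOnCube, eval] using h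
  | case2 p q => simp [nonposOnCube] at h
  | case3 n p q ih₀ ih₁ =>
    simp only [nonposOnCube, Bool.and_eq_true] at h
    have h₀ := ih₀ h.1 (s := fun i ↦ s (i + 1)) fun i ↦ hs _
    have h₁ := ih₁ h.2 (s := fun i ↦ s (i + 1)) fun i ↦ hs _
    rw [eval_add] at h₁
    have hq := mul_le_mul_of_nonneg_left (eval_le_eval_collapse hs q) (hs 0).1
    rw [eval]
    nlinarith [(hs 0).1, (hs 0).2]

end HornerPoly

section EdgeFormulas

variable {R : Type*} [Add R] [Sub R] [Mul R] [RatCast R]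

/-- Sixteen times the squared area of the triangle with squared side lengths `a`, `b`, `c`. -/
def heron (a b c : R) : R := (4 : ℚ) * (a * b) - (a + b - c) * (a + b - c)

/-- Let `q` be the circumcenter of a triangle whose squared side lengths at a vertex `p` are `a` and
`b`, the third being `c`. The barycentric coordinates of `q` at the vertices other than `p` have the
sum `circumNum a b c / heron a b c`. -/
def circumNum (a b c : R) : R := c * (a + b) - (a - b) * (a - b)

/-- The Gram determinant of the edge vectors at `p₀` of a simplex with squared edge lengths `xᵢ`,
numbered like the `yᵢ` of the theorem. -/
def edgeGram (x₁ x₂ x₃ x₄ x₅ x₆ : R) : R :=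
  x₁ * (x₂ * x₃) + (0.25 : ℚ) * ((x₁ + x₂ - x₆) * ((x₁ + x₃ - x₅) * (x₂ + x₃ - x₄))
    - x₁ * ((x₂ + x₃ - x₄) * (x₂ + x₃ - x₄)) - x₂ * ((x₁ + x₃ - x₅) * (x₁ + x₃ - x₅))
    - x₃ * ((x₁ + x₂ - x₆) * (x₁ + x₂ - x₆)))

/-- Hales's function `χ` of the squared edge lengths: the barycentric coordinate of the circumcenter
of the simplex at `p₃` is `chi x₁ x₂ x₃ x₄ x₅ x₆ / (8 * edgeGram x₁ x₂ x₃ x₄ x₅ x₆)`. -/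
def chi (x₁ x₂ x₃ x₄ x₅ x₆ : R) : R :=
  x₄ * (x₁ * (x₂ + x₆ - x₁)) + x₅ * (x₂ * (x₁ + x₆ - x₂)) + x₃ * (x₆ * (x₁ + x₂ - x₆))
    - (2 : ℚ) * (x₁ * (x₂ * x₆))

/-- Hales's function `a`: the solid angle at `p₀` of a simplex with edge lengths `yᵢ` at `p₀` and
squared edge lengths `xᵢ` is twice the argument of `solidRe + √edgeGram * I`. -/
def solidRe (y₁ y₂ y₃ x₁ x₂ x₃ x₄ x₅ x₆ : R) : R :=
  y₁ * (y₂ * y₃)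
    + (0.5 : ℚ) * (y₁ * (x₂ + x₃ - x₄) + y₂ * (x₁ + x₃ - x₅) + y₃ * (x₁ + x₂ - x₆))

/-- The affine function with coefficients `c` of three variables. -/
def affineForm (c : Fin 4 → ℚ) (a b d : R) : R := c 0 + c 1 * a + c 2 * b + c 3 * d

/-- The chord of the square root function between the squares of `l` and `2.51`. -/
def sqrtChord (l : ℚ) (x : R) : R := ((l + 2.51)⁻¹ : ℚ) * (x + (2.51 * l : ℚ))

end EdgeFormulas

/-- The bounds of a computation on a box of edge lengths: `lo` are the lower bounds of the edge
lengths, and each `faceᵢⱼ` is an affine lower bound for `circumNum / heron` on the face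
`p₀ pᵢ pⱼ`. -/
structure EdgeBox where
  lo : Fin 6 → ℚ
  face₁₂ : Fin 4 → ℚ
  face₁₃ : Fin 4 → ℚ
  face₂₃ : Fin 4 → ℚ

namespace EdgeBox

open HornerPoly

/-- The range of the square of the `i`-th edge length. -/
def range (b : EdgeBox) (i : Fin 6) : ℚ × ℚ := (b.lo i ^ 2, if i = 3 then 8 else 2.51 ^ 2)

/-- The edge lengths `y` lie in the box. -/
def Contains (b : EdgeBox) (y : Fin 6 → ℝ) : Prop :=
  ∀ i, (b.lo i : ℝ) ≤ y i ∧ y i ^ 2 ≤ (b.range i).2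

/-- A polynomial in the squared edge lengths whose nonpositivity makes the Voronoi score negative.
Here `57.6 = 64 * 0.9`, `0.11231 ≥ 64 * 0.02176 / 12.4` and `38.44 = 6.2 ^ 2` come from the bounds
`arctan t ≤ 0.02176 + 0.9 * t` and `12.4 * w ≤ w ^ 2 + 6.2 ^ 2`. -/
def scoreBound {R : Type*} [Add R] [Sub R] [Mul R] [RatCast R] (b : EdgeBox) (x : Fin 6 → R) : R :=
  (57.6 : ℚ) * edgeGram (x 0) (x 1) (x 2) (x 3) (x 4) (x 5)
    + solidRe (sqrtChord (b.lo 0) (x 0)) (sqrtChord (b.lo 1) (x 1)) (sqrtChord (b.lo 2) (x 2))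
        (x 0) (x 1) (x 2) (x 3) (x 4) (x 5)
      * ((0.11231 : ℚ) * (edgeGram (x 0) (x 1) (x 2) (x 3) (x 4) (x 5) + (38.44 : ℚ))
        - (0.7209 : ℚ)
          * (affineForm b.face₁₂ (x 0) (x 1) (x 5) * chi (x 0) (x 1) (x 2) (x 3) (x 4) (x 5)
            + affineForm b.face₁₃ (x 0) (x 2) (x 4) * chi (x 0) (x 2) (x 1) (x 3) (x 5) (x 4)
            + affineForm b.face₂₃ (x 1) (x 2) (x 3) * chi (x 1) (x 2) (x 0) (x 4) (x 5) (x 3)))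

/-- The coordinate that runs through the interval `I` as `s i` runs through `[0, 1]`. -/
def intervalVar (i : ℕ) (I : ℚ × ℚ) : HornerPoly := (I.1 : HornerPoly) + (I.2 - I.1 : ℚ) * var i

/-- The two halves of an interval. -/
def halves (I : ℚ × ℚ) : List (ℚ × ℚ) := [(I.1, (I.1 + I.2) / 2), ((I.1 + I.2) / 2, I.2)]

/-- A test, on each octant of the box `I₁ × I₂ × I₃`, that `c` is a lower bound for
`circumNum / heron`. -/
def checkFace (c : Fin 4 → ℚ) (I₁ I₂ I₃ : ℚ × ℚ) : Bool :=
  (halves I₁).all fun J₁ ↦ (halves I₂).all fun J₂ ↦ (halves I₃).all fun J₃ ↦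
    nonposOnCube 3 (affineForm c (intervalVar 0 J₁) (intervalVar 1 J₂) (intervalVar 2 J₃)
        * heron (intervalVar 0 J₁) (intervalVar 1 J₂) (intervalVar 2 J₃)
      - circumNum (intervalVar 0 J₁) (intervalVar 1 J₂) (intervalVar 2 J₃))

/-- A test for the bounds of `b`. -/
def check (b : EdgeBox) : Bool :=
  decide (∀ i, 2 ≤ b.lo i) &&
  checkFace b.face₁₂ (b.range 0) (b.range 1) (b.range 5) &&
  checkFace b.face₁₃ (b.range 0) (b.range 2) (b.range 4) &&
  checkFace b.face₂₃ (b.range 1) (b.range 2) (b.range 3) &&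
  nonposOnCube 6 (b.scoreBound fun i ↦ intervalVar i (b.range i))

/-- Edge lengths with `|p₀ - p₁|` at least `2.06`. -/
def longFirst : EdgeBox where
  lo := ![2.06, 2, 2, 2.51, 2, 2]
  face₁₂ := ![0.8452, -0.0490, -0.0423, 0.0479]
  face₁₃ := ![0.8452, -0.0490, -0.0423, 0.0479]
  face₂₃ := ![1.0322, -0.0890, -0.0890, 0.0800]

/-- Edge lengths with `|p₀ - p₂|` at least `2.08`. -/
def longSecond : EdgeBox where
  lo := ![2, 2.08, 2, 2.51, 2, 2]
  face₁₂ := ![0.8442, -0.0405, -0.0494, 0.0472]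
  face₁₃ := ![0.847, -0.0478, -0.0478, 0.0505]
  face₂₃ := ![1.0024, -0.0808, -0.0769, 0.0728]

/-- Edge lengths with `|p₁ - p₃|` at least `2.2`. -/
def longFifth : EdgeBox where
  lo := ![2, 2, 2, 2.51, 2.2, 2]
  face₁₂ := ![0.847, -0.0478, -0.0478, 0.0505]
  face₁₃ := ![0.901512, -0.0589, -0.0589, 0.0592]
  face₂₃ := ![1.0322, -0.0890, -0.0890, 0.0800]

/-- Edge lengths with `|p₂ - p₃|` at least `2.58` and `|p₁ - p₃|` at least `2.12`. -/
def longFourthFifth : EdgeBox where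
  lo := ![2, 2, 2, 2.58, 2.12, 2]
  face₁₂ := ![0.847, -0.0478, -0.0478, 0.0505]
  face₁₃ := ![0.8783, -0.0540, -0.0540, 0.0554]
  face₂₃ := ![1.0781, -0.0998, -0.0998, 0.0866]

theorem check_longFirst : longFirst.check = true := by decide +kernel
theorem check_longSecond : longSecond.check = true := by decide +kernel
theorem check_longFifth : longFifth.check = true := by decide +kernel
theorem check_longFourthFifth : longFourthFifth.check = true := by decide +kernel

theorem exists_mem_halves {I : ℚ × ℚ} {x : ℝ} (hx : x ∈ Set.Icc (I.1 : ℝ) I.2) :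
    ∃ J ∈ halves I, x ∈ Set.Icc (J.1 : ℝ) J.2 := by
  rcases le_total x ((I.1 + I.2) / 2) with h | h
  · exact ⟨_, List.mem_cons_self, hx.1, by push_cast; exact h⟩
  · exact ⟨_, List.mem_cons_of_mem _ (List.mem_singleton_self _), by push_cast; exact h, hx.2⟩

theorem eval_intervalVar (i : ℕ) (I : ℚ × ℚ) (s : ℕ → ℝ) :
    (intervalVar i I).eval s = I.1 + (I.2 - I.1) * s i := by
  simp only [intervalVar, eval_add, eval_mul, eval_ratCast, eval_var, Rat.cast_sub]

theorem exists_eval_intervalVar {n : ℕ} {I : Fin n → ℚ × ℚ} {x : Fin n → ℝ}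
    (hx : ∀ i, x i ∈ Set.Icc ((I i).1 : ℝ) (I i).2) :
    ∃ s : ℕ → ℝ, (∀ i, s i ∈ Set.Icc 0 1) ∧ ∀ i : Fin n, (intervalVar i (I i)).eval s = x i := by
  have hseg : ∀ i, ∃ t ∈ Set.Icc (0 : ℝ) 1, ((I i).1 : ℝ) + t • ((I i).2 - (I i).1) = x i := by
    intro i
    have h := Icc_subset_segment (hx i)
    rwa [segment_eq_image'] at h
  choose t ht htx using hseg
  refine ⟨fun i ↦ if h : i < n then t ⟨i, h⟩ else 0, fun i ↦ ?_, fun i ↦ ?_⟩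
  · dsimp only
    split_ifs
    exacts [ht _, ⟨le_rfl, zero_le_one⟩]
  · simp only [eval_intervalVar, i.isLt, dif_pos, Fin.eta, ← htx i, smul_eq_mul, mul_comm]

variable {b : EdgeBox}

theorem two_le_lo (hb : b.check = true) (i : Fin 6) : (2 : ℝ) ≤ b.lo i := by
  simp only [check, Bool.and_eq_true, decide_eq_true_eq] at hb
  exact_mod_cast hb.1.1.1.1 i

theorem scoreBound_nonpos (hb : b.check = true) {x : Fin 6 → ℝ}
    (hx : ∀ i, x i ∈ Set.Icc ((b.range i).1 : ℝ) (b.range i).2) : b.scoreBound x ≤ 0 := by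
  obtain ⟨s, hs, hsx⟩ := exists_eval_intervalVar hx
  simp only [check, Bool.and_eq_true] at hb
  simpa only [scoreBound, edgeGram, solidRe, sqrtChord, affineForm, chi, eval_add, eval_sub,
    eval_mul, eval_ratCast, hsx] using eval_nonpos hb.2 hs

theorem affineForm_le_of_checkFace {c : Fin 4 → ℚ} {I₁ I₂ I₃ : ℚ × ℚ}
    (hc : checkFace c I₁ I₂ I₃ = true) {a b d : ℝ} (ha : a ∈ Set.Icc (I₁.1 : ℝ) I₁.2)
    (hb : b ∈ Set.Icc (I₂.1 : ℝ) I₂.2) (hd : d ∈ Set.Icc (I₃.1 : ℝ) I₃.2) (h : 0 < heron a b d) :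
    affineForm c a b d ≤ circumNum a b d / heron a b d := by
  obtain ⟨J₁, hJ₁, ha⟩ := exists_mem_halves ha
  obtain ⟨J₂, hJ₂, hb⟩ := exists_mem_halves hb
  obtain ⟨J₃, hJ₃, hd⟩ := exists_mem_halves hd
  obtain ⟨s, hs, hsx⟩ := exists_eval_intervalVar (I := ![J₁, J₂, J₃]) (x := ![a, b, d])
    (Fin.forall_fin_succ.2 ⟨ha, Fin.forall_fin_two.2 ⟨hb, hd⟩⟩)
  have hsa : (intervalVar 0 J₁).eval s = a := hsx 0
  have hsb : (intervalVar 1 J₂).eval s = b := hsx 1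
  have hsd : (intervalVar 2 J₃).eval s = d := hsx 2
  simp only [checkFace, List.all_eq_true] at hc
  rw [le_div_iff₀ h, ← sub_nonpos]
  simpa only [affineForm, heron, circumNum, eval_add, eval_sub, eval_mul, eval_ratCast, hsa, hsb,
    hsd] using eval_nonpos (hc _ hJ₁ _ hJ₂ _ hJ₃) hs

variable {y : Fin 6 → ℝ}

theorem Contains.two_le (hb : b.check = true) (hy : b.Contains y) (i : Fin 6) : 2 ≤ y i :=
  (two_le_lo hb i).trans (hy i).1

theorem Contains.sq_mem_range (hb : b.check = true) (hy : b.Contains y) (i : Fin 6) :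
    y i ^ 2 ∈ Set.Icc ((b.range i).1 : ℝ) (b.range i).2 := by
  refine ⟨?_, (hy i).2⟩
  push_cast [range]
  exact pow_le_pow_left₀ (zero_le_two.trans (two_le_lo hb i)) (hy i).1 2

end EdgeBox

theorem sqrtChord_sq_pos {l : ℚ} (hl : (0 : ℝ) < l) (y : ℝ) : 0 < sqrtChord l (y ^ 2) := by
  push_cast [sqrtChord]
  positivity

theorem sqrtChord_sq_le {l : ℚ} {y : ℝ} (hl : (0 : ℝ) < l) (hly : l ≤ y)
    (hy : y ≤ 2.51) : sqrtChord l (y ^ 2) ≤ y := by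
  push_cast [sqrtChord]
  rw [inv_mul_le_iff₀ (by positivity)]
  linarith [mul_nonneg (sub_nonneg.2 hly) (sub_nonneg.2 hy)]

theorem solidRe_mono {z₁ z₂ z₃ y₁ y₂ y₃ x₁ x₂ x₃ x₄ x₅ x₆ : ℝ} (hz₁ : 0 ≤ z₁) (hz₂ : 0 ≤ z₂)
    (hz₃ : 0 ≤ z₃) (h₁ : z₁ ≤ y₁) (h₂ : z₂ ≤ y₂) (h₃ : z₃ ≤ y₃) (h₄ : x₄ ≤ x₂ + x₃)
    (h₅ : x₅ ≤ x₁ + x₃) (h₆ : x₆ ≤ x₁ + x₂) :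
    solidRe z₁ z₂ z₃ x₁ x₂ x₃ x₄ x₅ x₆ ≤ solidRe y₁ y₂ y₃ x₁ x₂ x₃ x₄ x₅ x₆ := by
  have := hz₁.trans h₁
  have := hz₂.trans h₂
  simp only [solidRe]
  gcongr

theorem solidRe_pos {y₁ y₂ y₃ x₁ x₂ x₃ x₄ x₅ x₆ : ℝ} (h₁ : 0 < y₁) (h₂ : 0 < y₂) (h₃ : 0 < y₃)
    (h₄ : x₄ ≤ x₂ + x₃) (h₅ : x₅ ≤ x₁ + x₃) (h₆ : x₆ ≤ x₁ + x₂) :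
    0 < solidRe y₁ y₂ y₃ x₁ x₂ x₃ x₄ x₅ x₆ := by
  have := mul_nonneg h₁.le (sub_nonneg.2 h₄)
  have := mul_nonneg h₂.le (sub_nonneg.2 h₅)
  have := mul_nonneg h₃.le (sub_nonneg.2 h₆)
  push_cast [solidRe]
  positivity

theorem arctan_div_lt_of_linear_bound {w A T : ℝ} (hw : 0 < w) (hA : 0 < A)
    (h : 57.6 * w ^ 2 + A * (0.11231 * (w ^ 2 + 38.44) - 0.7209 * T) ≤ 0) :
    64 * w * arctan (w / A) < δoct * T := by
  have hbracket : 57.6 * (w ^ 2 / A) + 0.11231 * (w ^ 2 + 38.44) - 0.7209 * T ≤ 0 := by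
    refine nonpos_of_mul_nonpos_right (a := A) ?_ hA
    calc _ = 57.6 * w ^ 2 + A * (0.11231 * (w ^ 2 + 38.44) - 0.7209 * T) := by field_simp; ring
      _ ≤ 0 := h
  have hT : 0 < T := by
    have : 0 < w ^ 2 / A := by positivity
    nlinarith
  calc 64 * w * arctan (w / A) ≤ 64 * w * (0.02176 + 0.9 * (w / A)) := by
        gcongr
        exact arctan_le_linear (by positivity)
    _ = 0.11231 * (12.4 * w) + 57.6 * (w ^ 2 / A) - 0.000004 * w := by ring
    _ ≤ 0.11231 * (w ^ 2 + 38.44) + 57.6 * (w ^ 2 / A) := by nlinarith [sq_nonneg (w - 6.2)]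
    _ ≤ 0.7209 * T := by linarith
    _ < δoct * T := by gcongr; exact lt_δoct

namespace EdgeBox

variable {b : EdgeBox} {y x : Fin 6 → ℝ}

theorem Contains.le (hy : b.Contains y) {i : Fin 6} (hi : i ≠ 3) : y i ≤ 2.51 := by
  have h := (hy i).2
  simp only [range, hi, if_false] at h
  push_cast at h
  exact le_of_sq_le_sq h (by norm_num)

theorem Contains.sq_le_add (hb : b.check = true) (hy : b.Contains y) (i j k : Fin 6) :
    y i ^ 2 ≤ y j ^ 2 + y k ^ 2 := by
  have hi : y i ^ 2 ≤ 8 := by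
    refine (hy i).2.trans ?_
    simp only [range]
    split_ifs <;> norm_num
  nlinarith [hy.two_le hb j, hy.two_le hb k]

theorem score_nonpos (hb : b.check = true) (hy : b.Contains y) (hx : ∀ i, x i = y i ^ 2)
    (hG : 0 < edgeGram (x 0) (x 1) (x 2) (x 3) (x 4) (x 5)) {T : ℝ}
    (hT : affineForm b.face₁₂ (x 0) (x 1) (x 5) * chi (x 0) (x 1) (x 2) (x 3) (x 4) (x 5)
        + affineForm b.face₁₃ (x 0) (x 2) (x 4) * chi (x 0) (x 2) (x 1) (x 3) (x 5) (x 4)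
        + affineForm b.face₂₃ (x 1) (x 2) (x 3) * chi (x 1) (x 2) (x 0) (x 4) (x 5) (x 3) ≤ T) :
    57.6 * edgeGram (x 0) (x 1) (x 2) (x 3) (x 4) (x 5)
      + solidRe (y 0) (y 1) (y 2) (x 0) (x 1) (x 2) (x 3) (x 4) (x 5)
        * (0.11231 * (edgeGram (x 0) (x 1) (x 2) (x 3) (x 4) (x 5) + 38.44) - 0.7209 * T) ≤ 0 := by
  have hrange : ∀ i, x i ∈ Set.Icc ((b.range i).1 : ℝ) (b.range i).2 := fun i ↦
    hx i ▸ hy.sq_mem_range hb i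
  have hadd : ∀ i j k, x i ≤ x j + x k := fun i j k ↦ by
    simpa only [hx] using hy.sq_le_add hb i j k
  have hlo : ∀ i, (0 : ℝ) < b.lo i := fun i ↦ two_pos.trans_le (two_le_lo hb i)
  have hpos : ∀ i, 0 < sqrtChord (b.lo i) (x i) := fun i ↦ hx i ▸ sqrtChord_sq_pos (hlo i) (y i)
  have hchord : ∀ i ≠ 3, sqrtChord (b.lo i) (x i) ≤ y i := fun i hi ↦
    hx i ▸ sqrtChord_sq_le (hlo i) (hy i).1 (hy.le hi)
  have hApos := solidRe_pos (hpos 0) (hpos 1) (hpos 2) (hadd 3 1 2) (hadd 4 0 2) (hadd 5 0 1)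
  have hA := solidRe_mono (hpos 0).le (hpos 1).le (hpos 2).le (hchord 0 (by decide))
    (hchord 1 (by decide)) (hchord 2 (by decide)) (hadd 3 1 2) (hadd 4 0 2) (hadd 5 0 1)
  have hscore := scoreBound_nonpos hb hrange
  simp only [scoreBound] at hscore
  push_cast at hscore
  set G := edgeGram (x 0) (x 1) (x 2) (x 3) (x 4) (x 5)
  set A := solidRe (y 0) (y 1) (y 2) (x 0) (x 1) (x 2) (x 3) (x 4) (x 5)
  set A' := solidRe (sqrtChord (b.lo 0) (x 0)) (sqrtChord (b.lo 1) (x 1))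
    (sqrtChord (b.lo 2) (x 2)) (x 0) (x 1) (x 2) (x 3) (x 4) (x 5)
  have hbracket : 57.6 * G + A' * (0.11231 * (G + 38.44) - 0.7209 * T) ≤ 0 := by
    refine le_trans ?_ hscore
    gcongr
  have hneg : 0.11231 * (G + 38.44) - 0.7209 * T ≤ 0 :=
    nonpos_of_mul_nonpos_right (a := A') (by linarith) hApos
  linarith [mul_le_mul_of_nonpos_right hA hneg]

theorem arctan_lt (hb : b.check = true) (hy : b.Contains y) (hx : ∀ i, x i = y i ^ 2) {w : ℝ}
    (hw : 0 < w) (hG : edgeGram (x 0) (x 1) (x 2) (x 3) (x 4) (x 5) = w ^ 2) {m : Fin 3 → ℝ}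
    (hm : ∀ i, 0 ≤ m i)
    (hm₀ : 8 * w ^ 2 * m 0 = chi (x 1) (x 2) (x 0) (x 4) (x 5) (x 3))
    (hm₁ : 8 * w ^ 2 * m 1 = chi (x 0) (x 2) (x 1) (x 3) (x 5) (x 4))
    (hm₂ : 8 * w ^ 2 * m 2 = chi (x 0) (x 1) (x 2) (x 3) (x 4) (x 5))
    (h₁₂ : 0 < heron (x 0) (x 1) (x 5)) (h₁₃ : 0 < heron (x 0) (x 2) (x 4))
    (h₂₃ : 0 < heron (x 1) (x 2) (x 3)) :
    2 / 3 * arctan (w / solidRe (y 0) (y 1) (y 2) (x 0) (x 1) (x 2) (x 3) (x 4) (x 5)) <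
      δoct * (w / 12 * (circumNum (x 0) (x 1) (x 5) / heron (x 0) (x 1) (x 5) * m 2
        + circumNum (x 0) (x 2) (x 4) / heron (x 0) (x 2) (x 4) * m 1
        + circumNum (x 1) (x 2) (x 3) / heron (x 1) (x 2) (x 3) * m 0)) := by
  have hadd : ∀ i j k, x i ≤ x j + x k := fun i j k ↦ by
    simpa only [hx] using hy.sq_le_add hb i j k
  have hpos : ∀ i, 0 < y i := fun i ↦ two_pos.trans_le (hy.two_le hb i)
  have hchecks := hb
  simp only [check, Bool.and_eq_true] at hchecks
  obtain ⟨⟨⟨⟨-, hc₁₂⟩, hc₁₃⟩, hc₂₃⟩, -⟩ := hchecks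
  have hrange : ∀ i, x i ∈ Set.Icc ((b.range i).1 : ℝ) (b.range i).2 := fun i ↦
    hx i ▸ hy.sq_mem_range hb i
  have hface₁₂ := affineForm_le_of_checkFace hc₁₂ (hrange 0) (hrange 1) (hrange 5) h₁₂
  have hface₁₃ := affineForm_le_of_checkFace hc₁₃ (hrange 0) (hrange 2) (hrange 4) h₁₃
  have hface₂₃ := affineForm_le_of_checkFace hc₂₃ (hrange 1) (hrange 2) (hrange 3) h₂₃
  have hchi : ∀ i, 0 ≤ 8 * w ^ 2 * m i := fun i ↦ mul_nonneg (by positivity) (hm i)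
  have hbound := score_nonpos hb hy hx (hG ▸ by positivity) <|
    add_le_add (add_le_add (mul_le_mul_of_nonneg_right hface₁₂ (hm₂ ▸ hchi 2))
      (mul_le_mul_of_nonneg_right hface₁₃ (hm₁ ▸ hchi 1)))
      (mul_le_mul_of_nonneg_right hface₂₃ (hm₀ ▸ hchi 0))
  rw [hG] at hbound
  have hlt := arctan_div_lt_of_linear_bound hw (solidRe_pos (hpos 0) (hpos 1) (hpos 2)
    (hadd 3 1 2) (hadd 4 0 2) (hadd 5 0 1)) hbound
  rw [← hm₀, ← hm₁, ← hm₂] at hlt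
  refine lt_of_mul_lt_mul_left (a := 96 * w) ?_ (by positivity)
  linear_combination hlt

theorem contains_of_le {b : EdgeBox} (hb : b.check = true) {y : Fin 6 → ℝ}
    (hlo : ∀ i, (b.lo i : ℝ) ≤ y i) (hfour : y 3 ≤ 2 * √2) (hup : ∀ i ≠ 3, y i ≤ 2.51) :
    b.Contains y := by
  intro i
  have hnonneg : 0 ≤ y i := zero_le_two.trans ((two_le_lo hb i).trans (hlo i))
  refine ⟨hlo i, ?_⟩
  by_cases hi : i = 3
  · subst hi
    calc y 3 ^ 2 ≤ (2 * √2) ^ 2 := pow_le_pow_left₀ hnonneg hfour 2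
      _ = 8 := by rw [mul_pow, Real.sq_sqrt zero_le_two]; norm_num
      _ = (b.range 3).2 := by simp only [range, if_true, Rat.cast_ofNat]
  · calc y i ^ 2 ≤ 2.51 ^ 2 := pow_le_pow_left₀ hnonneg (hup i hi) 2
      _ = (b.range i).2 := by simp only [range, hi, if_false]; norm_num

theorem contains_vec {b : EdgeBox} (hb : b.check = true) {y₁ y₂ y₃ y₄ y₅ y₆ : ℝ}
    (h₁ : y₁ ∈ Set.Icc (b.lo 0 : ℝ) 2.51) (h₂ : y₂ ∈ Set.Icc (b.lo 1 : ℝ) 2.51)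
    (h₃ : y₃ ∈ Set.Icc (b.lo 2 : ℝ) 2.51) (h₄ : y₄ ∈ Set.Icc (b.lo 3 : ℝ) (2 * √2))
    (h₅ : y₅ ∈ Set.Icc (b.lo 4 : ℝ) 2.51) (h₆ : y₆ ∈ Set.Icc (b.lo 5 : ℝ) 2.51) :
    b.Contains ![y₁, y₂, y₃, y₄, y₅, y₆] := by
  refine contains_of_le hb (fun i ↦ ?_) h₄.2 fun i hi ↦ ?_ <;> fin_cases i
  exacts [h₁.1, h₂.1, h₃.1, h₄.1, h₅.1, h₆.1, h₁.2, h₂.2, h₃.2, absurd rfl hi, h₅.2, h₆.2]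

theorem exists_contains {y₁ y₂ y₃ y₄ y₅ y₆ : ℝ} (h4 : y₄ ∈ Set.Icc 2.51 (2 * √2))
    (hcase : (y₁ ∈ Set.Icc 2.06 2.51 ∧ y₂ ∈ Set.Icc 2 2.51 ∧ y₃ ∈ Set.Icc 2 2.51 ∧
        y₅ ∈ Set.Icc 2 2.51 ∧ y₆ ∈ Set.Icc 2 2.51) ∨
      (y₂ ∈ Set.Icc 2.08 2.51 ∧ y₁ ∈ Set.Icc 2 2.51 ∧ y₃ ∈ Set.Icc 2 2.51 ∧
        y₅ ∈ Set.Icc 2 2.51 ∧ y₆ ∈ Set.Icc 2 2.51) ∨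
      (y₅ ∈ Set.Icc 2.2 2.51 ∧ y₁ ∈ Set.Icc 2 2.51 ∧ y₂ ∈ Set.Icc 2 2.51 ∧
        y₃ ∈ Set.Icc 2 2.51 ∧ y₆ ∈ Set.Icc 2 2.51) ∨
      (y₄ ∈ Set.Icc 2.58 (2 * √2) ∧ y₅ ∈ Set.Icc 2.12 2.51 ∧ y₁ ∈ Set.Icc 2 2.51 ∧
        y₂ ∈ Set.Icc 2 2.51 ∧ y₃ ∈ Set.Icc 2 2.51 ∧ y₆ ∈ Set.Icc 2 2.51)) :
    ∃ b : EdgeBox, b.check = true ∧ b.Contains ![y₁, y₂, y₃, y₄, y₅, y₆] := by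
  rcases hcase with ⟨h1, h2, h3, h5, h6⟩ | ⟨h2, h1, h3, h5, h6⟩ | ⟨h5, h1, h2, h3, h6⟩ |
    ⟨h4, h5, h1, h2, h3, h6⟩
  · refine ⟨_, check_longFirst, contains_vec check_longFirst ?_ ?_ ?_ ?_ ?_ ?_⟩ <;>
      simpa [longFirst]
  · refine ⟨_, check_longSecond, contains_vec check_longSecond ?_ ?_ ?_ ?_ ?_ ?_⟩ <;>
      simpa [longSecond]
  · refine ⟨_, check_longFifth, contains_vec check_longFifth ?_ ?_ ?_ ?_ ?_ ?_⟩ <;>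
      simpa [longFifth]
  · refine ⟨_, check_longFourthFifth, contains_vec check_longFourthFifth ?_ ?_ ?_ ?_ ?_ ?_⟩ <;>
      simpa [longFourthFifth]

end EdgeBox

section BallWedges

theorem volume_norm_mem_arg_mem {A S : Set ℝ} (hA : MeasurableSet A) (hS : MeasurableSet S) :
    volume {z : ℂ | ‖z‖ ∈ A ∧ z.arg ∈ S} =
      (∫⁻ r in Set.Ioi 0, A.indicator ENNReal.ofReal r) * volume (S ∩ Set.Ioo (-π) π) := by
  have hmeas : MeasurableSet {z : ℂ | ‖z‖ ∈ A ∧ z.arg ∈ S} :=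
    (measurable_norm hA).inter (Complex.measurable_arg hS)
  have hpolar : ∀ p ∈ polarCoord.target, ENNReal.ofReal p.1 •
      {z : ℂ | ‖z‖ ∈ A ∧ z.arg ∈ S}.indicator (1 : ℂ → ENNReal) (Complex.polarCoord.symm p) =
        A.indicator ENNReal.ofReal p.1 * S.indicator 1 p.2 := by
    rintro ⟨r, θ⟩ ⟨hr, hθ⟩
    have harg : (Complex.polarCoord.symm (r, θ)).arg = θ := by
      rw [Complex.polarCoord_symm_apply]
      exact_mod_cast Complex.arg_mul_cos_add_sin_mul_I hr ⟨hθ.1, hθ.2.le⟩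
    have hnorm : ‖Complex.polarCoord.symm (r, θ)‖ = r :=
      (Complex.norm_polarCoord_symm _).trans (abs_of_pos hr)
    generalize Complex.polarCoord.symm (r, θ) = z at harg hnorm ⊢
    by_cases h₁ : r ∈ A <;> by_cases h₂ : θ ∈ S <;> simp [harg, hnorm, h₁, h₂]
  rw [← lintegral_indicator_one hmeas, ← Complex.lintegral_comp_polarCoord_symm,
    setLIntegral_congr_fun polarCoord.open_target.measurableSet hpolar, polarCoord_target,
    Measure.volume_eq_prod, ← Measure.prod_restrict,
    lintegral_prod_mul (ENNReal.measurable_ofReal.indicator hA).aemeasurable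
      (measurable_one.indicator hS).aemeasurable, lintegral_indicator_one hS,
    Measure.restrict_apply hS]

/-- The splitting of space into the third axis and the plane of the other two, read as `ℂ`, so that
`arg` is the longitude. -/
def axisProd (a : E3) : ℝ × ℂ := (a 2, ⟨a 0, a 1⟩)

theorem measurePreserving_axisProd : MeasurePreserving axisProd :=
  ((MeasurePreserving.id volume).prod
    (Complex.volume_preserving_equiv_real_prod.symm.comp (volume_preserving_finTwoArrow ℝ))).comp
    ((volume_preserving_piFinSuccAbove (fun _ : Fin 3 ↦ ℝ) 2).comp
      (PiLp.volume_preserving_ofLp (Fin 3)))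

theorem norm_sq_axisProd (a : E3) : ‖a‖ ^ 2 = (axisProd a).1 ^ 2 + ‖(axisProd a).2‖ ^ 2 := by
  rw [EuclideanSpace.norm_sq_eq, Complex.sq_norm, Complex.normSq_apply]
  simp only [axisProd, Fin.sum_univ_three, Real.norm_eq_abs, sq_abs]
  ring

theorem volume_closedBall_arg_mem {S : Set ℝ} (hS : MeasurableSet S) :
    volume {a : E3 | ‖a‖ ≤ 1 ∧ (axisProd a).2.arg ∈ S} =
      ENNReal.ofReal (2 / 3) * volume (S ∩ Set.Ioo (-π) π) := by
  let I (t : ℝ) : ENNReal := ∫⁻ r in Set.Ioi 0, {r | t ^ 2 + r ^ 2 ≤ 1}.indicator ENNReal.ofReal r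
  have hvol {T : Set ℝ} (hT : MeasurableSet T) :
      volume {a : E3 | ‖a‖ ≤ 1 ∧ (axisProd a).2.arg ∈ T} =
        (∫⁻ t, I t) * volume (T ∩ Set.Ioo (-π) π) := by
    have hmeas : MeasurableSet {q : ℝ × ℂ | q.1 ^ 2 + ‖q.2‖ ^ 2 ≤ 1 ∧ q.2.arg ∈ T} :=
      (measurableSet_le (f := fun q : ℝ × ℂ ↦ q.1 ^ 2 + ‖q.2‖ ^ 2) (by fun_prop)
        measurable_const).inter (Complex.measurable_arg.comp measurable_snd hT)
    have hpre : {a : E3 | ‖a‖ ≤ 1 ∧ (axisProd a).2.arg ∈ T} =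
        axisProd ⁻¹' {q : ℝ × ℂ | q.1 ^ 2 + ‖q.2‖ ^ 2 ≤ 1 ∧ q.2.arg ∈ T} := by
      ext a
      simp [← norm_sq_axisProd]
    rw [hpre, measurePreserving_axisProd.measure_preimage hmeas.nullMeasurableSet,
      Measure.volume_eq_prod, Measure.prod_apply hmeas, ← lintegral_mul_const'
        _ _ ((measure_mono Set.inter_subset_right).trans_lt measure_Ioo_lt_top).ne]
    exact lintegral_congr fun t ↦ volume_norm_mem_arg_mem (A := {r | t ^ 2 + r ^ 2 ≤ 1})
      (measurableSet_le (by fun_prop) (by fun_prop)) hT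
  have hball : (∫⁻ t, I t) * ENNReal.ofReal (2 * π) = ENNReal.ofReal (π * 4 / 3) := by
    have huniv := hvol MeasurableSet.univ
    simp only [Set.mem_univ, and_true, Set.univ_inter, Real.volume_Ioo] at huniv
    rw [show 2 * π = π - -π by ring, ← huniv]
    simpa [Metric.closedBall] using EuclideanSpace.volume_closedBall_fin_three 0 1
  have hI : ∫⁻ t, I t = ENNReal.ofReal (2 / 3) := by
    rw [← ENNReal.mul_left_inj (c := ENNReal.ofReal (2 * π)) (by simp [pi_pos])
      ENNReal.ofReal_ne_top, hball, ← ENNReal.ofReal_mul (by norm_num)]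
    congr 1
    ring
  rw [hvol hS, hI]

theorem setOf_cos_nonneg_inter_Ioo {β : ℝ} (hβ : 0 < β) (hβ' : β < π / 2) :
    {θ | 0 ≤ cos (θ - β) ∧ 0 ≤ cos (θ + β)} ∩ Set.Ioo (-π) π = Set.Icc (β - π / 2) (π / 2 - β) := by
  ext θ
  simp only [Set.mem_inter_iff, Set.mem_ofPred_eq, Set.mem_Ioo, Set.mem_Icc]
  constructor
  · rintro ⟨⟨h₁, h₂⟩, hθ, hθ'⟩
    constructor
    · by_contra! h
      refine (cos_neg_of_pi_div_two_lt_of_lt (x := β - θ) (by linarith) (by linarith)).not_ge ?_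
      rwa [← cos_neg, neg_sub]
    · by_contra! h
      exact (cos_neg_of_pi_div_two_lt_of_lt (by linarith) (by linarith)).not_ge h₂
  · rintro ⟨h, h'⟩
    exact ⟨⟨cos_nonneg_of_mem_Icc ⟨by linarith, by linarith⟩,
      cos_nonneg_of_mem_Icc ⟨by linarith, by linarith⟩⟩, by linarith, by linarith⟩

theorem wedge_iff_cos_arg_nonneg {β : ℝ} (hβ : 0 < β) (hβ' : β < π / 2) (z : ℂ) :
    0 ≤ cos β * z.re + sin β * z.im ∧ 0 ≤ cos β * z.re - sin β * z.im ↔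
      0 ≤ cos (z.arg - β) ∧ 0 ≤ cos (z.arg + β) := by
  have hadd : cos β * z.re + sin β * z.im = ‖z‖ * cos (z.arg - β) := by
    rw [← z.norm_mul_cos_arg, ← z.norm_mul_sin_arg, cos_sub]
    ring
  have hsub : cos β * z.re - sin β * z.im = ‖z‖ * cos (z.arg + β) := by
    rw [← z.norm_mul_cos_arg, ← z.norm_mul_sin_arg, cos_add]
    ring
  rcases eq_or_ne z 0 with rfl | hz
  · simp [(cos_pos_of_mem_Ioo ⟨by linarith, hβ'⟩).le]
  · rw [hadd, hsub, mul_nonneg_iff_of_pos_left (norm_pos_iff.2 hz),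
      mul_nonneg_iff_of_pos_left (norm_pos_iff.2 hz)]

section Bisection

variable {E : Type*} [NormedAddCommGroup E] [InnerProductSpace ℝ E]

/-- The part of the closed unit ball cut out by the half-spaces `0 ≤ ⟪n, x⟫` with `n ∈ s`. The
spherical triangles and lunes of Girard's theorem appear as the solid sectors `ballWedge s`. -/
def ballWedge (s : Set E) : Set E := {x | ‖x‖ ≤ 1 ∧ ∀ n ∈ s, 0 ≤ inner ℝ n x}

theorem ballWedge_insert (d : E) (s : Set E) :
    ballWedge (insert d s) = ballWedge s ∩ {x | 0 ≤ inner ℝ d x} := by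
  ext x
  simp only [ballWedge, Set.forall_mem_insert, Set.mem_inter_iff, Set.mem_ofPred_eq]
  tauto

theorem ballWedge_neg (s : Set E) : ballWedge (-s) = -ballWedge s := by
  ext x
  simp only [ballWedge, Set.mem_ofPred_eq, Set.mem_neg, norm_neg, inner_neg_right]
  exact and_congr_right' ⟨fun h n hn ↦ by simpa using h (-n) (by simpa using hn),
    fun h n hn ↦ by simpa using h (-n) hn⟩

variable [FiniteDimensional ℝ E] [MeasurableSpace E] [BorelSpace E] (μ : Measure E)
  [μ.IsAddHaarMeasure]

theorem measureReal_ballWedge_split (s : Set E) {d : E} (hd : d ≠ 0) :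
    μ.real (ballWedge (insert d s)) + μ.real (ballWedge (insert (-d) s)) =
      μ.real (ballWedge s) := by
  have hfin : μ (ballWedge s) ≠ ⊤ :=
    ((measure_mono fun x hx ↦ mem_closedBall_zero_iff.2 hx.1).trans_lt
      (isCompact_closedBall (0 : E) 1).measure_lt_top).ne
  have hplane : μ (ℝ ∙ d)ᗮ = 0 := by
    refine Measure.addHaar_submodule μ _ fun h ↦ hd ?_
    simpa using h
  have hneg : ballWedge (insert (-d) s) =ᵐ[μ] ballWedge s \ {x | 0 ≤ inner ℝ d x} := by
    have hae : ∀ᵐ x ∂μ, inner ℝ d x ≠ 0 := by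
      rw [ae_iff]
      convert hplane using 2
      ext x
      simp [Submodule.mem_orthogonal_singleton_iff_inner_right]
    filter_upwards [hae] with x hx
    change (x ∈ ballWedge (insert (-d) s)) = (x ∈ ballWedge s \ {x | 0 ≤ inner ℝ d x})
    rw [ballWedge_insert, Set.mem_inter_iff, Set.mem_sdiff, eq_iff_iff]
    refine and_congr_right' ?_
    simp only [Set.mem_ofPred_eq, inner_neg_left, not_le, Left.nonneg_neg_iff]
    exact hx.le_iff_lt
  have hmeas : MeasurableSet {x | 0 ≤ inner ℝ d x} :=
    measurableSet_le measurable_const (by fun_prop)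
  have hreal : μ.real (ballWedge (insert (-d) s)) =
      μ.real (ballWedge s \ {x | 0 ≤ inner ℝ d x}) := measureReal_congr hneg
  rw [hreal, ballWedge_insert, measureReal_inter_add_sdiff hmeas hfin]

end Bisection

theorem exists_orthonormalBasis_extending {e₀ e₁ : E3} (h₀ : ‖e₀‖ = 1) (h₁ : ‖e₁‖ = 1)
    (h₀₁ : inner ℝ e₀ e₁ = (0 : ℝ)) :
    ∃ e : OrthonormalBasis (Fin 3) ℝ E3, e 0 = e₀ ∧ e 1 = e₁ := by
  have hon : Orthonormal ℝ (Set.domRestrict {0, 1} (![e₀, e₁, 0] : Fin 3 → E3)) := by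
    refine ⟨?_, ?_⟩
    · rintro ⟨i, rfl | rfl⟩ <;> simpa
    · rintro ⟨i, rfl | rfl⟩ ⟨j, rfl | rfl⟩ hij <;>
        first
          | exact absurd rfl hij
          | simpa [real_inner_comm] using h₀₁
  obtain ⟨e, he⟩ := hon.exists_orthonormalBasis_extension_of_card_eq (by simp)
  exact ⟨e, he 0 (by simp), he 1 (by simp)⟩

theorem exists_orthonormalBasis_bisecting {a b : E3} (ha : a ≠ 0) (hb : b ≠ 0) {β : ℝ} (hβ : 0 < β)
    (hβ' : β < π / 2) (hab : InnerProductGeometry.angle a b = 2 * β) :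
    ∃ e : OrthonormalBasis (Fin 3) ℝ E3,
      (∀ x, inner ℝ a x = ‖a‖ * (cos β * e.repr x 0 + sin β * e.repr x 1)) ∧
        ∀ x, inner ℝ b x = ‖b‖ * (cos β * e.repr x 0 - sin β * e.repr x 1) := by
  have hcos : 0 < cos β := cos_pos_of_mem_Ioo ⟨by linarith, hβ'⟩
  have hsin : 0 < sin β := sin_pos_of_pos_of_lt_pi hβ (by linarith)
  obtain ⟨u, hu, hau⟩ : ∃ u : E3, ‖u‖ = 1 ∧ a = ‖a‖ • u :=
    ⟨‖a‖⁻¹ • a, norm_smul_inv_norm (𝕜 := ℝ) ha, by simp [smul_smul, ha]⟩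
  obtain ⟨v, hv, hbv⟩ : ∃ v : E3, ‖v‖ = 1 ∧ b = ‖b‖ • v :=
    ⟨‖b‖⁻¹ • b, norm_smul_inv_norm (𝕜 := ℝ) hb, by simp [smul_smul, hb]⟩
  have huv : inner ℝ u v = 2 * cos β ^ 2 - 1 := by
    rw [← cos_two_mul, ← hab, hau, hbv, InnerProductGeometry.angle_smul_left_of_pos _ _
      (norm_pos_iff.2 ha), InnerProductGeometry.angle_smul_right_of_pos _ _ (norm_pos_iff.2 hb),
      InnerProductGeometry.cos_angle, hu, hv, mul_one, div_one]
  have hadd : ‖u + v‖ = 2 * cos β := by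
    rw [← sq_eq_sq₀ (norm_nonneg _) (by positivity), norm_add_sq_real, hu, hv, huv]
    ring
  have hsub : ‖u - v‖ = 2 * sin β := by
    rw [← sq_eq_sq₀ (norm_nonneg _) (by positivity), norm_sub_sq_real, hu, hv, huv]
    linear_combination -4 * sin_sq_add_cos_sq β
  obtain ⟨e, he₀, he₁⟩ := exists_orthonormalBasis_extending
    (e₀ := (2 * cos β)⁻¹ • (u + v)) (e₁ := (2 * sin β)⁻¹ • (u - v))
    (by rw [norm_smul, hadd, norm_inv, Real.norm_of_nonneg (by positivity)]; field_simp)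
    (by rw [norm_smul, hsub, norm_inv, Real.norm_of_nonneg (by positivity)]; field_simp)
    (by rw [real_inner_smul_left, real_inner_smul_right,
      (real_inner_add_sub_eq_zero_iff u v).2 (hu.trans hv.symm), mul_zero, mul_zero])
  have hc : cos β • e 0 = (2 : ℝ)⁻¹ • (u + v) := by
    rw [he₀, smul_smul, mul_inv_rev, mul_inv_cancel_left₀ hcos.ne']
  have hs : sin β • e 1 = (2 : ℝ)⁻¹ • (u - v) := by
    rw [he₁, smul_smul, mul_inv_rev, mul_inv_cancel_left₀ hsin.ne']
  have hu' : u = cos β • e 0 + sin β • e 1 := by rw [hc, hs]; module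
  have hv' : v = cos β • e 0 - sin β • e 1 := by rw [hc, hs]; module
  refine ⟨e, fun x ↦ ?_, fun x ↦ ?_⟩
  · conv_lhs => rw [hau, hu']
    simp only [real_inner_smul_left, inner_add_left, e.repr_apply_apply]
  · conv_lhs => rw [hbv, hv']
    simp only [real_inner_smul_left, inner_sub_left, e.repr_apply_apply]

theorem measureReal_ballWedge_pair {a b : E3} (ha : a ≠ 0) (hb : b ≠ 0)
    (h₀ : 0 < InnerProductGeometry.angle a b) (hπ : InnerProductGeometry.angle a b < π) :
    volume.real (ballWedge {a, b}) = 2 / 3 * (π - InnerProductGeometry.angle a b) := by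
  obtain ⟨β, hβ⟩ : ∃ β, InnerProductGeometry.angle a b = 2 * β :=
    ⟨_, (mul_div_cancel₀ _ two_ne_zero).symm⟩
  have hβ₀ : 0 < β := by linarith
  have hβπ : β < π / 2 := by linarith
  obtain ⟨e, hae, hbe⟩ := exists_orthonormalBasis_bisecting ha hb hβ₀ hβπ hβ
  set S : Set ℝ := {θ | 0 ≤ cos (θ - β) ∧ 0 ≤ cos (θ + β)}
  have hS : MeasurableSet S :=
    (measurableSet_le (g := fun θ ↦ cos (θ - β)) measurable_const (by fun_prop)).inter
      (measurableSet_le (g := fun θ ↦ cos (θ + β)) measurable_const (by fun_prop))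
  have hpre : ballWedge {a, b} = e.repr ⁻¹' {x : E3 | ‖x‖ ≤ 1 ∧ (axisProd x).2.arg ∈ S} := by
    ext x
    simp only [ballWedge, Set.mem_preimage, Set.mem_ofPred_eq, Set.forall_mem_insert,
      Set.mem_singleton_iff, forall_eq, e.repr.norm_map, hae, hbe,
      mul_nonneg_iff_of_pos_left (norm_pos_iff.2 ha),
      mul_nonneg_iff_of_pos_left (norm_pos_iff.2 hb)]
    exact and_congr_right' (wedge_iff_cos_arg_nonneg hβ₀ hβπ (axisProd (e.repr x)).2)
  rw [hpre, measureReal_def, e.measurePreserving_repr.measure_preimage_emb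
    e.repr.toHomeomorph.measurableEmbedding, volume_closedBall_arg_mem hS,
    setOf_cos_nonneg_inter_Ioo hβ₀ hβπ, Real.volume_Icc, ← ENNReal.ofReal_mul (by norm_num),
    ENNReal.toReal_ofReal (by linarith), hβ]
  ring

-- Girard's theorem: the solid angle is the angular excess, obtained by counting lunes.
theorem measureReal_ballWedge_triple {a b d : E3} (ha : a ≠ 0) (hb : b ≠ 0) (hd : d ≠ 0)
    (hab : 0 < InnerProductGeometry.angle a b) (hab' : InnerProductGeometry.angle a b < π)
    (had : 0 < InnerProductGeometry.angle a d) (had' : InnerProductGeometry.angle a d < π)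
    (hbd : 0 < InnerProductGeometry.angle b d) (hbd' : InnerProductGeometry.angle b d < π) :
    volume.real (ballWedge {a, b, d}) = (2 * π - InnerProductGeometry.angle a b -
      InnerProductGeometry.angle a d - InnerProductGeometry.angle b d) / 3 := by
  have hab_lune := measureReal_ballWedge_pair ha (neg_ne_zero.2 hb)
    (by rw [InnerProductGeometry.angle_neg_right]; linarith)
    (by rw [InnerProductGeometry.angle_neg_right]; linarith)
  rw [InnerProductGeometry.angle_neg_right] at hab_lune
  have had_lune := measureReal_ballWedge_pair ha hd had had'
  have hbd_lune := measureReal_ballWedge_pair hb hd hbd hbd'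
  have hsplit_ad := measureReal_ballWedge_split volume {a, d} hb
  have hsplit_bd := measureReal_ballWedge_split volume {b, d} ha
  have hsplit_ab := measureReal_ballWedge_split volume {a, -b} hd
  have hantipodal : volume.real (ballWedge {-d, a, -b}) = volume.real (ballWedge {-a, b, d}) := by
    have hset : ({-d, a, -b} : Set E3) = -{-a, b, d} := by
      simp only [← Set.image_neg_eq_neg, Set.image_insert_eq, Set.image_singleton, neg_neg]
      rw [Set.insert_comm, Set.pair_comm]
    rw [hset, ballWedge_neg, measureReal_def, Measure.measure_neg, measureReal_def]
  rw [Set.insert_comm b, Set.insert_comm (-b)] at hsplit_ad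
  rw [Set.insert_comm d, Set.pair_comm d] at hsplit_ab
  linarith

theorem angle_eq_arg {E : Type*} [NormedAddCommGroup E] [InnerProductSpace ℝ E] {a b : E} {s : ℝ}
    (hs : 0 < s) (h : s ^ 2 = inner ℝ a a * inner ℝ b b - inner ℝ a b ^ 2) :
    InnerProductGeometry.angle a b = Complex.arg ⟨inner ℝ a b, s⟩ := by
  rw [Complex.arg_of_im_pos hs, InnerProductGeometry.angle]
  congr 2
  rw [← sq_eq_sq₀ (by positivity) (norm_nonneg _), Complex.sq_norm, Complex.normSq_mk, mul_pow,
    ← real_inner_self_eq_norm_sq, ← real_inner_self_eq_norm_sq]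
  linear_combination -h

theorem arg_mem_Ioo_of_im_pos {z : ℂ} (hz : 0 < z.im) : z.arg ∈ Set.Ioo 0 π :=
  ⟨(Complex.arg_nonneg_iff.2 hz.le).lt_of_ne' fun h ↦ hz.ne' (Complex.arg_eq_zero_iff.1 h).2,
    Complex.arg_lt_pi_iff.2 (.inr hz.ne')⟩

theorem arg_eq_neg_arctan {A w : ℝ} (hA : 0 < A) : Complex.arg ⟨A, -w⟩ = -arctan (w / A) := by
  have h := Complex.abs_arg_lt_pi_div_two_iff.2 (.inl hA : 0 < (⟨A, -w⟩ : ℂ).re ∨ _)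
  rw [← arctan_neg, ← neg_div, eq_comm]
  exact (arctan_eq_of_tan_eq (Complex.tan_arg _) (abs_lt.1 h))

theorem sum_arg_eq_of_mul_eq {z₁ z₂ z₃ : ℂ} (h₁ : 0 < z₁.im) (h₂ : 0 < z₂.im) (h₃ : 0 < z₃.im)
    {K A w : ℝ} (hK : 0 ≤ K) (hA : 0 < A) (hw : 0 < w) (h : z₁ * z₂ * z₃ = K * ⟨A, -w⟩ ^ 2) :
    z₁.arg + z₂.arg + z₃.arg = 2 * π - 2 * arctan (w / A) := by
  have hne : ∀ z : ℂ, 0 < z.im → z ≠ 0 := by rintro z hz rfl; exact lt_irrefl _ hz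
  have hA₀ : (⟨A, -w⟩ : ℂ) ≠ 0 := fun h ↦ hA.ne' (congrArg Complex.re h)
  have hK₀ : 0 < K := hK.lt_of_ne' fun hK ↦ by
    simp [hK, hne z₁ h₁, hne z₂ h₂, hne z₃ h₃] at h
  have hang : ((z₁.arg + z₂.arg + z₃.arg : ℝ) : Real.Angle) = (-2 * arctan (w / A) : ℝ) := by
    rw [Real.Angle.coe_add, Real.Angle.coe_add, ← Complex.arg_mul_coe_angle (hne _ h₁) (hne _ h₂),
      ← Complex.arg_mul_coe_angle (mul_ne_zero (hne _ h₁) (hne _ h₂)) (hne _ h₃), h,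
      Complex.arg_real_mul _ hK₀, sq, Complex.arg_mul_coe_angle hA₀ hA₀, arg_eq_neg_arctan hA,
      ← Real.Angle.coe_add]
    ring_nf
  obtain ⟨k, hk⟩ := Real.Angle.angle_eq_iff_two_pi_dvd_sub.1 hang
  obtain ⟨hl₁, hu₁⟩ := arg_mem_Ioo_of_im_pos h₁
  obtain ⟨hl₂, hu₂⟩ := arg_mem_Ioo_of_im_pos h₂
  obtain ⟨hl₃, hu₃⟩ := arg_mem_Ioo_of_im_pos h₃
  have harctan : 0 < arctan (w / A) := arctan_pos.2 (div_pos hw hA)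
  have harctan' := arctan_lt_pi_div_two (w / A)
  have hk₀ : (0 : ℝ) < k := pos_of_mul_pos_right (a := 2 * π) (by linarith) two_pi_pos.le
  have hk₂ : (k : ℝ) < 2 := by nlinarith [pi_pos]
  have hk₁ : k = 1 := by
    have : 0 < k := by exact_mod_cast hk₀
    have : k < 2 := by exact_mod_cast hk₂
    omega
  rw [hk₁, Int.cast_one] at hk
  linarith

section DualNormals

variable {ι E : Type*} [Fintype ι] [DecidableEq ι] [NormedAddCommGroup E] [InnerProductSpace ℝ E]
  (v : ι → E)

/-- The inward normals of the facets of the cone spanned by `v`: up to the factor `det (gram v)`,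
which keeps them polynomial in the inner products, they form the dual basis of `v`. -/
def dualNormal (i : ι) : E := ∑ j, (Matrix.gram ℝ v).adjugate i j • v j

theorem inner_dualNormal (i j : ι) :
    inner ℝ (dualNormal v i) (v j) = if i = j then (Matrix.gram ℝ v).det else 0 := by
  have h := congrFun₂ (Matrix.adjugate_mul (Matrix.gram ℝ v)) i j
  simpa [dualNormal, sum_inner, real_inner_smul_left, Matrix.mul_apply, Matrix.gram_apply,
    Matrix.one_apply] using h

theorem inner_dualNormal_dualNormal (i j : ι) :
    inner ℝ (dualNormal v i) (dualNormal v j) =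
      (Matrix.gram ℝ v).det * (Matrix.gram ℝ v).adjugate j i := by
  conv_lhs => rw [dualNormal.eq_1 v j]
  simp [inner_sum, real_inner_smul_right, inner_dualNormal, mul_comm]

end DualNormals

section SolidAngle

/-- The real part in the formula `tan (Ω / 2) = √(det (gram v)) / solidAngleRe v` for the solid
angle `Ω` of the cone spanned by `v`. -/
def solidAngleRe (v : Fin 3 → E3) : ℝ :=
  ‖v 0‖ * ‖v 1‖ * ‖v 2‖ + inner ℝ (v 1) (v 2) * ‖v 0‖ + inner ℝ (v 0) (v 2) * ‖v 1‖ +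
    inner ℝ (v 0) (v 1) * ‖v 2‖

variable {v : Fin 3 → E3} {w : ℝ}

theorem det_gram_three : (Matrix.gram ℝ v).det =
    ‖v 0‖ ^ 2 * ‖v 1‖ ^ 2 * ‖v 2‖ ^ 2 +
      2 * (inner ℝ (v 0) (v 1) * inner ℝ (v 0) (v 2) * inner ℝ (v 1) (v 2)) -
      ‖v 0‖ ^ 2 * inner ℝ (v 1) (v 2) ^ 2 - ‖v 1‖ ^ 2 * inner ℝ (v 0) (v 2) ^ 2 -
      ‖v 2‖ ^ 2 * inner ℝ (v 0) (v 1) ^ 2 := by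
  rw [Matrix.det_fin_three]
  simp only [Matrix.gram_apply, real_inner_self_eq_norm_sq, real_inner_comm (v 0),
    real_inner_comm (v 1) (v 2)]
  ring

theorem adjugate_gram_three {i j k : Fin 3} (hij : i ≠ j) (hik : i ≠ k) (hjk : j ≠ k) :
    (Matrix.gram ℝ v).adjugate i j = inner ℝ (v i) (v k) * inner ℝ (v j) (v k) -
      inner ℝ (v i) (v j) * ‖v k‖ ^ 2 := by
  rw [Matrix.adjugate_fin_three]
  fin_cases i <;> fin_cases j <;> fin_cases k <;> first
    | exact absurd rfl hij
    | exact absurd rfl hik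
    | exact absurd rfl hjk
    | simp [Matrix.gram_apply, real_inner_comm (v 0), real_inner_comm (v 1) (v 2)] <;> ring

theorem jacobi_adjugate_gram_three {i j k : Fin 3} (hij : i ≠ j) (hik : i ≠ k) (hjk : j ≠ k) :
    (Matrix.gram ℝ v).adjugate i i * (Matrix.gram ℝ v).adjugate j j -
      (Matrix.gram ℝ v).adjugate i j ^ 2 = (Matrix.gram ℝ v).det * ‖v k‖ ^ 2 := by
  rw [Matrix.adjugate_fin_three, det_gram_three]
  fin_cases i <;> fin_cases j <;> fin_cases k <;> first
    | exact absurd rfl hij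
    | exact absurd rfl hik
    | exact absurd rfl hjk
    | simp [Matrix.gram_apply, real_inner_comm (v 0), real_inner_comm (v 1) (v 2)]
      ring

theorem angle_dualNormal (hw : 0 < w) (hdet : (Matrix.gram ℝ v).det = w ^ 2) {i j k : Fin 3}
    (hij : i ≠ j) (hik : i ≠ k) (hjk : j ≠ k) (hk : v k ≠ 0) :
    InnerProductGeometry.angle (dualNormal v i) (dualNormal v j) =
      Complex.arg ⟨inner ℝ (v i) (v k) * inner ℝ (v j) (v k) -
        inner ℝ (v i) (v j) * ‖v k‖ ^ 2, w * ‖v k‖⟩ := by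
  have hinner : inner ℝ (dualNormal v i) (dualNormal v j) = w ^ 2 *
      (inner ℝ (v i) (v k) * inner ℝ (v j) (v k) - inner ℝ (v i) (v j) * ‖v k‖ ^ 2) := by
    rw [inner_dualNormal_dualNormal, hdet, adjugate_gram_three hij.symm hjk hik,
      real_inner_comm (v i) (v j), mul_comm (inner ℝ (v j) (v k))]
  have hs : (w ^ 2 * (w * ‖v k‖)) ^ 2 = inner ℝ (dualNormal v i) (dualNormal v i) *
      inner ℝ (dualNormal v j) (dualNormal v j) -
        inner ℝ (dualNormal v i) (dualNormal v j) ^ 2 := by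
    have hjacobi := jacobi_adjugate_gram_three (v := v) hij.symm hjk hik
    rw [hdet] at hjacobi
    simp only [inner_dualNormal_dualNormal, hdet]
    linear_combination -w ^ 4 * hjacobi
  rw [angle_eq_arg (mul_pos (pow_pos hw 2) (mul_pos hw (norm_pos_iff.2 hk))) hs, hinner,
    ← Complex.arg_real_mul ⟨_, w * ‖v k‖⟩ (pow_pos hw 2)]
  congr 1
  apply Complex.ext <;> simp [-Complex.ofReal_pow]

theorem prod_dihedral_eq (hdet : (Matrix.gram ℝ v).det = w ^ 2) :
    ((⟨inner ℝ (v 0) (v 2) * inner ℝ (v 1) (v 2) - inner ℝ (v 0) (v 1) * ‖v 2‖ ^ 2,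
        w * ‖v 2‖⟩ : ℂ) *
      ⟨inner ℝ (v 0) (v 1) * inner ℝ (v 2) (v 1) - inner ℝ (v 0) (v 2) * ‖v 1‖ ^ 2,
        w * ‖v 1‖⟩ *
      ⟨inner ℝ (v 1) (v 0) * inner ℝ (v 2) (v 0) - inner ℝ (v 1) (v 2) * ‖v 0‖ ^ 2,
        w * ‖v 0‖⟩ : ℂ) =
    ((‖v 0‖ * ‖v 1‖ - inner ℝ (v 0) (v 1)) * (‖v 0‖ * ‖v 2‖ - inner ℝ (v 0) (v 2)) *
      (‖v 1‖ * ‖v 2‖ - inner ℝ (v 1) (v 2)) / 2 : ℝ) * ⟨solidAngleRe v, -w⟩ ^ 2 := by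
  rw [det_gram_three] at hdet
  rw [real_inner_comm (v 1) (v 2), real_inner_comm (v 0) (v 1), real_inner_comm (v 0) (v 2)]
  simp only [solidAngleRe, sq (⟨_, _⟩ : ℂ)]
  generalize ‖v 0‖ = y₀ at *
  generalize ‖v 1‖ = y₁ at *
  generalize ‖v 2‖ = y₂ at *
  generalize inner ℝ (v 0) (v 1) = g₀₁ at *
  generalize inner ℝ (v 0) (v 2) = g₀₂ at *
  generalize inner ℝ (v 1) (v 2) = g₁₂ at *
  apply Complex.ext
  · simp only [Complex.mul_re, Complex.mul_im, Complex.ofReal_re, Complex.ofReal_im]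
    linear_combination ((g₀₂ * g₁₂ - g₀₁ * y₂ ^ 2) * y₀ * y₁ + (g₀₁ * g₁₂ - g₀₂ * y₁ ^ 2) * y₀ * y₂
      + (g₀₁ * g₀₂ - g₁₂ * y₀ ^ 2) * y₁ * y₂
      - (y₀ * y₁ - g₀₁) * (y₀ * y₂ - g₀₂) * (y₁ * y₂ - g₁₂) / 2) * hdet
  · simp only [Complex.mul_re, Complex.mul_im, Complex.ofReal_re, Complex.ofReal_im]
    linear_combination (w * y₀ * y₁ * y₂) * hdet

theorem measureReal_ballWedge_range_dualNormal (hw : 0 < w)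
    (hdet : (Matrix.gram ℝ v).det = w ^ 2) (hA : 0 < solidAngleRe v) :
    volume.real (ballWedge (Set.range (dualNormal v))) =
      2 / 3 * arctan (w / solidAngleRe v) := by
  have hv : ∀ i, v i ≠ 0 :=
    (Matrix.det_gram_ne_zero_iff_linearIndependent.1 (hdet ▸ (pow_pos hw 2).ne')).ne_zero
  have hN : ∀ i, dualNormal v i ≠ 0 := fun i hi ↦ by
    have := inner_dualNormal v i i
    rw [hi, inner_zero_left, if_pos rfl, hdet] at this
    exact (pow_pos hw 2).ne this
  have him : ∀ k, 0 < w * ‖v k‖ := fun k ↦ mul_pos hw (norm_pos_iff.2 (hv k))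
  have hsum := sum_arg_eq_of_mul_eq (him 2) (him 1) (him 0)
    (div_nonneg (mul_nonneg (mul_nonneg (sub_nonneg.2 (real_inner_le_norm _ _))
      (sub_nonneg.2 (real_inner_le_norm _ _))) (sub_nonneg.2 (real_inner_le_norm _ _)))
      zero_le_two) hA hw (prod_dihedral_eq hdet)
  have h₀₁ := angle_dualNormal hw hdet (i := 0) (j := 1) (by decide) (by decide) (by decide) (hv 2)
  have h₀₂ := angle_dualNormal hw hdet (i := 0) (j := 2) (by decide) (by decide) (by decide) (hv 1)
  have h₁₂ := angle_dualNormal hw hdet (i := 1) (j := 2) (by decide) (by decide) (by decide) (hv 0)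
  have hset : Set.range (dualNormal v) = {dualNormal v 0, dualNormal v 1, dualNormal v 2} := by
    ext x
    simp [Fin.exists_fin_succ, eq_comm]
  have hmem : ∀ {x : ℝ} {z : ℂ}, x = z.arg → 0 < z.im → 0 < x ∧ x < π := fun h hz ↦
    h ▸ arg_mem_Ioo_of_im_pos hz
  obtain ⟨hp₀₁, hq₀₁⟩ := hmem h₀₁ (him 2)
  obtain ⟨hp₀₂, hq₀₂⟩ := hmem h₀₂ (him 1)
  obtain ⟨hp₁₂, hq₁₂⟩ := hmem h₁₂ (him 0)
  rw [hset, measureReal_ballWedge_triple (hN 0) (hN 1) (hN 2) hp₀₁ hq₀₁ hp₀₂ hq₀₂ hp₁₂ hq₁₂,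
    h₀₁, h₀₂, h₁₂]
  linarith

end SolidAngle

end BallWedges

section Simplex

theorem mem_convexHull_insert_range_iff {ι E : Type*} [Fintype ι] [AddCommGroup E] [Module ℝ E]
    {p₀ : E} {p : ι → E} {x : E} :
    x ∈ convexHull ℝ (insert p₀ (Set.range p)) ↔
      ∃ t : ι → ℝ, (∀ i, 0 ≤ t i) ∧ ∑ i, t i ≤ 1 ∧ p₀ + ∑ i, t i • (p i - p₀) = x := by
  classical
  set T : Set (ι → ℝ) := {t | (∀ i, 0 ≤ t i) ∧ ∑ i, t i ≤ 1}
  have hT : Convex ℝ T := by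
    rintro s ⟨hs, hs'⟩ t ⟨ht, ht'⟩ a b ha hb hab
    refine ⟨fun i ↦ add_nonneg (mul_nonneg ha (hs i)) (mul_nonneg hb (ht i)), ?_⟩
    simp only [Pi.add_apply, Pi.smul_apply, smul_eq_mul, Finset.sum_add_distrib, ← Finset.mul_sum]
    nlinarith
  let f : (ι → ℝ) →ₗ[ℝ] E := Fintype.linearCombination ℝ (fun i ↦ p i - p₀)
  have himage : convexHull ℝ (insert p₀ (Set.range p)) = (fun x ↦ p₀ + x) '' (f '' T) := by
    apply Set.Subset.antisymm
    · refine convexHull_min ?_ ((hT.linear_image f).translate p₀)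
      rintro y (rfl | ⟨i, rfl⟩)
      · exact ⟨0, ⟨0, by simp [T], map_zero f⟩, add_zero _⟩
      · have hi : (0 : ι → ℝ) ≤ Pi.single i 1 := Pi.single_nonneg.2 zero_le_one
        exact ⟨_, ⟨Pi.single i 1, ⟨hi, by simp⟩, rfl⟩, by
          simp [f, Fintype.linearCombination_apply_single]⟩
    · rintro _ ⟨_, ⟨t, ⟨ht, ht'⟩, rfl⟩, rfl⟩
      have hmem := (convex_convexHull ℝ (insert p₀ (Set.range p))).sum_mem
        (t := Finset.univ) (w := fun i : Option ι ↦ i.elim (1 - ∑ i, t i) t)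
        (z := fun i ↦ i.elim p₀ p) (by simpa [Option.forall, ht] using ht') (by simp)
        (by simpa [Option.forall] using ⟨subset_convexHull ℝ _ (.inl rfl),
          fun i ↦ subset_convexHull ℝ _ (.inr ⟨i, rfl⟩)⟩)
      convert hmem using 1
      simp only [f, Fintype.linearCombination_apply, Fintype.sum_option, Option.elim_none,
        Option.elim_some, smul_sub, Finset.sum_sub_distrib, ← Finset.sum_smul, sub_smul, one_smul]
      abel
  simp only [himage, T, f, Fintype.linearCombination_apply, Set.mem_image, Set.mem_ofPred_eq,
    and_assoc]
  exact ⟨fun ⟨_, ⟨t, h, h', ht⟩, hx⟩ ↦ ⟨t, h, h', ht ▸ hx⟩,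
    fun ⟨t, h, h', hx⟩ ↦ ⟨_, ⟨t, h, h', rfl⟩, hx⟩⟩

theorem measureReal_cone_le {p₀ : E3} {p : Fin 3 → E3} {w : ℝ} (hw : 0 < w)
    (hdet : (Matrix.gram ℝ fun i ↦ p i - p₀).det = w ^ 2)
    (hA : 0 < solidAngleRe fun i ↦ p i - p₀) :
    volume.real (Metric.closedBall p₀ 1 ∩ {y | ∃ x ∈ convexHull ℝ (insert p₀ (Set.range p)),
      ∃ t : ℝ, 0 ≤ t ∧ y = p₀ + t • (x - p₀)}) ≤
        2 / 3 * arctan (w / solidAngleRe fun i ↦ p i - p₀) := by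
  rw [← measureReal_ballWedge_range_dualNormal hw hdet hA, measureReal_def,
    ← measure_preimage_add volume p₀, ← measureReal_def]
  refine measureReal_mono ?_ ((measure_mono fun x hx ↦ mem_closedBall_zero_iff.2 hx.1).trans_lt
    (isCompact_closedBall (0 : E3) 1).measure_lt_top).ne
  rintro z ⟨hz, x, hx, t, ht, hzx⟩
  refine ⟨by simpa using hz, Set.forall_mem_range.2 fun i ↦ ?_⟩
  obtain ⟨s, hs, -, rfl⟩ := mem_convexHull_insert_range_iff.1 hx
  rw [add_sub_cancel_left, add_right_inj] at hzx
  simp only [hzx, real_inner_smul_right, inner_sum, inner_dualNormal, mul_ite, mul_zero,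
    Finset.sum_ite_eq, Finset.mem_univ, if_true, hdet]
  exact mul_nonneg ht (mul_nonneg (hs i) (sq_nonneg w))

end Simplex

section SimplexVolume

open Finset Matrix

theorem lintegral_sub_pow_div_factorial (n : ℕ) {r : ℝ} (hr : 0 < r) :
    ∫⁻ z in Set.Ioo 0 r, ENNReal.ofReal ((r - z) ^ n / n.factorial) =
      ENNReal.ofReal (r ^ (n + 1) / (n + 1).factorial) := by
  rw [restrict_Ioo_eq_restrict_Ioc, ← ofReal_integral_eq_lintegral_ofReal,
    ← intervalIntegral.integral_of_le hr.le, intervalIntegral.integral_div,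
    intervalIntegral.integral_comp_sub_left (fun x ↦ x ^ n), integral_pow]
  · congr 1
    simp only [sub_self, sub_zero, ne_eq, Nat.add_eq_zero_iff, one_ne_zero, and_false,
      not_false_eq_true, zero_pow, Nat.factorial_succ, Nat.cast_mul, Nat.cast_add, Nat.cast_one]
    field_simp
  · exact (Continuous.integrableOn_Icc (by fun_prop)).mono_set Set.Ioc_subset_Icc_self
  · refine (ae_restrict_iff' measurableSet_Ioc).2 (.of_forall fun z hz ↦ ?_)
    exact div_nonneg (pow_nonneg (sub_nonneg.2 hz.2) _) (Nat.cast_nonneg _)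

theorem volume_openSimplex (n : ℕ) {r : ℝ} (hr : 0 < r) :
    volume {t : Fin n → ℝ | (∀ i, 0 < t i) ∧ ∑ i, t i < r} =
      ENNReal.ofReal (r ^ n / n.factorial) := by
  induction n generalizing r with
  | zero => simp [hr, Measure.volume_pi_eq_dirac (0 : Fin 0 → ℝ)]
  | succ n ih =>
    set S : Set (ℝ × (Fin n → ℝ)) := {q | (0 < q.1 ∧ ∀ i, 0 < q.2 i) ∧ q.1 + ∑ i, q.2 i < r}
    have hS : MeasurableSet S := by
      refine IsOpen.measurableSet ?_
      simp only [S, Set.ofPred_and, Set.ofPred_forall]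
      exact ((isOpen_lt (by fun_prop) (by fun_prop)).inter
        (isOpen_iInter_of_finite fun i ↦ isOpen_lt (by fun_prop) (by fun_prop))).inter
          (isOpen_lt (by fun_prop) (by fun_prop))
    have hpre : {t : Fin (n + 1) → ℝ | (∀ i, 0 < t i) ∧ ∑ i, t i < r} =
        MeasurableEquiv.piFinSuccAbove (fun _ ↦ ℝ) 0 ⁻¹' S := by
      ext t
      simp [S, Fin.forall_fin_succ, Fin.sum_univ_succ, Fin.tail]
    have hslice : ∀ z, volume (Prod.mk z ⁻¹' S) = (Set.Ioo 0 r).indicator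
        (fun z ↦ ENNReal.ofReal ((r - z) ^ n / n.factorial)) z := by
      intro z
      by_cases hz : z ∈ Set.Ioo 0 r
      · rw [Set.indicator_of_mem hz, ← ih (sub_pos.2 hz.2)]
        congr 1
        ext t
        simp [S, hz.1, lt_sub_iff_add_lt']
      · rw [Set.indicator_of_notMem hz]
        convert measure_empty (μ := volume)
        refine Set.eq_empty_of_forall_notMem fun t ⟨⟨hz₀, ht⟩, hlt⟩ ↦ hz ⟨hz₀, ?_⟩
        linarith [sum_nonneg fun i (_ : i ∈ univ) ↦ (ht i).le]
    rw [hpre, (volume_preserving_piFinSuccAbove (fun _ ↦ ℝ) 0).measure_preimage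
      hS.nullMeasurableSet, Measure.volume_eq_prod, Measure.prod_apply hS, lintegral_congr hslice,
      lintegral_indicator measurableSet_Ioo, lintegral_sub_pow_div_factorial n hr]

theorem ofReal_abs_det_div_factorial_le_volume {n : ℕ} {K U : Set (Fin n → ℝ)} (hK : Convex ℝ K)
    (h₀ : 0 ∈ K) {u : Fin n → Fin n → ℝ} (hu : ∀ i, u i ∈ K)
    (hU : (Matrix.of u).det ≠ 0 → ∀ s : Fin n → ℝ, (∀ i, 0 < s i) → ∑ i, s i • u i ∈ U) :
    ENNReal.ofReal (|(Matrix.of u).det| / n.factorial) ≤ volume (K ∩ U) := by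
  by_cases hdet : (Matrix.of u).det = 0
  · simp [hdet]
  calc ENNReal.ofReal (|(Matrix.of u).det| / n.factorial)
    _ = volume (((Matrix.of u)ᵀ.toLin') '' {t | (∀ i, 0 < t i) ∧ ∑ i, t i < 1}) := by
      rw [Measure.addHaar_image_linearMap, LinearMap.det_toLin', Matrix.det_transpose,
        volume_openSimplex n one_pos, ← ENNReal.ofReal_mul (abs_nonneg _), one_pow, mul_one_div]
    _ ≤ volume (K ∩ U) := measure_mono ?_
  rintro _ ⟨t, ⟨ht, ht'⟩, rfl⟩
  have hsum : (Matrix.of u)ᵀ.toLin' t = ∑ i, t i • u i := by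
    rw [Matrix.toLin'_apply, Matrix.mulVec_transpose, Matrix.vecMul_eq_sum]
    rfl
  rw [hsum]
  refine ⟨?_, hU hdet t ht⟩
  exact convexHull_min (Set.insert_subset h₀ (Set.range_subset_iff.2 hu)) hK
    (mem_convexHull_insert_range_iff.2 ⟨t, fun i ↦ (ht i).le, ht'.le, by simp⟩)

end SimplexVolume

section CellVolume

open Finset Matrix

theorem volume_image_linearCombination {ι : Type*} [Fintype ι] [DecidableEq ι]
    (v : ι → EuclideanSpace ℝ ι) (s : Set (ι → ℝ)) :
    volume (Fintype.linearCombination ℝ v '' s) =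
      ENNReal.ofReal √(gram ℝ v).det * volume s := by
  set f : EuclideanSpace ℝ ι →ₗ[ℝ] EuclideanSpace ℝ ι :=
    Fintype.linearCombination ℝ v ∘ₗ (WithLp.linearEquiv 2 ℝ (ι → ℝ)).toLinearMap
  have himage : Fintype.linearCombination ℝ v '' s =
      f '' ((MeasurableEquiv.toLp 2 (ι → ℝ)).symm ⁻¹' s) := by
    ext x
    exact ⟨fun ⟨t, ht, hx⟩ ↦ ⟨WithLp.toLp 2 t, ht, hx⟩, fun ⟨t, ht, hx⟩ ↦ ⟨t.ofLp, ht, hx⟩⟩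
  have hgram : (gram ℝ v).det = LinearMap.det f ^ 2 := by
    have := f.normDet_sq_eq_det_gram (EuclideanSpace.basisFun ι ℝ)
    rw [LinearMap.normDet_eq_abs_det, sq_abs] at this
    simpa [f, Fintype.linearCombination_apply_single] using this.symm
  rw [himage, Measure.addHaar_image_linearMap, hgram, Real.sqrt_sq_eq_abs,
    (PiLp.volume_preserving_ofLp ι).measure_preimage_equiv]

theorem univ_eq_triple {i j k : Fin 3} (hij : i ≠ j) (hik : i ≠ k) (hjk : j ≠ k) :
    (univ : Finset (Fin 3)) = {i, j, k} := by
  decide +revert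

theorem abs_det_single {i j k : Fin 3} (hij : i ≠ j) (hik : i ≠ k) (hjk : j ≠ k)
    (a : ℝ) {q : Fin 3 → ℝ} (hq : q k = 0) (m : Fin 3 → ℝ) :
    |(Matrix.of ![Pi.single i a, q, m]).det| = |a * q j * m k| := by
  fin_cases i <;> fin_cases j <;> fin_cases k <;>
    simp_all [det_fin_three, abs_mul]

/-- The open cone over the coordinate face `t k = 0` of the octant with apex direction `m`, that
is, the interior of the cone spanned by `m` and by the coordinate rays other than the `k`-th. It
serves to separate the parts of a Voronoi cell adjacent to distinct faces of a simplex. -/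
def faceSector (m : Fin 3 → ℝ) (k : Fin 3) : Set (Fin 3 → ℝ) :=
  {t | ∀ l, l ≠ k → t k * m l < t l * m k}

theorem measurableSet_faceSector (m : Fin 3 → ℝ) (k : Fin 3) :
    MeasurableSet (faceSector m k) := by
  simp only [faceSector, Set.ofPred_forall]
  exact .iInter fun l ↦ .iInter fun _ ↦ (isOpen_lt (by fun_prop) (by fun_prop)).measurableSet

theorem pairwise_disjoint_faceSector (m : Fin 3 → ℝ) :
    Pairwise fun k l ↦ Disjoint (faceSector m k) (faceSector m l) := fun k l hkl ↦
  Set.disjoint_left.2 fun _ hk hl ↦ (hk l hkl.symm).not_gt (hl k hkl)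

section

variable {K : Set (Fin 3 → ℝ)} (hK : Convex ℝ K) (h₀ : 0 ∈ K) {m : Fin 3 → ℝ} (hm : m ∈ K)
  (hm₀ : ∀ i, 0 ≤ m i)

include hK h₀ hm hm₀

theorem ofReal_mul_div_le_volume_half_faceSector {i j k : Fin 3} (hij : i ≠ j) (hik : i ≠ k)
    (hjk : j ≠ k) {q : Fin 3 → ℝ} (hi : Pi.single i (1 / 2) ∈ K) (hq : q ∈ K)
    (hq₀ : ∀ l, 0 ≤ q l) (hqk : q k = 0) :
    ENNReal.ofReal (q j * m k / 12) ≤ volume (K ∩ (faceSector m k ∩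
      {t | q i * (t j * m k - t k * m j) < q j * (t i * m k - t k * m i)})) := by
  have hdet := abs_det_single hij hik hjk (1 / 2) hqk m
  convert ofReal_abs_det_div_factorial_le_volume hK h₀ (u := ![Pi.single i (1 / 2), q, m])
    (Fin.forall_fin_succ.2 ⟨hi, by simp [Fin.forall_fin_succ, hq, hm]⟩) (fun hne s hs ↦ ?_) using 2
  · rw [hdet, abs_of_nonneg (by have := hq₀ j; have := hm₀ k; positivity)]
    norm_num [Nat.factorial]
    ring
  · have hne' : q j * m k ≠ 0 := fun h ↦ hne (abs_eq_zero.1 (by rw [hdet, mul_assoc, h]; simp))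
    have hqj : 0 < q j := (hq₀ j).lt_of_ne' (left_ne_zero_of_mul hne')
    have hmk : 0 < m k := (hm₀ k).lt_of_ne' (right_ne_zero_of_mul hne')
    have hsum (l : Fin 3) : (∑ i', s i' • ![Pi.single i (1 / 2), q, m] i') l =
        s 0 * (Pi.single i (1 / 2) : Fin 3 → ℝ) l + s 1 * q l + s 2 * m l := by
      simp [Fin.sum_univ_three]
    have hsk := hsum k
    have hsj := hsum j
    have hsi := hsum i
    simp only [Pi.single_eq_same, Pi.single_eq_of_ne hik.symm, Pi.single_eq_of_ne hij.symm, hqk,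
      mul_zero, zero_add] at hsk hsj hsi
    have hi : 0 < s 0 * (1 / 2) + s 1 * q i := add_pos_of_pos_of_nonneg
      (mul_pos (hs 0) one_half_pos) (mul_nonneg (hs 1).le (hq₀ i))
    refine ⟨fun l hl ↦ ?_, ?_⟩
    · obtain rfl | rfl : l = i ∨ l = j := by
        simpa [univ_eq_triple hij hik hjk, hl] using mem_univ l
      · rw [hsk, hsi]
        nlinarith [mul_pos hi hmk]
      · rw [hsk, hsj]
        nlinarith [mul_pos (mul_pos (hs 1) hqj) hmk]
    · rw [Set.mem_ofPred_eq, hsk, hsj, hsi]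
      nlinarith [mul_pos (mul_pos (hs 0) hqj) hmk]

theorem ofReal_sum_mul_div_le_volume_faceSector (hK' : ∀ i, Pi.single i (1 / 2) ∈ K) {k : Fin 3}
    {q : Fin 3 → ℝ} (hq : q ∈ K) (hq₀ : ∀ l, 0 ≤ q l) (hqk : q k = 0) :
    ENNReal.ofReal ((∑ l, q l) * m k / 12) ≤ volume (K ∩ faceSector m k) := by
  obtain ⟨i, j, hij, hik, hjk⟩ : ∃ i j, i ≠ j ∧ i ≠ k ∧ j ≠ k := by
    clear * -
    decide +revert
  set H := {t : Fin 3 → ℝ | q i * (t j * m k - t k * m j) < q j * (t i * m k - t k * m i)}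
  have hH : MeasurableSet H := (isOpen_lt (by fun_prop) (by fun_prop)).measurableSet
  have hsum : (∑ l, q l) * m k / 12 = q j * m k / 12 + q i * m k / 12 := by
    rw [univ_eq_triple hij hik hjk, sum_insert (by simp [hij, hik]), sum_pair hjk, hqk]
    ring
  have hnonneg (l : Fin 3) : 0 ≤ q l * m k / 12 :=
    div_nonneg (mul_nonneg (hq₀ l) (hm₀ k)) (by norm_num)
  rw [hsum, ENNReal.ofReal_add (hnonneg j) (hnonneg i),
    ← measure_inter_add_sdiff (K ∩ faceSector m k) hH]
  gcongr
  · rw [Set.inter_assoc]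
    exact ofReal_mul_div_le_volume_half_faceSector hK h₀ hm hm₀ hij hik hjk (hK' i) hq hq₀ hqk
  · refine (ofReal_mul_div_le_volume_half_faceSector hK h₀ hm hm₀ hij.symm hjk hik (hK' j) hq hq₀
      hqk).trans (measure_mono fun t ht ↦ ⟨⟨ht.1, ht.2.1⟩, ?_⟩)
    exact not_lt_of_gt (Set.mem_ofPred_eq ▸ ht.2.2)

theorem ofReal_sum_faces_le_volume (hK' : ∀ i, Pi.single i (1 / 2) ∈ K)
    {q : Fin 3 → Fin 3 → ℝ} (hq : ∀ k, q k ∈ K) (hq₀ : ∀ k l, 0 ≤ q k l)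
    (hqk : ∀ k, q k k = 0) :
    ENNReal.ofReal (∑ k, (∑ l, q k l) * m k / 12) ≤ volume K := by
  have hface (k : Fin 3) := ofReal_sum_mul_div_le_volume_faceSector hK h₀ hm hm₀ hK' (hq k)
    (hq₀ k) (hqk k)
  rw [ENNReal.ofReal_sum_of_nonneg fun k _ ↦ div_nonneg
    (mul_nonneg (sum_nonneg fun l _ ↦ hq₀ k l) (hm₀ k)) (by norm_num)]
  calc ∑ k, ENNReal.ofReal ((∑ l, q k l) * m k / 12)
    _ ≤ ∑ k, volume.restrict K (faceSector m k) := sum_le_sum fun k _ ↦ by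
      rw [Measure.restrict_apply (measurableSet_faceSector m k), Set.inter_comm]
      exact hface k
    _ ≤ volume.restrict K Set.univ := sum_measure_le_measure_univ
      (fun k _ ↦ (measurableSet_faceSector m k).nullMeasurableSet)
      fun k _ l _ hkl ↦ (pairwise_disjoint_faceSector m hkl).aedisjoint
    _ = volume K := Measure.restrict_apply_univ K

end

end CellVolume

section CoordinateCell

open Finset Matrix

/-- The Voronoi cell at the vertex `p₀` of a simplex, in the barycentric-type coordinates `t` of
the point `p₀ + ∑ i, t i • v i`, where `v` is the family of edge vectors at `p₀` and `G` its Gram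
matrix. The inequality of index `i` says that the point is at least as close to `p₀` as to
`p₀ + v i`. -/
def cellCoords {ι : Type*} [Fintype ι] (G : Matrix ι ι ℝ) : Set (ι → ℝ) :=
  {t | (∀ i, 0 ≤ t i) ∧ ∑ i, t i ≤ 1 ∧ ∀ i, (G *ᵥ t) i ≤ G i i / 2}

theorem convex_cellCoords {ι : Type*} [Fintype ι] (G : Matrix ι ι ℝ) :
    Convex ℝ (cellCoords G) := by
  rintro s ⟨hs, hs', hs''⟩ t ⟨ht, ht', ht''⟩ a b ha hb hab
  refine ⟨fun i ↦ add_nonneg (mul_nonneg ha (hs i)) (mul_nonneg hb (ht i)), ?_, fun i ↦ ?_⟩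
  · simpa [sum_add_distrib, mul_sum] using convex_Iic (1 : ℝ) hs' ht' ha hb hab
  · rw [mulVec_add, mulVec_smul, mulVec_smul]
    exact convex_Iic (G i i / 2) (hs'' i) (ht'' i) ha hb hab

theorem zero_mem_cellCoords {ι : Type*} [Fintype ι] {G : Matrix ι ι ℝ} (hG : ∀ i, 0 ≤ G i i) :
    0 ∈ cellCoords G :=
  ⟨fun _ ↦ le_rfl, by simp, fun i ↦ by simpa using div_nonneg (hG i) zero_le_two⟩

theorem single_half_mem_cellCoords {ι : Type*} [Fintype ι] [DecidableEq ι] {G : Matrix ι ι ℝ}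
    (hG : ∀ i j, G i j ≤ G i i) (j : ι) : Pi.single j (1 / 2) ∈ cellCoords G := by
  have hj : (0 : ι → ℝ) ≤ Pi.single j (1 / 2) := Pi.single_nonneg.2 one_half_pos.le
  refine ⟨hj, ?_, fun i ↦ ?_⟩
  · rw [sum_pi_single']
    norm_num
  · have hij := hG i j
    simp only [mulVec_single, Pi.smul_apply, col_apply, MulOpposite.smul_eq_mul_unop,
      MulOpposite.unop_op]
    linarith

theorem heron_pos_of_posDef {ι : Type*} {G : Matrix ι ι ℝ} (hG : G.PosDef) {i j : ι}
    (hij : i ≠ j) : 0 < heron (G i i) (G j j) (G i i + G j j - 2 * G i j) := by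
  have hinj : Function.Injective ![i, j] := by
    simp [Function.Injective, Fin.forall_fin_two, hij, hij.symm]
  have hdet := (hG.submatrix hinj).det_pos
  have hsymm : G j i = G i j := hG.isHermitian.apply i j
  simp only [det_fin_two, submatrix_apply, cons_val_zero, cons_val_one, hsymm] at hdet
  push_cast [heron]
  linarith

theorem mulVec_apply_le_of_posDef {ι : Type*} [Fintype ι] {G : Matrix ι ι ℝ} (hG : G.PosDef)
    {q m : ι → ℝ} {k : ι} (hqk : q k = 0) (hmk : 0 ≤ m k)
    (h : ∀ l, l ≠ k → (G *ᵥ q) l = (G *ᵥ m) l) : (G *ᵥ q) k ≤ (G *ᵥ m) k := by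
  classical
  by_contra! hlt
  have hform : (m - q) ⬝ᵥ (G *ᵥ (m - q)) = m k * ((G *ᵥ m) k - (G *ᵥ q) k) := by
    rw [dotProduct, sum_eq_single k (fun l _ hl ↦ by simp [mulVec_sub, h l hl]) (by simp)]
    simp [mulVec_sub, hqk]
  have hne : m - q ≠ 0 := fun h0 ↦ by
    rw [sub_eq_zero.1 h0] at hlt
    exact hlt.false
  have hpos := hG.dotProduct_mulVec_pos hne
  rw [star_trivial, hform] at hpos
  nlinarith

theorem exists_faceCircumcenter {ι : Type*} [Fintype ι] {G : Matrix ι ι ℝ} (hG : G.PosDef)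
    {i j : ι} (hij : i ≠ j) (hi : G i j ≤ G i i) (hj : G i j ≤ G j j) :
    ∃ q : ι → ℝ, (∀ l, 0 ≤ q l) ∧ (∀ l, l ≠ i → l ≠ j → q l = 0) ∧
      (G *ᵥ q) i = G i i / 2 ∧ (G *ᵥ q) j = G j j / 2 ∧
      ∑ l, q l = circumNum (G i i) (G j j) (G i i + G j j - 2 * G i j) /
        heron (G i i) (G j j) (G i i + G j j - 2 * G i j) := by
  classical
  have hD := heron_pos_of_posDef hG hij
  have hsymm : G j i = G i j := hG.isHermitian.apply i j
  set D := heron (G i i) (G j j) (G i i + G j j - 2 * G i j) with hDdef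
  push_cast [heron] at hDdef
  set a := 2 * (G j j * (G i i - G i j)) / D with ha
  set b := 2 * (G i i * (G j j - G i j)) / D with hb
  have hmulVec (l : ι) : (G *ᵥ (Pi.single i a + Pi.single j b)) l = G l i * a + G l j * b := by
    simp [mulVec_add, mul_comm]
  refine ⟨Pi.single i a + Pi.single j b, fun l ↦ add_nonneg ?_ ?_,
    fun l hli hlj ↦ by simp [hli, hlj], ?_, ?_, ?_⟩
  · refine (Pi.single_nonneg.2 ?_ : (0 : ι → ℝ) ≤ Pi.single i a) l
    exact div_nonneg (mul_nonneg two_pos.le (mul_nonneg hG.diag_pos.le (sub_nonneg.2 hi))) hD.le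
  · refine (Pi.single_nonneg.2 ?_ : (0 : ι → ℝ) ≤ Pi.single j b) l
    exact div_nonneg (mul_nonneg two_pos.le (mul_nonneg hG.diag_pos.le (sub_nonneg.2 hj))) hD.le
  · rw [hmulVec, ha, hb]
    field_simp
    rw [hDdef]
    ring
  · rw [hmulVec, hsymm, ha, hb]
    field_simp
    rw [hDdef]
    ring
  · simp only [Pi.add_apply, sum_add_distrib, sum_pi_single', mem_univ, if_true, circumNum, ha, hb]
    ring

theorem mem_cellCoords_of_faceCircumcenter {ι : Type*} [Fintype ι] {G : Matrix ι ι ℝ}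
    (hG : G.PosDef) {q m : ι → ℝ} {k : ι} (hm : ∀ i, (G *ᵥ m) i = G i i / 2) (hmk : 0 ≤ m k)
    (hq₀ : ∀ l, 0 ≤ q l) (hq₁ : ∑ l, q l ≤ 1) (hqk : q k = 0)
    (hq : ∀ l, l ≠ k → (G *ᵥ q) l = G l l / 2) : q ∈ cellCoords G := by
  refine ⟨hq₀, hq₁, fun l ↦ ?_⟩
  rcases eq_or_ne l k with rfl | hl
  · rw [← hm]
    exact mulVec_apply_le_of_posDef hG hqk hmk fun i hi ↦ (hq i hi).trans (hm i).symm
  · exact (hq l hl).le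

theorem le_volume_cellCoords {G : Matrix (Fin 3) (Fin 3) ℝ} (hG : G.PosDef)
    (hacute : ∀ i j, 0 ≤ G i j ∧ G i j ≤ G i i) {m : Fin 3 → ℝ}
    (hm : ∀ i, (G *ᵥ m) i = G i i / 2) (hm₀ : ∀ i, 0 ≤ m i) (hm₁ : ∑ i, m i ≤ 1) {r : Fin 3 → ℝ}
    (hr : ∀ i j k, i < j → i ≠ k → j ≠ k → r k =
      circumNum (G i i) (G j j) (G i i + G j j - 2 * G i j) /
        heron (G i i) (G j j) (G i i + G j j - 2 * G i j)) :
    ENNReal.ofReal (∑ k, r k * m k / 12) ≤ volume (cellCoords G) := by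
  have hface (k : Fin 3) : ∃ q ∈ cellCoords G, (∀ l, 0 ≤ q l) ∧ q k = 0 ∧ ∑ l, q l = r k := by
    obtain ⟨i, j, hij, hik, hjk⟩ : ∃ i j, i < j ∧ i ≠ k ∧ j ≠ k := by
      clear * -
      decide +revert
    have hsymm : G j i = G i j := hG.isHermitian.apply i j
    obtain ⟨hg, hgi⟩ := hacute i j
    have hgj := hsymm ▸ (hacute j i).2
    obtain ⟨q, hq₀, hq, hqi, hqj, hsum⟩ := exists_faceCircumcenter hG hij.ne hgi hgj
    have hqk := hq k hik.symm hjk.symm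
    refine ⟨q, mem_cellCoords_of_faceCircumcenter hG hm (hm₀ k) hq₀ ?_ hqk fun l hl ↦ ?_, hq₀, hqk,
      hsum.trans (hr i j k hij hik hjk).symm⟩
    · rw [hsum, div_le_one (heron_pos_of_posDef hG hij.ne)]
      push_cast [circumNum, heron]
      nlinarith
    · obtain rfl | rfl : l = i ∨ l = j := by
        simpa [univ_eq_triple hij.ne hik hjk, hl] using mem_univ l
      exacts [hqi, hqj]
  choose q hqmem hq₀ hqk hsum using hface
  simp only [← hsum]
  exact ofReal_sum_faces_le_volume (convex_cellCoords G)
    (zero_mem_cellCoords fun i ↦ (hacute i i).1) ⟨hm₀, hm₁, fun i ↦ (hm i).le⟩ hm₀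
    (single_half_mem_cellCoords fun i j ↦ (hacute i j).2) hqmem hq₀ hqk

end CoordinateCell

section GramEdges

open Matrix

/-- The squared edge lengths of the simplex with the vertices `0, v 0, v 1, v 2`, where `G` is the
Gram matrix of `v`, in the numbering of the theorem. -/
def edgeSq (G : Matrix (Fin 3) (Fin 3) ℝ) : Fin 6 → ℝ :=
  ![G 0 0, G 1 1, G 2 2, G 1 1 + G 2 2 - 2 * G 1 2, G 0 0 + G 2 2 - 2 * G 0 2,
    G 0 0 + G 1 1 - 2 * G 0 1]

variable {G : Matrix (Fin 3) (Fin 3) ℝ} (hG : G.IsHermitian)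

include hG

theorem edgeGram_edgeSq : edgeGram (edgeSq G 0) (edgeSq G 1) (edgeSq G 2) (edgeSq G 3)
    (edgeSq G 4) (edgeSq G 5) = G.det := by
  have h₁₀ : G 1 0 = G 0 1 := hG.apply 0 1
  have h₂₀ : G 2 0 = G 0 2 := hG.apply 0 2
  have h₂₁ : G 2 1 = G 1 2 := hG.apply 1 2
  simp only [edgeGram, edgeSq, det_fin_three, h₁₀, h₂₀, h₂₁, cons_val]
  push_cast
  ring

theorem eight_mul_det_mul_eq_chi {m : Fin 3 → ℝ} (hm : ∀ i, (G *ᵥ m) i = G i i / 2) :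
    8 * G.det * m 0 = chi (edgeSq G 1) (edgeSq G 2) (edgeSq G 0) (edgeSq G 4) (edgeSq G 5)
        (edgeSq G 3) ∧
      8 * G.det * m 1 = chi (edgeSq G 0) (edgeSq G 2) (edgeSq G 1) (edgeSq G 3) (edgeSq G 5)
        (edgeSq G 4) ∧
      8 * G.det * m 2 = chi (edgeSq G 0) (edgeSq G 1) (edgeSq G 2) (edgeSq G 3) (edgeSq G 4)
        (edgeSq G 5) := by
  have h₁₀ : G 1 0 = G 0 1 := hG.apply 0 1
  have h₂₀ : G 2 0 = G 0 2 := hG.apply 0 2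
  have h₂₁ : G 2 1 = G 1 2 := hG.apply 1 2
  have hcramer (k : Fin 3) : G.det * m k = ∑ i, G.adjugate k i * (G i i / 2) := by
    simp only [← hm]
    exact (congrFun (by rw [mulVec_mulVec, adjugate_mul, smul_mulVec, one_mulVec] :
      G.adjugate *ᵥ (G *ᵥ m) = G.det • m) k).symm
  simp only [mul_assoc, hcramer, chi, edgeSq, adjugate_fin_three, Fin.sum_univ_three, of_apply,
    cons_val, h₁₀, h₂₀, h₂₁]
  push_cast
  exact ⟨by ring, by ring, by ring⟩

theorem nonneg_and_le_of_edgeSq_le_add (h : ∀ i j k, edgeSq G i ≤ edgeSq G j + edgeSq G k)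
    (i j : Fin 3) : 0 ≤ G i j ∧ G i j ≤ G i i := by
  have h₁₀ : G 1 0 = G 0 1 := hG.apply 0 1
  have h₂₀ : G 2 0 = G 0 2 := hG.apply 0 2
  have h₂₁ : G 2 1 = G 1 2 := hG.apply 1 2
  simp only [edgeSq] at h
  have h₀₀ := h 0 0 0
  have h₁₁ := h 1 1 1
  have h₂₂ := h 2 2 2
  have h₃₁₂ := h 3 1 2
  have h₁₂₃ := h 1 2 3
  have h₂₁₃ := h 2 1 3
  have h₄₀₂ := h 4 0 2
  have h₀₂₄ := h 0 2 4
  have h₂₀₄ := h 2 0 4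
  have h₅₀₁ := h 5 0 1
  have h₀₁₅ := h 0 1 5
  have h₁₀₅ := h 1 0 5
  simp only [cons_val] at *
  fin_cases i <;> fin_cases j <;> simp only [Fin.reduceFinMk, Fin.zero_eta, Fin.mk_one] <;>
    constructor <;> linarith

end GramEdges

section VoronoiCell

open Finset Matrix

variable {ι E : Type*} [Fintype ι] [NormedAddCommGroup E] [InnerProductSpace ℝ E]
  {p₀ : E} {p : ι → E}

theorem dist_sq_sub_dist_sq_eq_gram (t : ι → ℝ) (i : ι) :
    dist (p₀ + ∑ j, t j • (p j - p₀)) (p i) ^ 2 - dist (p₀ + ∑ j, t j • (p j - p₀)) p₀ ^ 2 =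
      gram ℝ (fun j ↦ p j - p₀) i i - 2 * (gram ℝ (fun j ↦ p j - p₀) *ᵥ t) i := by
  have hinner : (gram ℝ (fun j ↦ p j - p₀) *ᵥ t) i =
      inner ℝ (p i - p₀) (∑ j, t j • (p j - p₀)) := by
    simp only [mulVec, dotProduct, gram_apply, inner_sum, real_inner_smul_right, mul_comm]
  rw [hinner, gram_apply, dist_comm _ (p i), dist_eq_norm, dist_eq_norm, sub_add_eq_sub_sub,
    add_sub_cancel_left, norm_sub_sq_real, real_inner_self_eq_norm_sq]
  ring

theorem dist_le_dist_iff_gram (t : ι → ℝ) (i : ι) :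
    dist (p₀ + ∑ j, t j • (p j - p₀)) p₀ ≤ dist (p₀ + ∑ j, t j • (p j - p₀)) (p i) ↔
      (gram ℝ (fun j ↦ p j - p₀) *ᵥ t) i ≤ gram ℝ (fun j ↦ p j - p₀) i i / 2 := by
  rw [← sq_le_sq₀ dist_nonneg dist_nonneg, ← sub_nonneg, dist_sq_sub_dist_sq_eq_gram, sub_nonneg,
    le_div_iff₀' two_pos]

theorem exists_circumcenter_coords {c : E} (hc : c ∈ convexHull ℝ (insert p₀ (Set.range p)))
    (hdist : ∀ i, dist c p₀ = dist c (p i)) :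
    ∃ m : ι → ℝ, (∀ i, 0 ≤ m i) ∧ ∑ i, m i ≤ 1 ∧
      ∀ i, (gram ℝ (fun j ↦ p j - p₀) *ᵥ m) i = gram ℝ (fun j ↦ p j - p₀) i i / 2 := by
  obtain ⟨m, hm₀, hm₁, rfl⟩ := mem_convexHull_insert_range_iff.1 hc
  refine ⟨m, hm₀, hm₁, fun i ↦ ?_⟩
  have := dist_sq_sub_dist_sq_eq_gram (p₀ := p₀) (p := p) m i
  rw [hdist i, sub_self] at this
  linarith

theorem volume_voronoiCell [DecidableEq ι] {p₀ : EuclideanSpace ℝ ι}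
    {p : ι → EuclideanSpace ℝ ι} :
    volume {x ∈ convexHull ℝ (insert p₀ (Set.range p)) | ∀ i, dist x p₀ ≤ dist x (p i)} =
      ENNReal.ofReal √(gram ℝ fun i ↦ p i - p₀).det *
        volume (cellCoords (gram ℝ fun i ↦ p i - p₀)) := by
  rw [← volume_image_linearCombination, ← measure_preimage_add volume p₀]
  congr 1
  ext x
  simp only [Set.mem_preimage, Set.mem_ofPred_eq, mem_convexHull_insert_range_iff, Set.mem_image,
    Fintype.linearCombination_apply, cellCoords]
  constructor
  · rintro ⟨⟨t, ht₀, ht₁, htx⟩, hdist⟩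
    refine ⟨t, ⟨ht₀, ht₁, fun i ↦ ?_⟩, add_left_cancel htx⟩
    rw [← dist_le_dist_iff_gram, htx]
    exact hdist i
  · rintro ⟨t, ⟨ht₀, ht₁, ht⟩, rfl⟩
    exact ⟨⟨t, ht₀, ht₁, rfl⟩, fun i ↦ (dist_le_dist_iff_gram t i).2 (ht i)⟩

theorem le_measureReal_voronoiCell {p₀ : E3} {p : Fin 3 → E3} {w b : ℝ} (hw : 0 ≤ w)
    (hdet : (gram ℝ fun i ↦ p i - p₀).det = w ^ 2)
    (hb : ENNReal.ofReal b ≤ volume (cellCoords (gram ℝ fun i ↦ p i - p₀))) :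
    w * b ≤ volume.real
      {x ∈ convexHull ℝ (insert p₀ (Set.range p)) | ∀ i, dist x p₀ ≤ dist x (p i)} := by
  have hbounded : Bornology.IsBounded (convexHull ℝ (insert p₀ (Set.range p))) :=
    isBounded_convexHull.2 ((Set.finite_range p).insert p₀).isBounded
  rw [measureReal_def, ← ENNReal.ofReal_le_iff_le_toReal
    (hbounded.subset (Set.sep_subset _ _)).measure_lt_top.ne, volume_voronoiCell, hdet,
    Real.sqrt_sq hw, ENNReal.ofReal_mul hw]
  gcongr

end VoronoiCell

section Assembly

open Finset Matrix

/-- The six edge lengths of the simplex with the vertices `p₀, p 0, p 1, p 2`, in the numbering of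
the theorem. -/
def edgeLength (p₀ : E3) (p : Fin 3 → E3) : Fin 6 → ℝ :=
  ![dist p₀ (p 0), dist p₀ (p 1), dist p₀ (p 2), dist (p 1) (p 2), dist (p 0) (p 2),
    dist (p 0) (p 1)]

variable {p₀ : E3} {p : Fin 3 → E3}

theorem edgeSq_gram_sub (i : Fin 6) :
    edgeSq (gram ℝ fun i ↦ p i - p₀) i = edgeLength p₀ p i ^ 2 := by
  have hside (i j : Fin 3) : ‖p i - p j‖ ^ 2 =
      ‖p i - p₀‖ ^ 2 + ‖p j - p₀‖ ^ 2 - 2 * inner ℝ (p i - p₀) (p j - p₀) := by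
    rw [← sub_sub_sub_cancel_right _ _ p₀, norm_sub_sq_real]
    ring
  fin_cases i <;>
    simp [edgeSq, edgeLength, gram_apply, dist_eq_norm, norm_sub_rev p₀, hside]

theorem solidRe_edgeLength : solidRe (edgeLength p₀ p 0) (edgeLength p₀ p 1) (edgeLength p₀ p 2)
    (edgeSq (gram ℝ fun i ↦ p i - p₀) 0) (edgeSq (gram ℝ fun i ↦ p i - p₀) 1)
    (edgeSq (gram ℝ fun i ↦ p i - p₀) 2) (edgeSq (gram ℝ fun i ↦ p i - p₀) 3)
    (edgeSq (gram ℝ fun i ↦ p i - p₀) 4) (edgeSq (gram ℝ fun i ↦ p i - p₀) 5) =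
      solidAngleRe fun i ↦ p i - p₀ := by
  simp only [solidRe, solidAngleRe, edgeSq, edgeLength, gram_apply, Matrix.cons_val, dist_eq_norm']
  push_cast
  ring

theorem linearIndependent_sub_of_affineIndependent
    (h : AffineIndependent ℝ ![p₀, p 0, p 1, p 2]) : LinearIndependent ℝ fun i ↦ p i - p₀ := by
  have hsub := (affineIndependent_iff_linearIndependent_vsub ℝ _ 0).1 h
  have hcomp : (fun i ↦ p i - p₀) = (fun i : {i : Fin 4 // i ≠ 0} ↦
      ![p₀, p 0, p 1, p 2] i -ᵥ ![p₀, p 0, p 1, p 2] 0) ∘ fun i ↦ ⟨i.succ, i.succ_ne_zero⟩ := by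
    ext1 i
    fin_cases i <;> rfl
  rw [hcomp]
  exact hsub.comp _ fun i j hij ↦ Fin.succ_injective _ (congrArg Subtype.val hij)

theorem le_volume_cellCoords_edgeSq {G : Matrix (Fin 3) (Fin 3) ℝ} (hG : G.PosDef)
    (hacute : ∀ i j, 0 ≤ G i j ∧ G i j ≤ G i i) {m : Fin 3 → ℝ}
    (hm : ∀ i, (G *ᵥ m) i = G i i / 2) (hm₀ : ∀ i, 0 ≤ m i) (hm₁ : ∑ i, m i ≤ 1) :
    ENNReal.ofReal (1 / 12 * (circumNum (edgeSq G 0) (edgeSq G 1) (edgeSq G 5) /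
        heron (edgeSq G 0) (edgeSq G 1) (edgeSq G 5) * m 2 +
      circumNum (edgeSq G 0) (edgeSq G 2) (edgeSq G 4) /
        heron (edgeSq G 0) (edgeSq G 2) (edgeSq G 4) * m 1 +
      circumNum (edgeSq G 1) (edgeSq G 2) (edgeSq G 3) /
        heron (edgeSq G 1) (edgeSq G 2) (edgeSq G 3) * m 0)) ≤ volume (cellCoords G) := by
  set r := fun i j ↦ circumNum (G i i) (G j j) (G i i + G j j - 2 * G i j) /
    heron (G i i) (G j j) (G i i + G j j - 2 * G i j)
  convert le_volume_cellCoords hG hacute hm hm₀ hm₁ (r := ![r 1 2, r 0 2, r 0 1]) ?_ using 2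
  · simp only [Fin.sum_univ_three, Matrix.cons_val, r, edgeSq]
    ring
  · intro i j k hij hik hjk
    fin_cases i <;> fin_cases j <;> fin_cases k <;> first | rfl | contradiction

theorem insert_range_fin_three : insert p₀ (Set.range p) = {p₀, p 0, p 1, p 2} := by
  congr 1
  ext x
  simp [Fin.exists_fin_succ, eq_comm]

theorem vor_eq_measureReal : vor p₀ (p 0) (p 1) (p 2) = 4 * (-δoct *
    volume.real {x ∈ convexHull ℝ (insert p₀ (Set.range p)) | ∀ i, dist x p₀ ≤ dist x (p i)} +
    volume.real (Metric.closedBall p₀ 1 ∩ {y | ∃ x ∈ convexHull ℝ (insert p₀ (Set.range p)),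
      ∃ t : ℝ, 0 ≤ t ∧ y = p₀ + t • (x - p₀)})) := by
  simp [vor, insert_range_fin_three, measureReal_def, Fin.forall_fin_succ]

theorem vor_neg_of_check {b : EdgeBox} (hb : b.check = true) (hy : b.Contains (edgeLength p₀ p))
    (hindep : AffineIndependent ℝ ![p₀, p 0, p 1, p 2])
    (hcc : ContainsCircumcenter p₀ (p 0) (p 1) (p 2)) : vor p₀ (p 0) (p 1) (p 2) < 0 := by
  set G := gram ℝ fun i ↦ p i - p₀
  have hG : G.PosDef := posDef_gram_of_linearIndependent
    (linearIndependent_sub_of_affineIndependent hindep)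
  have hw := Real.sqrt_pos.2 hG.det_pos
  have hdet := (Real.sq_sqrt hG.det_pos.le).symm
  set w := √G.det
  obtain ⟨c, hc, hc₁, hc₂, hc₃⟩ := hcc
  obtain ⟨m, hm₀, hm₁, hm⟩ := exists_circumcenter_coords (insert_range_fin_three ▸ hc)
    (Fin.forall_fin_succ.2 ⟨hc₁, Fin.forall_fin_two.2 ⟨hc₂, hc₃⟩⟩)
  have hadd (i j k : Fin 6) : edgeSq G i ≤ edgeSq G j + edgeSq G k := by
    simpa only [G, edgeSq_gram_sub] using hy.sq_le_add hb i j k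
  have hcell := le_measureReal_voronoiCell hw.le hdet
    (le_volume_cellCoords_edgeSq hG (nonneg_and_le_of_edgeSq_le_add hG.isHermitian hadd) hm hm₀ hm₁)
  have hpos (i : Fin 6) : 0 < edgeLength p₀ p i := two_pos.trans_le (hy.two_le hb i)
  have hA := solidRe_pos (hpos 0) (hpos 1) (hpos 2) (hadd 3 1 2) (hadd 4 0 2) (hadd 5 0 1)
  obtain ⟨hchi₀, hchi₁, hchi₂⟩ := hdet ▸ eight_mul_det_mul_eq_chi hG.isHermitian hm
  have hlt := EdgeBox.arctan_lt hb hy edgeSq_gram_sub hw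
    ((edgeGram_edgeSq hG.isHermitian).trans hdet) hm₀ hchi₀ hchi₁ hchi₂
    (heron_pos_of_posDef hG (i := 0) (j := 1) (by decide))
    (heron_pos_of_posDef hG (i := 0) (j := 2) (by decide))
    (heron_pos_of_posDef hG (i := 1) (j := 2) (by decide))
  rw [solidRe_edgeLength] at hA hlt
  have hcone := measureReal_cone_le hw hdet hA
  have hδ := mul_le_mul_of_nonneg_left hcell (by linarith [lt_δoct] : (0 : ℝ) ≤ δoct)
  rw [vor_eq_measureReal]
  linarith

end Assembly

theorem vor_neg_long_fourth_edge_general (p₀ p₁ p₂ p₃ : E3)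
    (hindep : AffineIndependent ℝ ![p₀, p₁, p₂, p₃])
    (hcc : ContainsCircumcenter p₀ p₁ p₂ p₃)
    (h4 : dist p₂ p₃ ∈ Set.Icc (2.51 : ℝ) (2 * √2))
    (hcase : (dist p₀ p₁ ∈ Set.Icc (2.06 : ℝ) 2.51 ∧ dist p₀ p₂ ∈ Set.Icc (2 : ℝ) 2.51 ∧
        dist p₀ p₃ ∈ Set.Icc (2 : ℝ) 2.51 ∧ dist p₁ p₃ ∈ Set.Icc (2 : ℝ) 2.51 ∧
        dist p₁ p₂ ∈ Set.Icc (2 : ℝ) 2.51) ∨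
      (dist p₀ p₂ ∈ Set.Icc (2.08 : ℝ) 2.51 ∧ dist p₀ p₁ ∈ Set.Icc (2 : ℝ) 2.51 ∧
        dist p₀ p₃ ∈ Set.Icc (2 : ℝ) 2.51 ∧ dist p₁ p₃ ∈ Set.Icc (2 : ℝ) 2.51 ∧
        dist p₁ p₂ ∈ Set.Icc (2 : ℝ) 2.51) ∨
      (dist p₁ p₃ ∈ Set.Icc (2.2 : ℝ) 2.51 ∧ dist p₀ p₁ ∈ Set.Icc (2 : ℝ) 2.51 ∧
        dist p₀ p₂ ∈ Set.Icc (2 : ℝ) 2.51 ∧ dist p₀ p₃ ∈ Set.Icc (2 : ℝ) 2.51 ∧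
        dist p₁ p₂ ∈ Set.Icc (2 : ℝ) 2.51) ∨
      (dist p₂ p₃ ∈ Set.Icc (2.58 : ℝ) (2 * √2) ∧ dist p₁ p₃ ∈ Set.Icc (2.12 : ℝ) 2.51 ∧
        dist p₀ p₁ ∈ Set.Icc (2 : ℝ) 2.51 ∧ dist p₀ p₂ ∈ Set.Icc (2 : ℝ) 2.51 ∧
        dist p₀ p₃ ∈ Set.Icc (2 : ℝ) 2.51 ∧ dist p₁ p₂ ∈ Set.Icc (2 : ℝ) 2.51)) :
    vor p₀ p₁ p₂ p₃ < 0 := by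
  obtain ⟨b, hb, hy⟩ := EdgeBox.exists_contains h4 hcase
  exact vor_neg_of_check (p := ![p₁, p₂, p₃]) hb hy hindep hcc

/-- Calculation 4.5.2, cells (4)–(7): Voronoi scoring of small simplices with a long
fourth edge is negative. -/
theorem vor_neg_long_fourth_edge (p₀ p₁ p₂ p₃ : E3)
    (hindep : AffineIndependent ℝ ![p₀, p₁, p₂, p₃])
    (hsmall : IsSmall p₀ p₁ p₂ p₃)
    (hcc : ContainsCircumcenter p₀ p₁ p₂ p₃)
    (h4 : dist p₂ p₃ ∈ Set.Icc (2.51 : ℝ) (2 * Real.sqrt 2))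
    (hcase : (dist p₀ p₁ ∈ Set.Icc (2.06 : ℝ) (2.51) ∧ dist p₀ p₂ ∈ Set.Icc (2 : ℝ) (2.51) ∧ dist p₀ p₃ ∈ Set.Icc (2 : ℝ) (2.51) ∧ dist p₁ p₃ ∈ Set.Icc (2 : ℝ) (2.51) ∧ dist p₁ p₂ ∈ Set.Icc (2 : ℝ) (2.51)) ∨
      (dist p₀ p₂ ∈ Set.Icc (2.08 : ℝ) (2.51) ∧ dist p₀ p₁ ∈ Set.Icc (2 : ℝ) (2.51) ∧ dist p₀ p₃ ∈ Set.Icc (2 : ℝ) (2.51) ∧ dist p₁ p₃ ∈ Set.Icc (2 : ℝ) (2.51) ∧ dist p₁ p₂ ∈ Set.Icc (2 : ℝ) (2.51)) ∨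
      (dist p₁ p₃ ∈ Set.Icc (2.2 : ℝ) (2.51) ∧ dist p₀ p₁ ∈ Set.Icc (2 : ℝ) (2.51) ∧ dist p₀ p₂ ∈ Set.Icc (2 : ℝ) (2.51) ∧ dist p₀ p₃ ∈ Set.Icc (2 : ℝ) (2.51) ∧ dist p₁ p₂ ∈ Set.Icc (2 : ℝ) (2.51)) ∨
      (dist p₂ p₃ ∈ Set.Icc (2.58 : ℝ) (2 * Real.sqrt 2) ∧ dist p₁ p₃ ∈ Set.Icc (2.12 : ℝ) (2.51) ∧ dist p₀ p₁ ∈ Set.Icc (2 : ℝ) (2.51) ∧ dist p₀ p₂ ∈ Set.Icc (2 : ℝ) (2.51) ∧ dist p₀ p₃ ∈ Set.Icc (2 : ℝ) (2.51) ∧ dist p₁ p₂ ∈ Set.Icc (2 : ℝ) (2.51))) :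
    vor p₀ p₁ p₂ p₃ < 0 :=
  vor_neg_long_fourth_edge_general p₀ p₁ p₂ p₃ hindep hcc h4 hcase
end
end

section
/- Let a, b satisfy 1 ≤ a ≤ 1.18, 4/3 ≤ b² ≤ 2, and a ≤ b, and let R = R(a, b, √2) be the Rogers simplex. Then vol(R ∩ B(0,1)) ≤ δ_oct·vol(R). Moreover, if vol(R) > 0, then equality holds if and only if a = 1 and b = 2/√3. -/
/-!
Every Rogers simplex `R(a, b, c)` is the image of one unit orthoscheme `0 ≤ z ≤ y ≤ x ≤ 1` under a
diagonal map, whose determinant cancels in the density. The density is therefore six times the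
volume of the part of the unit orthoscheme where the pulled-back squared norm
`a² (x² - y²) + b² (y² - z²) + c² z²` is at most `1`. Its coefficients make it visibly increasing
in `a`, `b`, `c`, so the density is strictly decreasing, and `R(1, 2/√3, √2)` is the densest
simplex allowed. For that one, integrating the cone volume over the base triangle produces an
elementary `arctan` formula, whose value is `δoct / 6`: 48 copies of this simplex tile the regular
octahedron of edge `2`, with the unit balls centred at its vertices.
-/

open MeasureTheory Real

noncomputable section

def pt3 (a b c : ℝ) : E3 := (WithLp.equiv 2 (Fin 3 → ℝ)).symm ![a, b, c]

/-- The Rogers simplex `R(a,b,c)`, with vertices `(0,0,0)`, `(a,0,0)`,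
`(a, √(b²-a²), 0)`, `(a, √(b²-a²), √(c²-b²))`. -/
def RogersSimplex (a b c : ℝ) : Set E3 :=
  convexHull ℝ ({pt3 0 0 0, pt3 a 0 0, pt3 a (Real.sqrt (b ^ 2 - a ^ 2)) 0,
    pt3 a (Real.sqrt (b ^ 2 - a ^ 2)) (Real.sqrt (c ^ 2 - b ^ 2))} : Set E3)

open Set Module

section ConicalCoordinates

variable {E : Type*} [NormedAddCommGroup E] [NormedSpace ℝ E] [MeasurableSpace E] [BorelSpace E]
  [FiniteDimensional ℝ E] (μ : Measure E) [μ.IsAddHaarMeasure]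

theorem lintegral_eq_ofReal_pow_mul_lintegral_comp_smul (f : E → ENNReal) {x : ℝ} (hx : 0 < x) :
    ∫⁻ y, f y ∂μ = ENNReal.ofReal (x ^ finrank ℝ E) * ∫⁻ q, f (x • q) ∂μ := by
  have hpow : 0 < x ^ finrank ℝ E := pow_pos hx _
  have hmap := lintegral_map_equiv (μ := μ) f (MeasurableEquiv.smul₀ x hx.ne')
  rw [MeasurableEquiv.coe_smul₀, Measure.map_addHaar_smul μ hx.ne', lintegral_smul_measure,
    smul_eq_mul] at hmap
  rw [← hmap, ← mul_assoc, ← ENNReal.ofReal_mul hpow.le, abs_of_pos (inv_pos.2 hpow),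
    mul_inv_cancel₀ hpow.ne', ENNReal.ofReal_one, one_mul]

theorem setLIntegral_Ioi_prod_univ_eq_lintegral_comp_smul {f : ℝ × E → ENNReal}
    (hf : Measurable f) :
    ∫⁻ p in Ioi (0 : ℝ) ×ˢ univ, f p ∂(volume.prod μ) =
      ∫⁻ q, (∫⁻ x in Ioi (0 : ℝ), ENNReal.ofReal (x ^ finrank ℝ E) * f (x, x • q)) ∂μ := by
  have hmeas : AEMeasurable
      (fun p : ℝ × E ↦ ENNReal.ofReal (p.1 ^ finrank ℝ E) * f (p.1, p.1 • p.2))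
      ((volume.restrict (Ioi (0 : ℝ))).prod μ) := by fun_prop
  calc ∫⁻ p in Ioi (0 : ℝ) ×ˢ univ, f p ∂(volume.prod μ)
    _ = ∫⁻ x in Ioi (0 : ℝ), (∫⁻ y, f (x, y) ∂μ) := by
      rw [← Measure.prod_restrict, Measure.restrict_univ, lintegral_prod _ hf.aemeasurable]
    _ = ∫⁻ x in Ioi (0 : ℝ), (∫⁻ q, ENNReal.ofReal (x ^ finrank ℝ E) * f (x, x • q) ∂μ) := by
      refine setLIntegral_congr_fun measurableSet_Ioi fun x hx ↦ ?_
      rw [lintegral_const_mul' _ _ ENNReal.ofReal_ne_top,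
        ← lintegral_eq_ofReal_pow_mul_lintegral_comp_smul μ (fun y ↦ f (x, y)) hx]
    _ = _ := lintegral_lintegral_swap hmeas

theorem setLIntegral_Ioc_ofReal_pow {r : ℝ} (hr : 0 ≤ r) (n : ℕ) :
    ∫⁻ x in Ioc 0 r, ENNReal.ofReal (x ^ n) = ENNReal.ofReal (r ^ (n + 1) / (n + 1)) := by
  have hint : IntegrableOn (fun x : ℝ ↦ x ^ n) (Ioc 0 r) := (continuous_pow n).integrableOn_Ioc
  have hnonneg : ∀ᵐ x ∂volume.restrict (Ioc 0 r), 0 ≤ x ^ n :=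
    ae_restrict_of_forall_mem measurableSet_Ioc fun x hx ↦ pow_nonneg hx.1.le n
  rw [← ofReal_integral_eq_lintegral_ofReal hint hnonneg, ← intervalIntegral.integral_of_le hr,
    integral_pow, zero_pow n.succ_ne_zero, sub_zero]

theorem measure_eq_setLIntegral_of_mem_iff_le {S : Set (ℝ × E)} (hS : MeasurableSet S)
    {T : Set E} (hT : MeasurableSet T) {ρ : E → ℝ} (hρ : ∀ q ∈ T, 0 ≤ ρ q)
    (hS₀ : ∀ p ∈ S, 0 ≤ p.1) (hST : ∀ x > 0, ∀ q, (x, x • q) ∈ S ↔ q ∈ T ∧ x ≤ ρ q) :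
    (volume.prod μ) S =
      ∫⁻ q in T, ENNReal.ofReal (ρ q ^ (finrank ℝ E + 1) / (finrank ℝ E + 1)) ∂μ := by
  have hnull : (volume.prod μ) ({0} ×ˢ univ : Set (ℝ × E)) = 0 := by simp
  have hdiff : S \ {0} ×ˢ univ = S ∩ Ioi (0 : ℝ) ×ˢ univ := by
    ext p
    simp only [mem_sdiff, mem_inter_iff, mem_prod, mem_singleton_iff, mem_univ, and_true, mem_Ioi]
    exact and_congr_right fun hp ↦ (hS₀ p hp).lt_iff_ne'.symm
  have hray (q : E) :
      ∫⁻ x in Ioi (0 : ℝ), ENNReal.ofReal (x ^ finrank ℝ E) * S.indicator 1 (x, x • q) =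
        T.indicator (fun q ↦ ENNReal.ofReal (ρ q ^ (finrank ℝ E + 1) / (finrank ℝ E + 1))) q := by
    have hslice : EqOn
        (fun x ↦ ENNReal.ofReal (x ^ finrank ℝ E) * S.indicator 1 (x, x • q))
        ((Iic (ρ q)).indicator fun x ↦ T.indicator (fun _ ↦ ENNReal.ofReal (x ^ finrank ℝ E)) q)
        (Ioi 0) := fun x hx ↦ by
      by_cases hq : q ∈ T <;> by_cases hxρ : x ≤ ρ q <;> simp [indicator, hST x hx q, hq, hxρ]
    rw [setLIntegral_congr_fun measurableSet_Ioi hslice, setLIntegral_indicator measurableSet_Iic,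
      Iic_inter_Ioi]
    by_cases hq : q ∈ T
    · simp only [indicator_of_mem hq]
      exact setLIntegral_Ioc_ofReal_pow (hρ q hq) _
    · simp [hq]
  rw [← measure_sdiff_null hnull, hdiff, ← Measure.restrict_apply hS, ← lintegral_indicator_one hS,
    setLIntegral_Ioi_prod_univ_eq_lintegral_comp_smul μ (measurable_one.indicator hS),
    ← lintegral_indicator hT]
  exact lintegral_congr hray

end ConicalCoordinates

section ClosedRegion

variable {F : Type*} [NormedAddCommGroup F] [NormedSpace ℝ F]

theorem setIntegral_closedRegion_eq_integral_integral {α β : ℝ} (hαβ : α ≤ β) {l u : ℝ → ℝ}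
    (hl : Measurable l) (hu : Measurable u) (hlu : ∀ x ∈ Icc α β, l x ≤ u x) {f : ℝ × ℝ → F}
    (hf : IntegrableOn f {p | p.1 ∈ Icc α β ∧ p.2 ∈ Icc (l p.1) (u p.1)}) :
    ∫ p in {p : ℝ × ℝ | p.1 ∈ Icc α β ∧ p.2 ∈ Icc (l p.1) (u p.1)}, f p =
      ∫ x in α..β, ∫ y in l x..u x, f (x, y) := by
  set R := {p : ℝ × ℝ | p.1 ∈ Icc α β ∧ p.2 ∈ Icc (l p.1) (u p.1)}
  have hR : MeasurableSet R := by
    refine (measurable_fst measurableSet_Icc).inter ?_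
    exact (measurableSet_le (hl.comp measurable_fst) measurable_snd).inter
      (measurableSet_le measurable_snd (hu.comp measurable_fst))
  have hslice (x : ℝ) : ∫ y, R.indicator f (x, y) =
      (Icc α β).indicator (fun x ↦ ∫ y in l x..u x, f (x, y)) x := by
    by_cases hx : x ∈ Icc α β
    · have : (fun y ↦ R.indicator f (x, y)) = (Icc (l x) (u x)).indicator fun y ↦ f (x, y) := by
        ext y
        simp [indicator, R, hx.1, hx.2]
      rw [this, integral_indicator measurableSet_Icc, indicator_of_mem hx,
        intervalIntegral.integral_of_le (hlu x hx), integral_Icc_eq_integral_Ioc]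
    · have : (fun y ↦ R.indicator f (x, y)) = 0 := by
        ext y
        exact indicator_of_notMem (fun h ↦ hx h.1) f
      simp [this, hx]
  rw [← integral_indicator hR, Measure.volume_eq_prod,
    integral_prod _ (hf.integrable_indicator hR), integral_congr_ae (ae_of_all _ hslice),
    integral_indicator measurableSet_Icc, integral_Icc_eq_integral_Ioc,
    ← intervalIntegral.integral_of_le hαβ]

end ClosedRegion

/-- The triangle `0 ≤ v ≤ u ≤ 1`: the base, in the plane `x = 1`, of the cone spanned by the unit
orthoscheme. -/
def baseTriangle : Set (ℝ × ℝ) := {q | q.1 ∈ Icc 0 1 ∧ q.2 ∈ Icc 0 q.1}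

theorem isCompact_baseTriangle : IsCompact baseTriangle := by
  refine (isCompact_Icc.prod isCompact_Icc : IsCompact (Icc (0 : ℝ) 1 ×ˢ Icc (0 : ℝ) 1))
    |>.of_isClosed_subset ?_ fun q hq ↦ ⟨hq.1, hq.2.1, hq.2.2.trans hq.1.2⟩
  exact (isClosed_Icc.preimage continuous_fst).inter <|
    (isClosed_le continuous_const continuous_snd).inter <|
    isClosed_le continuous_snd continuous_fst

theorem setIntegral_baseTriangle {f : ℝ × ℝ → ℝ} (hf : ContinuousOn f baseTriangle) :
    ∫ q in baseTriangle, f q = ∫ u in (0 : ℝ)..1, ∫ v in (0 : ℝ)..u, f (u, v) :=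
  setIntegral_closedRegion_eq_integral_integral zero_le_one measurable_const measurable_id
    (fun _ hu ↦ hu.1) (hf.integrableOn_compact isCompact_baseTriangle)

theorem volume_real_baseTriangle : volume.real baseTriangle = 1 / 2 := by
  have h := setIntegral_baseTriangle (f := fun _ ↦ 1) continuousOn_const
  simpa using h

/-- The unit orthoscheme `0 ≤ z ≤ y ≤ x ≤ 1`, of which every Rogers simplex is a diagonal image. -/
def unitOrthoscheme : Set (ℝ × ℝ × ℝ) := {p | 0 ≤ p.2.2 ∧ p.2.2 ≤ p.2.1 ∧ p.2.1 ≤ p.1 ∧ p.1 ≤ 1}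

theorem convexHull_eq_unitOrthoscheme :
    convexHull ℝ {((0 : ℝ), (0 : ℝ), (0 : ℝ)), (1, 0, 0), (1, 1, 0), (1, 1, 1)} =
      unitOrthoscheme := by
  refine (convexHull_min ?_ ?_).antisymm ?_
  · rintro p (rfl | rfl | rfl | rfl) <;> simp [unitOrthoscheme]
  · rintro p ⟨hp₁, hp₂, hp₃, hp₄⟩ q ⟨hq₁, hq₂, hq₃, hq₄⟩ s t hs ht hst
    simp only [unitOrthoscheme, mem_ofPred_eq, Prod.fst_add, Prod.snd_add, Prod.smul_fst,
      Prod.smul_snd, smul_eq_mul]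
    refine ⟨by positivity, by gcongr, by gcongr, ?_⟩
    calc s * p.1 + t * q.1 ≤ s * 1 + t * 1 := by gcongr
      _ = 1 := by rw [mul_one, mul_one, hst]
  · rintro ⟨x, y, z⟩ ⟨hz, hzy, hyx, hx⟩
    let vertex : Fin 4 → ℝ × ℝ × ℝ := ![(0, 0, 0), (1, 0, 0), (1, 1, 0), (1, 1, 1)]
    have hvertex (i : Fin 4) :
        vertex i ∈ convexHull ℝ {(0, 0, 0), (1, 0, 0), (1, 1, 0), ((1 : ℝ), (1 : ℝ), (1 : ℝ))} :=
      subset_convexHull ℝ _ (by fin_cases i <;> simp [vertex])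
    have hmem := (convex_convexHull ℝ _).sum_mem (t := Finset.univ)
      (w := ![1 - x, x - y, y - z, z]) (z := vertex)
      (by simp [Fin.forall_fin_succ, *]) (by simp [Fin.sum_univ_succ]) (fun i _ ↦ hvertex i)
    simpa [Fin.sum_univ_succ, vertex] using hmem

theorem isClosed_unitOrthoscheme : IsClosed unitOrthoscheme := by
  unfold unitOrthoscheme
  simp only [ofPred_and]
  exact (isClosed_le (by fun_prop) (by fun_prop)).inter <|
    (isClosed_le (by fun_prop) (by fun_prop)).inter <|
    (isClosed_le (by fun_prop) (by fun_prop)).inter (isClosed_le (by fun_prop) (by fun_prop))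

theorem nonneg_of_mem_unitOrthoscheme {p : ℝ × ℝ × ℝ} (hp : p ∈ unitOrthoscheme) : 0 ≤ p.1 :=
  hp.1.trans (hp.2.1.trans hp.2.2.1)

theorem prodMk_smul_mem_unitOrthoscheme_iff {x : ℝ} (hx : 0 < x) (q : ℝ × ℝ) :
    (x, x • q) ∈ unitOrthoscheme ↔ q ∈ baseTriangle ∧ x ≤ 1 := by
  simp only [unitOrthoscheme, baseTriangle, mem_ofPred_eq, Prod.smul_fst, Prod.smul_snd,
    smul_eq_mul, mem_Icc, mul_nonneg_iff_of_pos_left hx, mul_le_mul_iff_right₀ hx,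
    mul_le_iff_le_one_right hx]
  constructor
  · rintro ⟨h₁, h₂, h₃, h₄⟩
    exact ⟨⟨⟨h₁.trans h₂, h₃⟩, h₁, h₂⟩, h₄⟩
  · rintro ⟨⟨⟨-, h₃⟩, h₁, h₂⟩, h₄⟩
    exact ⟨h₁, h₂, h₃, h₄⟩

theorem volume_unitOrthoscheme : volume unitOrthoscheme = ENNReal.ofReal (1 / 6) := by
  rw [Measure.volume_eq_prod, measure_eq_setLIntegral_of_mem_iff_le volume
    isClosed_unitOrthoscheme.measurableSet isCompact_baseTriangle.measurableSet (ρ := fun _ ↦ 1)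
    (fun _ _ ↦ zero_le_one) (fun _ ↦ nonneg_of_mem_unitOrthoscheme)
    (fun x hx q ↦ prodMk_smul_mem_unitOrthoscheme_iff hx q), setLIntegral_const,
    ← ofReal_measureReal isCompact_baseTriangle.measure_ne_top, volume_real_baseTriangle,
    ← ENNReal.ofReal_mul (by positivity)]
  norm_num

/-- The squared norm of the point of the Rogers simplex `R(a, b, c)` whose preimage in the unit
orthoscheme is `p`, written with coefficients that are nonnegative on the orthoscheme. -/
def rogersForm (a b c : ℝ) (p : ℝ × ℝ × ℝ) : ℝ :=
  a ^ 2 * (p.1 ^ 2 - p.2.1 ^ 2) + b ^ 2 * (p.2.1 ^ 2 - p.2.2 ^ 2) + c ^ 2 * p.2.2 ^ 2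

theorem continuous_rogersForm (a b c : ℝ) : Continuous (rogersForm a b c) := by
  unfold rogersForm
  fun_prop

theorem rogersForm_prodMk_smul (a b c x : ℝ) (q : ℝ × ℝ) :
    rogersForm a b c (x, x • q) = x ^ 2 * rogersForm a b c (1, q) := by
  simp only [rogersForm, Prod.smul_fst, Prod.smul_snd, smul_eq_mul]
  ring

section RogersForm

variable {a b c a' b' c' : ℝ} {q : ℝ × ℝ}

theorem rogersForm_one_le_rogersForm_one (ha : 0 ≤ a) (hb : 0 ≤ b) (hc : 0 ≤ c) (haa' : a ≤ a')
    (hbb' : b ≤ b') (hcc' : c ≤ c') (hq : q ∈ baseTriangle) :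
    rogersForm a b c (1, q) ≤ rogersForm a' b' c' (1, q) := by
  obtain ⟨⟨hu₀, hu₁⟩, hv₀, hvu⟩ := hq
  have hu : 0 ≤ 1 ^ 2 - q.1 ^ 2 := sub_nonneg.2 (by gcongr)
  have hv : 0 ≤ q.1 ^ 2 - q.2 ^ 2 := sub_nonneg.2 (by gcongr)
  unfold rogersForm
  gcongr

theorem one_le_rogersForm_one (ha : 1 ≤ a) (hb : 1 ≤ b) (hc : 1 ≤ c) (hq : q ∈ baseTriangle) :
    1 ≤ rogersForm a b c (1, q) := by
  refine le_trans (le_of_eq ?_) (rogersForm_one_le_rogersForm_one zero_le_one zero_le_one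
    zero_le_one ha hb hc hq)
  simp [rogersForm]

theorem rogersForm_one_lt_rogersForm_one (ha : 0 ≤ a) (hb : 0 ≤ b) (hc : 0 ≤ c) (haa' : a ≤ a')
    (hbb' : b ≤ b') (hcc' : c ≤ c') (hne : (a, b, c) ≠ (a', b', c')) (hv : 0 < q.2)
    (hvu : q.2 < q.1) (hu : q.1 < 1) :
    rogersForm a b c (1, q) < rogersForm a' b' c' (1, q) := by
  have hu₀ : 0 ≤ q.1 := (hv.trans hvu).le
  have hu : 0 < 1 ^ 2 - q.1 ^ 2 := sub_pos.2 (by gcongr)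
  have hvu : 0 < q.1 ^ 2 - q.2 ^ 2 := sub_pos.2 (by gcongr)
  unfold rogersForm
  rcases haa'.eq_or_lt with rfl | haa'
  · rcases hbb'.eq_or_lt with rfl | hbb'
    · have hcc' : c < c' := hcc'.lt_of_ne fun h ↦ hne (by rw [h])
      gcongr
    · exact add_lt_add_of_lt_of_le (add_lt_add_of_le_of_lt le_rfl (by gcongr)) (by gcongr)
  · exact add_lt_add_of_lt_of_le (add_lt_add_of_lt_of_le (by gcongr) (by gcongr)) (by gcongr)

/-- The part of the unit orthoscheme that corresponds to the unit ball in `R(a, b, c)`. -/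
def orthoschemeSector (a b c : ℝ) : Set (ℝ × ℝ × ℝ) :=
  {p ∈ unitOrthoscheme | rogersForm a b c p ≤ 1}

theorem measurableSet_orthoschemeSector (a b c : ℝ) : MeasurableSet (orthoschemeSector a b c) :=
  isClosed_unitOrthoscheme.measurableSet.inter
    (measurableSet_le (continuous_rogersForm a b c).measurable measurable_const)

theorem volume_orthoschemeSector_ne_top (a b c : ℝ) : volume (orthoschemeSector a b c) ≠ ⊤ :=
  measure_ne_top_of_subset (sep_subset _ _) (by simp [volume_unitOrthoscheme])

theorem prodMk_smul_mem_orthoschemeSector_iff (ha : 1 ≤ a) (hb : 1 ≤ b) (hc : 1 ≤ c) {x : ℝ}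
    (hx : 0 < x) :
    (x, x • q) ∈ orthoschemeSector a b c ↔
      q ∈ baseTriangle ∧ x ≤ (√(rogersForm a b c (1, q)))⁻¹ := by
  rw [orthoschemeSector, mem_sep_iff, prodMk_smul_mem_unitOrthoscheme_iff hx,
    rogersForm_prodMk_smul, and_assoc]
  refine and_congr_right fun hq ↦ ?_
  have hform : 1 ≤ rogersForm a b c (1, q) := one_le_rogersForm_one ha hb hc hq
  have hsqrt : 0 < √(rogersForm a b c (1, q)) := sqrt_pos.2 (zero_lt_one.trans_le hform)
  have hscale : x ≤ (√(rogersForm a b c (1, q)))⁻¹ ↔ x ^ 2 * rogersForm a b c (1, q) ≤ 1 := by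
    rw [le_inv_comm₀ hx hsqrt, sqrt_le_left (by positivity), inv_pow, le_inv_comm₀ (by positivity)
      (by positivity), inv_eq_one_div, le_div_iff₀ (by positivity)]
  have hle_one : x ≤ (√(rogersForm a b c (1, q)))⁻¹ → x ≤ 1 := fun h ↦
    h.trans (inv_le_one_of_one_le₀ (one_le_sqrt.2 hform))
  rw [← hscale]
  exact and_iff_right_of_imp hle_one

theorem volume_orthoschemeSector_eq_setLIntegral (ha : 1 ≤ a) (hb : 1 ≤ b) (hc : 1 ≤ c) :
    volume (orthoschemeSector a b c) =
      ∫⁻ q in baseTriangle, ENNReal.ofReal ((√(rogersForm a b c (1, q)))⁻¹ ^ 3 / 3) := by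
  rw [Measure.volume_eq_prod, measure_eq_setLIntegral_of_mem_iff_le volume
    (measurableSet_orthoschemeSector a b c) isCompact_baseTriangle.measurableSet
    (ρ := fun q ↦ (√(rogersForm a b c (1, q)))⁻¹) (fun _ _ ↦ by positivity)
    (fun _ hp ↦ nonneg_of_mem_unitOrthoscheme hp.1)
    (fun x hx q ↦ prodMk_smul_mem_orthoschemeSector_iff ha hb hc hx)]
  norm_num

theorem volume_orthoschemeSector_lt (ha : 1 ≤ a) (hb : 1 ≤ b) (hc : 1 ≤ c) (haa' : a ≤ a')
    (hbb' : b ≤ b') (hcc' : c ≤ c') (hne : (a, b, c) ≠ (a', b', c')) :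
    volume (orthoschemeSector a' b' c') < volume (orthoschemeSector a b c) := by
  have hvol := volume_orthoschemeSector_eq_setLIntegral (ha.trans haa') (hb.trans hbb')
    (hc.trans hcc')
  have hsqrt_pos {q : ℝ × ℝ} (hq : q ∈ baseTriangle) : 0 < √(rogersForm a b c (1, q)) := by
    linarith [one_le_sqrt.2 (one_le_rogersForm_one ha hb hc hq)]
  let V : Set (ℝ × ℝ) := {q | 0 < q.2 ∧ q.2 < q.1 ∧ q.1 < 1}
  have hVT : V ⊆ baseTriangle := fun q hq ↦
    ⟨⟨(hq.1.trans hq.2.1).le, hq.2.2.le⟩, hq.1.le, hq.2.1.le⟩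
  have hVo : IsOpen V := by
    simp only [V, ofPred_and]
    exact (isOpen_lt (by fun_prop) (by fun_prop)).inter <|
      (isOpen_lt (by fun_prop) (by fun_prop)).inter (isOpen_lt (by fun_prop) (by fun_prop))
  have hV : volume.restrict baseTriangle V ≠ 0 := by
    rw [Measure.restrict_eq_self _ hVT]
    exact (hVo.measure_pos volume ⟨(2 / 3, 1 / 3), by norm_num [V]⟩).ne'
  rw [volume_orthoschemeSector_eq_setLIntegral ha hb hc, hvol]
  refine lintegral_strict_mono_of_ae_le_of_ae_lt_on ?_ ?_ ?_ hV ?_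
  · have := continuous_rogersForm a b c
    exact Measurable.aemeasurable (by fun_prop)
  · exact hvol ▸ volume_orthoschemeSector_ne_top a' b' c'
  · refine ae_restrict_of_forall_mem isCompact_baseTriangle.measurableSet fun q hq ↦ ?_
    have hsqrt := sqrt_le_sqrt (rogersForm_one_le_rogersForm_one (by linarith) (by linarith)
      (by linarith) haa' hbb' hcc' hq)
    have hpos := hsqrt_pos hq
    dsimp only
    gcongr
  · refine ae_of_all _ fun q hq ↦ ?_
    have hpos := hsqrt_pos (hVT hq)
    have hsqrt := sqrt_lt_sqrt (sqrt_pos.1 hpos).le (rogersForm_one_lt_rogersForm_one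
      (by linarith) (by linarith) (by linarith) haa' hbb' hcc' hne hq.1 hq.2.1 hq.2.2)
    refine (ENNReal.ofReal_lt_ofReal_iff (by positivity)).2 ?_
    gcongr

end RogersForm

section SectorIntegral

theorem integral_inv_sqrt_add_mul_sq_pow_three {P B : ℝ} (hP : 0 < P) (hB : 0 ≤ B) (w : ℝ) :
    ∫ v in (0 : ℝ)..w, (√(P + B * v ^ 2))⁻¹ ^ 3 = w / (P * √(P + B * w ^ 2)) := by
  have hpos (v : ℝ) : 0 < P + B * v ^ 2 := by positivity
  have hderiv (v : ℝ) :
      HasDerivAt (fun v ↦ v / (P * √(P + B * v ^ 2))) ((√(P + B * v ^ 2))⁻¹ ^ 3) v := by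
    have hquad : HasDerivAt (fun v ↦ P + B * v ^ 2) (B * (2 * v)) v := by
      simpa using ((hasDerivAt_pow 2 v).const_mul B).const_add P
    have : 0 < √(P + B * v ^ 2) := sqrt_pos.2 (hpos v)
    refine ((hasDerivAt_id v).div ((hquad.sqrt (hpos v).ne').const_mul P)
      (by positivity)).congr_deriv ?_
    have hsq : √(P + B * v ^ 2) ^ 2 = P + B * v ^ 2 := sq_sqrt (hpos v).le
    simp only [id]
    field_simp
    linear_combination hsq
  rw [intervalIntegral.integral_eq_sub_of_hasDerivAt (fun v _ ↦ hderiv v), zero_div, sub_zero]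
  refine Continuous.intervalIntegrable ?_ _ _
  exact (Continuous.inv₀ (by fun_prop) fun v ↦ (sqrt_pos.2 (hpos v)).ne').pow 3

variable {l m n : ℝ}

theorem hasDerivAt_arctan_mul_sqrt_div (hl : 0 < l) (hn : 0 < n) (u : ℝ) :
    HasDerivAt (fun u ↦ arctan (m * √(l ^ 2 + (m ^ 2 + n ^ 2) * u ^ 2) / (l * n)))
      (l * m * n * (u / ((l ^ 2 + m ^ 2 * u ^ 2) * √(l ^ 2 + (m ^ 2 + n ^ 2) * u ^ 2)))) u := by
  have hpos : 0 < l ^ 2 + (m ^ 2 + n ^ 2) * u ^ 2 := by positivity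
  have hquad : HasDerivAt (fun u ↦ l ^ 2 + (m ^ 2 + n ^ 2) * u ^ 2)
      ((m ^ 2 + n ^ 2) * (2 * u)) u := by
    simpa using ((hasDerivAt_pow 2 u).const_mul (m ^ 2 + n ^ 2)).const_add (l ^ 2)
  refine (((hquad.sqrt hpos.ne').const_mul m).div_const (l * n)).arctan.congr_deriv ?_
  have : 0 < √(l ^ 2 + (m ^ 2 + n ^ 2) * u ^ 2) := sqrt_pos.2 hpos
  have hden : 1 + (m * √(l ^ 2 + (m ^ 2 + n ^ 2) * u ^ 2) / (l * n)) ^ 2 =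
      (m ^ 2 + n ^ 2) * (l ^ 2 + m ^ 2 * u ^ 2) / (l * n) ^ 2 := by
    rw [div_pow, mul_pow, sq_sqrt hpos.le]
    field_simp
    ring
  rw [hden]
  field_simp

theorem integral_div_mul_sqrt_add_mul_sq (hl : 0 < l) (hm : 0 < m) (hn : 0 < n) (w : ℝ) :
    ∫ u in (0 : ℝ)..w, u / ((l ^ 2 + m ^ 2 * u ^ 2) * √(l ^ 2 + (m ^ 2 + n ^ 2) * u ^ 2)) =
      (arctan (m * √(l ^ 2 + (m ^ 2 + n ^ 2) * w ^ 2) / (l * n)) - arctan (m / n)) /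
        (l * m * n) := by
  have hlmn : l * m * n ≠ 0 := by positivity
  have hcont : Continuous fun u : ℝ ↦
      u / ((l ^ 2 + m ^ 2 * u ^ 2) * √(l ^ 2 + (m ^ 2 + n ^ 2) * u ^ 2)) :=
    continuous_id.div (by fun_prop) fun u ↦ by positivity
  have hzero : m * √(l ^ 2 + (m ^ 2 + n ^ 2) * 0 ^ 2) / (l * n) = m / n := by
    rw [zero_pow two_ne_zero, mul_zero, add_zero, sqrt_sq hl.le]
    field_simp
  rw [eq_div_iff hlmn, mul_comm, ← intervalIntegral.integral_const_mul,
    intervalIntegral.integral_eq_sub_of_hasDerivAt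
      (fun u _ ↦ hasDerivAt_arctan_mul_sqrt_div hl hn u)
      ((hcont.const_mul _).intervalIntegrable _ _), hzero]

theorem setIntegral_baseTriangle_inv_sqrt_pow_three (hl : 0 < l) (hm : 0 < m) (hn : 0 < n) :
    ∫ q in baseTriangle, (√(l ^ 2 + m ^ 2 * q.1 ^ 2 + n ^ 2 * q.2 ^ 2))⁻¹ ^ 3 =
      (arctan (m * √(l ^ 2 + m ^ 2 + n ^ 2) / (l * n)) - arctan (m / n)) / (l * m * n) := by
  have hcont : Continuous fun q : ℝ × ℝ ↦
      (√(l ^ 2 + m ^ 2 * q.1 ^ 2 + n ^ 2 * q.2 ^ 2))⁻¹ ^ 3 :=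
    (Continuous.inv₀ (by fun_prop) fun q ↦ by positivity).pow 3
  have hinner (u : ℝ) : ∫ v in (0 : ℝ)..u, (√(l ^ 2 + m ^ 2 * u ^ 2 + n ^ 2 * v ^ 2))⁻¹ ^ 3 =
      u / ((l ^ 2 + m ^ 2 * u ^ 2) * √(l ^ 2 + (m ^ 2 + n ^ 2) * u ^ 2)) := by
    rw [integral_inv_sqrt_add_mul_sq_pow_three (by positivity) (sq_nonneg n),
      show l ^ 2 + m ^ 2 * u ^ 2 + n ^ 2 * u ^ 2 = l ^ 2 + (m ^ 2 + n ^ 2) * u ^ 2 by ring]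
  rw [setIntegral_baseTriangle hcont.continuousOn]
  simp only [hinner]
  rw [integral_div_mul_sqrt_add_mul_sq hl hm hn, one_pow, mul_one, ← add_assoc]

end SectorIntegral

section ClosedForm

variable {a b c : ℝ}

theorem rogersForm_one_eq (hab : a ^ 2 ≤ b ^ 2) (hbc : b ^ 2 ≤ c ^ 2) (q : ℝ × ℝ) :
    rogersForm a b c (1, q) =
      a ^ 2 + √(b ^ 2 - a ^ 2) ^ 2 * q.1 ^ 2 + √(c ^ 2 - b ^ 2) ^ 2 * q.2 ^ 2 := by
  rw [sq_sqrt (sub_nonneg.2 hab), sq_sqrt (sub_nonneg.2 hbc), rogersForm]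
  ring

theorem volume_real_orthoschemeSector (ha : 1 ≤ a) (hab : a < b) (hbc : b < c) :
    volume.real (orthoschemeSector a b c) =
      (arctan (√(b ^ 2 - a ^ 2) * c / (a * √(c ^ 2 - b ^ 2))) -
        arctan (√(b ^ 2 - a ^ 2) / √(c ^ 2 - b ^ 2))) /
      (3 * (a * √(b ^ 2 - a ^ 2) * √(c ^ 2 - b ^ 2))) := by
  have hab' : a ^ 2 < b ^ 2 := by gcongr
  have hbc' : b ^ 2 < c ^ 2 := pow_lt_pow_left₀ hbc (by linarith) two_ne_zero
  have hnorm : √(a ^ 2 + √(b ^ 2 - a ^ 2) ^ 2 + √(c ^ 2 - b ^ 2) ^ 2) = c := by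
    rw [sq_sqrt (sub_pos.2 hab').le, sq_sqrt (sub_pos.2 hbc').le, add_sub_cancel, add_sub_cancel,
      sqrt_sq (by linarith)]
  have hcont := continuous_rogersForm a b c
  rw [measureReal_def, volume_orthoschemeSector_eq_setLIntegral ha (by linarith) (by linarith),
    ← integral_eq_lintegral_of_nonneg_ae (ae_of_all _ fun q ↦ by positivity)
      (Measurable.aestronglyMeasurable (by fun_prop)), integral_div]
  simp only [rogersForm_one_eq hab'.le hbc'.le]
  rw [setIntegral_baseTriangle_inv_sqrt_pow_three (by linarith) (sqrt_pos.2 (sub_pos.2 hab'))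
    (sqrt_pos.2 (sub_pos.2 hbc')), hnorm, div_div, mul_comm _ (3 : ℝ)]

theorem sq_two_div_sqrt_three : (2 / √3) ^ 2 = 4 / 3 := by
  rw [div_pow, sq_sqrt zero_le_three]
  norm_num

theorem one_lt_two_div_sqrt_three : 1 < 2 / √3 :=
  lt_of_pow_lt_pow_left₀ 2 (by positivity) (by norm_num [sq_two_div_sqrt_three])

theorem arctan_inv_sqrt_two : arctan (√2)⁻¹ = π / 2 - arccos (1 / √3) := by
  have hsqrt : √(1 - (1 / √3) ^ 2) / (1 / √3) = √2 := by
    rw [div_pow, sq_sqrt zero_le_three, div_div_eq_mul_div, div_one, ← sqrt_mul (by norm_num)]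
    norm_num
  rw [arccos_eq_arctan (by positivity), hsqrt, arctan_inv_of_pos (by positivity)]

theorem volume_real_orthoschemeSector_octahedral :
    volume.real (orthoschemeSector 1 (2 / √3) √2) = δoct / 6 := by
  have hb := sq_two_div_sqrt_three
  have hm : √((2 / √3) ^ 2 - 1 ^ 2) = 1 / √3 := by
    rw [hb, ← sqrt_one, ← sqrt_div zero_le_one]; norm_num
  have hn : √(√2 ^ 2 - (2 / √3) ^ 2) = √2 / √3 := by
    rw [hb, sq_sqrt zero_le_two, ← sqrt_div zero_le_two]; norm_num
  have hb₂ : 2 / √3 < √2 := lt_sqrt_of_sq_lt (by norm_num [hb])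
  have h8 : √8 = 2 * √2 := by
    rw [show (8 : ℝ) = 2 ^ 2 * 2 by norm_num, sqrt_mul (by positivity), sqrt_sq zero_le_two]
  have h3 : √3 ^ 2 = 3 := sq_sqrt zero_le_three
  rw [volume_real_orthoschemeSector le_rfl one_lt_two_div_sqrt_three hb₂, hm, hn,
    show 1 / √3 * √2 / (1 * (√2 / √3)) = 1 by field_simp, arctan_one,
    show 1 / √3 / (√2 / √3) = (√2)⁻¹ by field_simp, arctan_inv_sqrt_two, δoct, h8]
  field_simp
  rw [h3]
  ring

theorem volume_real_orthoschemeSector_lt_octahedral (ha : 1 ≤ a) (hb : 2 / √3 ≤ b) (hc : √2 ≤ c)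
    (hne : (a, b, c) ≠ (1, 2 / √3, √2)) :
    volume.real (orthoschemeSector a b c) < δoct / 6 := by
  rw [← volume_real_orthoschemeSector_octahedral]
  exact ENNReal.toReal_strict_mono (volume_orthoschemeSector_ne_top _ _ _)
    (volume_orthoschemeSector_lt le_rfl one_lt_two_div_sqrt_three.le (one_le_sqrt.2 one_le_two)
      ha hb hc hne.symm)

end ClosedForm

section DiagonalImage

/-- The linear map taking the unit orthoscheme to the orthoscheme with legs `l`, `m`, `n`. -/
def orthoschemeMap (l m n : ℝ) : ℝ × ℝ × ℝ →ₗ[ℝ] E3 where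
  toFun p := pt3 (l * p.1) (m * p.2.1) (n * p.2.2)
  map_add' p q := by ext i; fin_cases i <;> simp [pt3, mul_add]
  map_smul' t p := by ext i; fin_cases i <;> simp [pt3, mul_left_comm]

theorem orthoschemeMap_apply (l m n : ℝ) (p : ℝ × ℝ × ℝ) :
    orthoschemeMap l m n p = pt3 (l * p.1) (m * p.2.1) (n * p.2.2) := rfl

/-- The Cartesian coordinates of Euclidean space, as a triple of nested pairs. -/
def cartesianEquiv : E3 ≃ᵐ ℝ × ℝ × ℝ :=
  (MeasurableEquiv.toLp 2 (Fin 3 → ℝ)).symm.trans <|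
    (MeasurableEquiv.piFinSuccAbove (fun _ ↦ ℝ) 0).trans <|
    (MeasurableEquiv.refl ℝ).prodCongr MeasurableEquiv.finTwoArrow

theorem measurePreserving_cartesianEquiv : MeasurePreserving cartesianEquiv :=
  ((MeasurePreserving.id volume).prod (volume_preserving_finTwoArrow ℝ)).comp <|
    (volume_preserving_piFinSuccAbove (fun _ : Fin 3 ↦ ℝ) 0).comp (PiLp.volume_preserving_ofLp _)

theorem volume_image_orthoschemeMap (l m n : ℝ) (s : Set (ℝ × ℝ × ℝ)) :
    volume (orthoschemeMap l m n '' s) = ENNReal.ofReal |l * (m * n)| * volume s := by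
  have : (volume : Measure (ℝ × ℝ × ℝ)).IsAddHaarMeasure :=
    Measure.prod.instIsAddHaarMeasure volume volume
  let D : ℝ × ℝ × ℝ →ₗ[ℝ] ℝ × ℝ × ℝ :=
    (l • LinearMap.id).prodMap ((m • LinearMap.id).prodMap (n • LinearMap.id))
  have hD : D.det = l * (m * n) := by simp [D, LinearMap.det_prodMap]
  have hpre : orthoschemeMap l m n '' s = cartesianEquiv ⁻¹' (D '' s) := by
    have hcomp (p : ℝ × ℝ × ℝ) : cartesianEquiv (orthoschemeMap l m n p) = D p := rfl
    rw [← cartesianEquiv.injective.preimage_image (orthoschemeMap l m n '' s), image_image]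
    simp only [hcomp]
  rw [hpre, measurePreserving_cartesianEquiv.measure_preimage_equiv,
    Measure.addHaar_image_linearMap, hD]

variable {a b c : ℝ}

theorem rogersSimplex_eq_image (a b c : ℝ) :
    RogersSimplex a b c =
      orthoschemeMap a √(b ^ 2 - a ^ 2) √(c ^ 2 - b ^ 2) '' unitOrthoscheme := by
  rw [← convexHull_eq_unitOrthoscheme, LinearMap.image_convexHull, RogersSimplex]
  simp [image_insert_eq, orthoschemeMap_apply]

theorem sq_norm_orthoschemeMap (hab : a ^ 2 ≤ b ^ 2) (hbc : b ^ 2 ≤ c ^ 2) (p : ℝ × ℝ × ℝ) :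
    ‖orthoschemeMap a √(b ^ 2 - a ^ 2) √(c ^ 2 - b ^ 2) p‖ ^ 2 = rogersForm a b c p := by
  have hnorm (x y z : ℝ) : ‖pt3 x y z‖ ^ 2 = x ^ 2 + y ^ 2 + z ^ 2 := by
    simp [pt3, EuclideanSpace.norm_sq_eq, Fin.sum_univ_three]
  rw [orthoschemeMap_apply, hnorm, mul_pow, mul_pow, mul_pow, sq_sqrt (sub_nonneg.2 hab),
    sq_sqrt (sub_nonneg.2 hbc), rogersForm]
  ring

theorem rogersSimplex_inter_closedBall_eq_image (hab : a ^ 2 ≤ b ^ 2) (hbc : b ^ 2 ≤ c ^ 2) :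
    RogersSimplex a b c ∩ Metric.closedBall 0 1 =
      orthoschemeMap a √(b ^ 2 - a ^ 2) √(c ^ 2 - b ^ 2) '' orthoschemeSector a b c := by
  rw [rogersSimplex_eq_image, ← image_inter_preimage]
  congr 2 with p
  rw [mem_preimage, mem_closedBall_zero_iff, ← sq_le_one_iff₀ (norm_nonneg _),
    sq_norm_orthoschemeMap hab hbc]
  rfl

theorem volume_real_rogersSimplex (a b c : ℝ) :
    volume.real (RogersSimplex a b c) = |a * (√(b ^ 2 - a ^ 2) * √(c ^ 2 - b ^ 2))| / 6 := by
  rw [rogersSimplex_eq_image, measureReal_def, volume_image_orthoschemeMap, volume_unitOrthoscheme,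
    ENNReal.toReal_mul, ENNReal.toReal_ofReal (abs_nonneg _), ENNReal.toReal_ofReal (by norm_num)]
  ring

theorem volume_real_rogersSimplex_inter_closedBall (hab : a ^ 2 ≤ b ^ 2) (hbc : b ^ 2 ≤ c ^ 2) :
    volume.real (RogersSimplex a b c ∩ Metric.closedBall 0 1) =
      6 * volume.real (RogersSimplex a b c) * volume.real (orthoschemeSector a b c) := by
  rw [volume_real_rogersSimplex, rogersSimplex_inter_closedBall_eq_image hab hbc, measureReal_def,
    volume_image_orthoschemeMap, ENNReal.toReal_mul, ENNReal.toReal_ofReal (abs_nonneg _),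
    mul_div_cancel₀ _ (by norm_num), measureReal_def]

end DiagonalImage

theorem rogers_simplex_density_le_general (a b c : ℝ) (ha : 1 ≤ a) (hb : 4 / 3 ≤ b ^ 2)
    (hc : 2 ≤ c ^ 2) (hab : a ≤ b) (hbc : b ≤ c) :
    volume.real (RogersSimplex a b c ∩ Metric.closedBall 0 1) ≤
      δoct * volume.real (RogersSimplex a b c) ∧
    (0 < volume.real (RogersSimplex a b c) →
      (volume.real (RogersSimplex a b c ∩ Metric.closedBall 0 1) =
          δoct * volume.real (RogersSimplex a b c) ↔
        a = 1 ∧ b = 2 / √3 ∧ c = √2)) := by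
  have hb₀ : 0 ≤ b := by linarith
  have hb' : 2 / √3 ≤ b :=
    (sq_le_sq₀ (by positivity) hb₀).1 (by rwa [sq_two_div_sqrt_three])
  have hc' : √2 ≤ c := sqrt_le_iff.2 ⟨hb₀.trans hbc, hc⟩
  rw [volume_real_rogersSimplex_inter_closedBall (by gcongr) (by gcongr)]
  by_cases hbase : (a, b, c) = (1, 2 / √3, √2)
  · obtain ⟨rfl, rfl, rfl⟩ : a = 1 ∧ b = 2 / √3 ∧ c = √2 := by simpa using hbase
    rw [volume_real_orthoschemeSector_octahedral]
    exact ⟨by linarith, fun _ ↦ iff_of_true (by ring) ⟨rfl, rfl, rfl⟩⟩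
  · have hlt : 6 * volume.real (orthoschemeSector a b c) < δoct := by
      linarith [volume_real_orthoschemeSector_lt_octahedral ha hb' hc' hbase]
    have : 0 ≤ volume.real (RogersSimplex a b c) := measureReal_nonneg
    rw [mul_right_comm]
    exact ⟨by gcongr, fun hV ↦ iff_of_false (by gcongr : _ < _).ne (by simpa using hbase)⟩

/-- Type 4 regions: the Rogers simplex `R(a, b, √2)` with `1 ≤ a ≤ 1.18` and
`4/3 ≤ b² ≤ 2` has density at most `δ_oct`, with equality (for positive volume)
exactly when `a = 1` and `b = 2/√3`. -/
theorem rogers_simplex_density_le (a b : ℝ) (ha : 1 ≤ a) (ha' : a ≤ 1.18)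
    (hb : 4 / 3 ≤ b ^ 2) (hb' : b ^ 2 ≤ 2) (hab : a ≤ b) :
    (volume (RogersSimplex a b (Real.sqrt 2) ∩ Metric.closedBall 0 1)).toReal ≤
      δoct * (volume (RogersSimplex a b (Real.sqrt 2))).toReal ∧
    (0 < (volume (RogersSimplex a b (Real.sqrt 2))).toReal →
      ((volume (RogersSimplex a b (Real.sqrt 2) ∩ Metric.closedBall 0 1)).toReal =
          δoct * (volume (RogersSimplex a b (Real.sqrt 2))).toReal ↔
        a = 1 ∧ b = 2 / Real.sqrt 3)) := by
  simpa [measureReal_def] using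
    rogers_simplex_density_le_general a b √2 ha hb (by simp) hab (le_sqrt_of_sq_le hb')
end
end

section
/- Let p₀,p₁,p₂,p₃ ∈ ℝ³ be points such that five of the six pairwise distances equal 2 and the remaining pairwise distance equals 2√2 (a quarter of a regular octahedron of edge 2). Then Γ(S) = 0 for S = conv{p₀,p₁,p₂,p₃}; equivalently, vol(S ∩ (B(p₀,1) ∪ B(p₁,1) ∪ B(p₂,1) ∪ B(p₃,1))) = δ_oct·vol(S). -/
open MeasureTheory Real

noncomputable section

/-- The compression `Γ(S)` of the simplex `S = conv {p₀, p₁, p₂, p₃}`: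
`Γ(S) = -δ_oct · vol S + vol (S ∩ (B(p₀,1) ∪ B(p₁,1) ∪ B(p₂,1) ∪ B(p₃,1)))`. -/
def Gamma (p₀ p₁ p₂ p₃ : E3) : ℝ :=
  -δoct * (volume (convexHull ℝ ({p₀, p₁, p₂, p₃} : Set E3))).toReal +
    (volume (convexHull ℝ ({p₀, p₁, p₂, p₃} : Set E3) ∩
      (Metric.closedBall p₀ 1 ∪ Metric.closedBall p₁ 1 ∪ Metric.closedBall p₂ 1 ∪
        Metric.closedBall p₃ 1))).toReal

/-!
The long edge of the wedge passes through the centre `o` of the octahedron, and the plane through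
`o` orthogonal to it cuts the wedge into two mirror-image corners of the octahedron, each the convex
hull of `o` and three vertices. A corner misses the ball around the fourth vertex. Each of the other
three balls is centred at a vertex of the corner and does not reach the opposite face, so it cuts
out a sector of a quarter of a vertex cone of the octahedron. The six congruent sectors overlap in
null sets only, because vertices are at distance at least `2`. The volume of a sector is a third of
the solid angle of the quarter cone, `(4 arccos (1/√3) - π) / 2`, which is an elementary iterated
integral over the cross-section of the cone at height `1`.
-/

open Set Metric Module
open scoped Pointwise

section Integration

theorem lintegral_Icc_of_hasDerivAt {F f : ℝ → ℝ} {a b : ℝ} (hab : a ≤ b)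
    (hF : ∀ x ∈ Icc a b, HasDerivAt F (f x) x) (hf : ContinuousOn f (Icc a b))
    (hf₀ : ∀ x ∈ Icc a b, 0 ≤ f x) :
    ∫⁻ x in Icc a b, ENNReal.ofReal (f x) = ENNReal.ofReal (F b - F a) := by
  rw [← ofReal_integral_eq_lintegral_ofReal hf.integrableOn_Icc
      ((ae_restrict_iff' measurableSet_Icc).2 (.of_forall hf₀)),
    integral_Icc_eq_integral_Ioc, ← intervalIntegral.integral_of_le hab,
    intervalIntegral.integral_eq_sub_of_hasDerivAt (by rwa [uIcc_of_le hab])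
      (hf.intervalIntegrable_of_Icc hab)]

theorem aedisjoint_closedBall {E : Type*} [NormedAddCommGroup E] [NormedSpace ℝ E]
    [MeasurableSpace E] [BorelSpace E] [FiniteDimensional ℝ E] (μ : Measure E) [μ.IsAddHaarMeasure]
    {x y : E} {r s : ℝ} (hr : r ≠ 0) (h : r + s ≤ dist x y) :
    AEDisjoint μ (closedBall x r) (closedBall y s) := by
  refine measure_mono_null (fun p ⟨hpx, hpy⟩ ↦ ?_) (Measure.addHaar_sphere_of_ne_zero μ x hr)
  rw [mem_closedBall] at hpx hpy
  exact le_antisymm hpx (by linarith [dist_triangle_left x y p])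

-- Layer cake: the slice of `S` at height `t` is `t • {w ∈ D | t ≤ r w}`.
theorem measure_prod_cone_eq_lintegral {E : Type*} [NormedAddCommGroup E] [NormedSpace ℝ E]
    [MeasurableSpace E] [BorelSpace E] [FiniteDimensional ℝ E] (μ : Measure E) [μ.IsAddHaarMeasure]
    {S : Set (ℝ × E)} {D : Set E} {r : E → ℝ} (hS : MeasurableSet S) (hD : MeasurableSet D)
    (hr : Measurable r) (hr₀ : ∀ w ∈ D, 0 ≤ r w) (hS₀ : ∀ q ∈ S, 0 ≤ q.1)
    (hSD : ∀ t > 0, ∀ w, (t, t • w) ∈ S ↔ w ∈ D ∧ t ≤ r w) :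
    (volume.prod μ) S =
      ∫⁻ w in D, ENNReal.ofReal (r w ^ (finrank ℝ E + 1) / (finrank ℝ E + 1)) ∂μ := by
  have slice_neg : ∀ t ∉ Ici (0 : ℝ), μ (Prod.mk t ⁻¹' S) = 0 := fun t ht ↦ by
    rw [show Prod.mk t ⁻¹' S = ∅ from eq_empty_of_forall_notMem fun w hw ↦ ht (hS₀ _ hw),
      measure_empty]
  have slice_pos : ∀ t ∈ Ioi (0 : ℝ), μ (Prod.mk t ⁻¹' S) =
      μ.restrict D {w | t ≤ r w} * ENNReal.ofReal (t ^ finrank ℝ E) := fun t ht ↦ by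
    have : Prod.mk t ⁻¹' S = t • ({w | t ≤ r w} ∩ D) := by
      ext x
      rw [mem_smul_set_iff_inv_smul_mem₀ ht.ne', inter_comm, mem_inter_iff, mem_ofPred_eq,
        ← hSD t ht, smul_inv_smul₀ ht.ne', mem_preimage]
    rw [this, Measure.addHaar_smul_of_nonneg μ ht.le,
      Measure.restrict_apply (measurableSet_le measurable_const hr), mul_comm]
  calc (volume.prod μ) S = ∫⁻ t, μ (Prod.mk t ⁻¹' S) := Measure.prod_apply hS
    _ = ∫⁻ t in Ioi 0, μ (Prod.mk t ⁻¹' S) := by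
      rw [setLIntegral_congr Ioi_ae_eq_Ici, setLIntegral_eq_of_support_subset]
      exact fun t ht ↦ not_not.1 fun h ↦ ht (slice_neg t h)
    _ = ∫⁻ t in Ioi 0, μ.restrict D {w | t ≤ r w} * ENNReal.ofReal (t ^ finrank ℝ E) :=
      setLIntegral_congr_fun measurableSet_Ioi slice_pos
    _ = ∫⁻ w in D, ENNReal.ofReal (∫ t in 0..r w, t ^ finrank ℝ E) ∂μ :=
      (lintegral_comp_eq_lintegral_meas_le_mul _ ((ae_restrict_iff' hD).2 (.of_forall hr₀))
        hr.aemeasurable (fun _ _ ↦ (continuous_pow _).intervalIntegrable _ _)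
        ((ae_restrict_iff' measurableSet_Ioi).2
          (.of_forall fun _ ht ↦ pow_nonneg (le_of_lt ht) _))).symm
    _ = _ := by simp only [integral_pow, ne_eq, Nat.add_eq_zero_iff, one_ne_zero, and_false,
      not_false_eq_true, zero_pow, sub_zero]

end Integration

section Triangle

/-- The right triangle with vertices `(0, 0)`, `(1, 0)` and `(0, 1)`; it is the cross-section at
height `1` of a quarter of the vertex cone of a regular octahedron. -/
def unitTriangle : Set (ℝ × ℝ) := {w | 0 ≤ w.1 ∧ 0 ≤ w.2 ∧ w.1 + w.2 ≤ 1}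

theorem measurableSet_unitTriangle : MeasurableSet unitTriangle := by
  unfold unitTriangle
  measurability

theorem setLIntegral_unitTriangle {f : ℝ × ℝ → ENNReal} (hf : Measurable f) :
    ∫⁻ w in unitTriangle, f w = ∫⁻ u in Icc 0 1, ∫⁻ v in Icc 0 (1 - u), f (u, v) := by
  rw [← lintegral_indicator measurableSet_unitTriangle, Measure.volume_eq_prod,
    lintegral_prod _ (hf.indicator measurableSet_unitTriangle).aemeasurable,
    ← lintegral_indicator measurableSet_Icc]
  congr 1 with u
  by_cases hu : u ∈ Icc (0 : ℝ) 1
  · rw [indicator_of_mem hu, ← lintegral_indicator measurableSet_Icc]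
    congr 1 with v
    refine indicator_eq_indicator ?_ rfl
    simp only [unitTriangle, mem_ofPred_eq, mem_Icc, hu.1, true_and, le_sub_iff_add_le']
  · rw [indicator_of_notMem hu]
    refine lintegral_eq_zero_of_ae_eq_zero (.of_forall fun v ↦ indicator_of_notMem ?_ _)
    rintro ⟨hu₀, hv₀, huv⟩
    exact hu ⟨hu₀, le_of_add_le_of_nonneg_left huv hv₀⟩

theorem volume_unitTriangle : volume unitTriangle = ENNReal.ofReal (1 / 2) := by
  calc volume unitTriangle = ∫⁻ u in Icc 0 1, ENNReal.ofReal (1 - u) := by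
        rw [← setLIntegral_one, setLIntegral_unitTriangle measurable_const]
        simp only [setLIntegral_one, volume_Icc, sub_zero]
    _ = ENNReal.ofReal (1 / 2) := by
        rw [lintegral_Icc_of_hasDerivAt (F := fun u ↦ u - u ^ 2 / 2) zero_le_one
          (fun u _ ↦ ?_) (by fun_prop) fun u hu ↦ sub_nonneg.2 hu.2]
        · norm_num
        · refine ((hasDerivAt_id u).sub ((hasDerivAt_pow 2 u).div_const 2)).congr_deriv ?_
          ring

theorem hasDerivAt_div_sqrt_add_sq {c : ℝ} (hc : 0 < c) (v : ℝ) :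
    HasDerivAt (fun v ↦ v / (c * √(c + v ^ 2))) ((√(c + v ^ 2))⁻¹ ^ 3) v := by
  have hpos : 0 < c + v ^ 2 := by positivity
  have hsqrt : HasDerivAt (fun v ↦ √(c + v ^ 2)) (2 * v / (2 * √(c + v ^ 2))) v := by
    simpa using ((hasDerivAt_pow 2 v).const_add c).sqrt hpos.ne'
  refine ((hasDerivAt_id v).div (hsqrt.const_mul c) (by positivity)).congr_deriv ?_
  have hsq := sq_sqrt hpos.le
  have := sqrt_pos.2 hpos
  simp only [id]
  field_simp
  linear_combination hsq

theorem hasDerivAt_arctan_unitTriangle (u : ℝ) :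
    HasDerivAt (fun u ↦ arctan ((1 + u) / √(1 + u ^ 2 + (1 - u) ^ 2)))
      ((1 - u) / ((1 + u ^ 2) * √(1 + u ^ 2 + (1 - u) ^ 2))) u := by
  have hpos : 0 < 1 + u ^ 2 + (1 - u) ^ 2 := by positivity
  have hquad : HasDerivAt (fun u : ℝ ↦ 1 + u ^ 2 + (1 - u) ^ 2) (4 * u - 2) u := by
    refine (((hasDerivAt_pow 2 u).const_add 1).add
      (((hasDerivAt_id u).const_sub 1).pow 2)).congr_deriv ?_
    simp only [id]
    ring
  refine (((hasDerivAt_id u).const_add 1).div (hquad.sqrt hpos.ne')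
    (by positivity)).arctan.congr_deriv ?_
  have hsq := sq_sqrt hpos.le
  have := sqrt_pos.2 hpos
  simp only [id, Pi.div_apply]
  generalize √(1 + u ^ 2 + (1 - u) ^ 2) = s at *
  have hden : 1 + ((1 + u) / s) ^ 2 = 3 * (1 + u ^ 2) / s ^ 2 := by
    field_simp
    linear_combination hsq
  rw [hden]
  field_simp
  linear_combination 2 * hsq

theorem arccos_one_div_sqrt_three : arccos (1 / √3) = arctan √2 := by
  rw [arccos_eq_arctan (by positivity), div_pow, sq_sqrt zero_le_three,
    show (1 : ℝ) - 1 ^ 2 / 3 = 2 / 3 by norm_num, sqrt_div zero_le_two, div_div_div_cancel_right₀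
      (by positivity), div_one]

theorem pi_le_four_mul_arccos_one_div_sqrt_three : π ≤ 4 * arccos (1 / √3) := by
  have : arctan 1 ≤ arctan √2 := arctan_mono (one_le_sqrt.2 one_le_two)
  rw [arctan_one] at this
  rw [arccos_one_div_sqrt_three]
  linarith

-- Central projection onto the plane at height `1` has density `(1 + u² + v²)^(-3/2)`, so this is
-- the solid angle of a quarter of the vertex cone of a regular octahedron.
theorem setLIntegral_unitTriangle_solidAngle :
    ∫⁻ w in unitTriangle, ENNReal.ofReal ((√(1 + w.1 ^ 2 + w.2 ^ 2))⁻¹ ^ 3) =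
      ENNReal.ofReal ((4 * arccos (1 / √3) - π) / 2) := by
  have inner_integral : ∀ u ∈ Icc (0 : ℝ) 1,
      ∫⁻ v in Icc 0 (1 - u), ENNReal.ofReal ((√(1 + u ^ 2 + v ^ 2))⁻¹ ^ 3) =
        ENNReal.ofReal ((1 - u) / ((1 + u ^ 2) * √(1 + u ^ 2 + (1 - u) ^ 2))) := fun u hu ↦ by
    rw [lintegral_Icc_of_hasDerivAt (sub_nonneg.2 hu.2)
      (fun v _ ↦ hasDerivAt_div_sqrt_add_sq (c := 1 + u ^ 2) (by positivity) v)
      (.pow (.inv₀ (by fun_prop) fun v _ ↦ by positivity) 3) fun v _ ↦ by positivity, zero_div,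
      sub_zero]
  have endpoint_one : (1 + 1) / √(1 + 1 ^ 2 + (1 - 1) ^ 2) = √2 := by norm_num
  have endpoint_zero : (1 + 0) / √(1 + 0 ^ 2 + (1 - 0) ^ 2) = (√2)⁻¹ := by norm_num
  rw [setLIntegral_unitTriangle (by fun_prop),
    setLIntegral_congr_fun measurableSet_Icc inner_integral,
    lintegral_Icc_of_hasDerivAt zero_le_one (fun u _ ↦ hasDerivAt_arctan_unitTriangle u)
      (.div (by fun_prop) (by fun_prop) fun u _ ↦ by positivity)
      (fun u hu ↦ div_nonneg (sub_nonneg.2 hu.2) (by positivity)),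
    endpoint_one, endpoint_zero, arctan_inv_of_pos (by positivity), arccos_one_div_sqrt_three]
  ring_nf

end Triangle

section Cone

/-- A quarter of the vertex cone of a regular octahedron: apex at the origin, the first coordinate
measured along the axis of the octahedron through that vertex. -/
def quarterVertexCone : Set (ℝ × ℝ × ℝ) := {q | 0 ≤ q.2.1 ∧ 0 ≤ q.2.2 ∧ q.2.1 + q.2.2 ≤ q.1}

theorem measurableSet_quarterVertexCone : MeasurableSet quarterVertexCone := by
  unfold quarterVertexCone
  measurability

theorem nonneg_fst_of_mem_quarterVertexCone {q : ℝ × ℝ × ℝ} (hq : q ∈ quarterVertexCone) :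
    0 ≤ q.1 :=
  (add_nonneg hq.1 hq.2.1).trans hq.2.2

theorem mk_smul_mem_quarterVertexCone {t : ℝ} (ht : 0 < t) {w : ℝ × ℝ} :
    (t, t • w) ∈ quarterVertexCone ↔ w ∈ unitTriangle := by
  simp only [quarterVertexCone, unitTriangle, mem_ofPred_eq, Prod.smul_fst, Prod.smul_snd,
    smul_eq_mul, mul_nonneg_iff_of_pos_left ht, ← mul_add, mul_le_iff_le_one_right ht]

theorem finrank_real_prod : finrank ℝ (ℝ × ℝ) = 2 := by
  rw [finrank_prod, finrank_self]

theorem volume_quarterVertexCone_inter_fst_le {h : ℝ} (hh : 0 ≤ h) :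
    volume (quarterVertexCone ∩ {q | q.1 ≤ h}) = ENNReal.ofReal (h ^ 3 / 6) := by
  rw [Measure.volume_eq_prod, measure_prod_cone_eq_lintegral (r := fun _ ↦ h) volume
    (measurableSet_quarterVertexCone.inter (measurableSet_le measurable_fst measurable_const))
    measurableSet_unitTriangle measurable_const (fun _ _ ↦ hh)
    (fun q hq ↦ nonneg_fst_of_mem_quarterVertexCone hq.1)
    fun t ht w ↦ and_congr_left fun _ ↦ mk_smul_mem_quarterVertexCone ht,
    setLIntegral_const, volume_unitTriangle, ← ENNReal.ofReal_mul (by positivity),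
    finrank_real_prod]
  ring_nf

theorem volume_quarterVertexCone_inter_ball {r : ℝ} (hr : 0 ≤ r) :
    volume (quarterVertexCone ∩ {q | q.1 ^ 2 + q.2.1 ^ 2 + q.2.2 ^ 2 ≤ r ^ 2}) =
      ENNReal.ofReal (r ^ 3 * (4 * arccos (1 / √3) - π) / 6) := by
  have radius_iff : ∀ t > 0, ∀ w : ℝ × ℝ,
      (t, t • w) ∈ {q : ℝ × ℝ × ℝ | q.1 ^ 2 + q.2.1 ^ 2 + q.2.2 ^ 2 ≤ r ^ 2} ↔
        t ≤ r * (√(1 + w.1 ^ 2 + w.2 ^ 2))⁻¹ := fun t ht w ↦ by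
    have hpos : 0 < 1 + w.1 ^ 2 + w.2 ^ 2 := by positivity
    rw [← div_eq_mul_inv, le_div_iff₀ (sqrt_pos.2 hpos),
      ← pow_le_pow_iff_left₀ (by positivity) hr two_ne_zero, mul_pow t, sq_sqrt hpos.le]
    simp only [mem_ofPred_eq, Prod.smul_fst, Prod.smul_snd, smul_eq_mul, mul_pow, mul_add, mul_one]
  rw [Measure.volume_eq_prod, measure_prod_cone_eq_lintegral volume
    (r := fun w : ℝ × ℝ ↦ r * (√(1 + w.1 ^ 2 + w.2 ^ 2))⁻¹)
    (measurableSet_quarterVertexCone.inter (measurableSet_le (by fun_prop) (by fun_prop)))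
    measurableSet_unitTriangle (by fun_prop) (fun _ _ ↦ by positivity)
    (fun q hq ↦ nonneg_fst_of_mem_quarterVertexCone hq.1)
    fun t ht w ↦ and_congr (mk_smul_mem_quarterVertexCone ht) (radius_iff t ht w)]
  calc _ = ∫⁻ w in unitTriangle, ENNReal.ofReal (r ^ 3 / 3) *
        ENNReal.ofReal ((√(1 + w.1 ^ 2 + w.2 ^ 2))⁻¹ ^ 3) := by
        congr 1 with w
        rw [← ENNReal.ofReal_mul (by positivity), finrank_real_prod]
        ring_nf
    _ = _ := by
        rw [lintegral_const_mul _ (by fun_prop), setLIntegral_unitTriangle_solidAngle,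
          ← ENNReal.ofReal_mul (by positivity)]
        ring_nf

end Cone

section Segment

variable {E : Type*} [AddCommGroup E] [Module ℝ E]

theorem segment_eq_union_of_mem {x y z : E} (hz : z ∈ segment ℝ x y) :
    segment ℝ x y = segment ℝ x z ∪ segment ℝ z y := by
  have hx := left_mem_segment ℝ x y
  have hy := right_mem_segment ℝ x y
  refine Subset.antisymm ?_ (union_subset ((convex_segment x y).segment_subset hx hz)
    ((convex_segment x y).segment_subset hz hy))
  have hz' : z ∈ range (AffineMap.lineMap x y : ℝ → E) := by
    rw [segment_eq_image_lineMap] at hz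
    exact image_subset_range _ _ hz
  rw [← insert_endpoints_openSegment]
  refine insert_subset (.inl (left_mem_segment ℝ x z)) (insert_subset
    (.inr (right_mem_segment ℝ z y)) ((openSegment_subset_union x y hz').trans ?_))
  exact insert_subset (.inl (right_mem_segment ℝ x z))
    (union_subset_union (openSegment_subset_segment ℝ x z) (openSegment_subset_segment ℝ z y))

theorem convexHull_insert_insert_of_mem_segment {x y z : E} (hz : z ∈ segment ℝ x y) {s : Set E}
    (hs : s.Nonempty) :
    convexHull ℝ (insert x (insert y s)) =
      convexHull ℝ (insert x (insert z s)) ∪ convexHull ℝ (insert z (insert y s)) := by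
  have hull_eq_join : ∀ a b : E,
      convexHull ℝ (insert a (insert b s)) = convexJoin ℝ (segment ℝ a b) (convexHull ℝ s) :=
    fun a b ↦ by
      rw [← convexHull_pair, ← convexHull_union (insert_nonempty _ _) hs, insert_union,
        singleton_union]
  simp only [hull_eq_join, segment_eq_union_of_mem hz, convexJoin_union_left]

end Segment

section OrthantSimplex

variable {ι E : Type*} [Fintype ι] [NormedAddCommGroup E] [InnerProductSpace ℝ E]

/-- The corner of the cross-polytope with centre `o` and semi-axes `h • b i` cut out by the positive
orthant of the frame `b` at `o`. -/
def orthantSimplex (b : OrthonormalBasis ι ℝ E) (o : E) (h : ℝ) : Set E :=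
  {p | (∀ i, 0 ≤ inner ℝ (b i) (p - o)) ∧ ∑ i, inner ℝ (b i) (p - o) ≤ h}

variable (b : OrthonormalBasis ι ℝ E) (o : E) {h : ℝ}

theorem convex_orthantSimplex : Convex ℝ (orthantSimplex b o h) := by
  rintro p ⟨hp, hp'⟩ q ⟨hq, hq'⟩ s t hs ht hst
  have hcomb : s • p + t • q - o = s • (p - o) + t • (q - o) := calc
    s • p + t • q - o = s • p + t • q - (s • o + t • o) := by rw [Convex.combo_self hst]
    _ = s • (p - o) + t • (q - o) := by module
  simp only [orthantSimplex, mem_ofPred_eq, hcomb, inner_add_right, inner_smul_right,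
    Finset.sum_add_distrib, ← Finset.mul_sum]
  exact ⟨fun i ↦ add_nonneg (mul_nonneg hs (hp i)) (mul_nonneg ht (hq i)),
    convex_Iic h hp' hq' hs ht hst⟩

theorem convexHull_insert_range_eq_orthantSimplex (hh : 0 < h) :
    convexHull ℝ (insert o (range fun i ↦ o + h • b i)) = orthantSimplex b o h := by
  classical
  refine Subset.antisymm (convexHull_min ?_ (convex_orthantSimplex b o)) fun p ⟨hp, hp'⟩ ↦ ?_
  · rw [insert_subset_iff, range_subset_iff]
    refine ⟨by simp [orthantSimplex, hh.le], fun j ↦ ⟨fun i ↦ ?_, ?_⟩⟩ <;>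
      simp only [add_sub_cancel_left, inner_smul_right, b.inner_eq_ite, mul_ite, mul_one, mul_zero,
        Finset.sum_ite_eq', Finset.mem_univ, if_true, le_refl]
    split_ifs <;> simp [hh.le]
  · set x : ι → ℝ := fun i ↦ inner ℝ (b i) (p - o)
    have weights_sum : ∑ i, x i / h ≤ 1 := by rwa [← Finset.sum_div, div_le_one hh]
    have hcomb : p = (1 - ∑ i, x i / h) • o + ∑ i, (x i / h) • (o + h • b i) := by
      simp only [smul_add, Finset.sum_add_distrib, ← Finset.sum_smul, smul_smul,
        div_mul_cancel₀ _ hh.ne', b.sum_repr', x]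
      module
    have := (convex_convexHull ℝ (insert o (range fun i ↦ o + h • b i))).sum_mem
      (t := Finset.univ) (w := fun j : Option ι ↦ j.elim (1 - ∑ i, x i / h) (x · / h))
      (z := fun j ↦ j.elim o fun i ↦ o + h • b i)
      (by
        rintro (_ | i) -
        exacts [sub_nonneg.2 weights_sum, div_nonneg (hp i) hh.le])
      (by simp [Fintype.sum_option])
      (by
        rintro (_ | i) -
        exacts [subset_convexHull ℝ _ (mem_insert _ _),
          subset_convexHull ℝ _ (mem_insert_of_mem _ (mem_range_self i))])
    rw [hcomb]
    simpa only [Fintype.sum_option, Option.elim_none, Option.elim_some] using this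

theorem dist_vertices_orthantSimplex (hh : 0 ≤ h) {i j : ι} (hij : i ≠ j) :
    dist (o + h • b i) (o + h • b j) = √2 * h := by
  have norm_sub : ‖b i - b j‖ = √2 := by
    rw [← sqrt_sq (norm_nonneg _), norm_sub_sq_real, b.inner_eq_zero hij, b.norm_eq_one,
      b.norm_eq_one]
    norm_num
  rw [dist_add_left, dist_smul₀, dist_eq_norm, norm_sub, norm_of_nonneg hh, mul_comm]

theorem measurableSet_orthantSimplex [MeasurableSpace E] [BorelSpace E] :
    MeasurableSet (orthantSimplex b o h) := by
  have h₁ : IsClosed {p | ∀ i, 0 ≤ inner ℝ (b i) (p - o)} := by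
    rw [Set.ofPred_forall]
    exact isClosed_iInter fun i ↦ isClosed_le (by fun_prop) (by fun_prop)
  have h₂ : IsClosed {p | ∑ i, inner ℝ (b i) (p - o) ≤ h} := isClosed_le (by fun_prop) (by fun_prop)
  exact (h₁.inter h₂).measurableSet

theorem orthantSimplex_reindex {κ : Type*} [Fintype κ] (e : ι ≃ κ) :
    orthantSimplex (b.reindex e) o h = orthantSimplex b o h := by
  ext p
  have hsum := e.symm.sum_comp fun i ↦ inner ℝ (b i) (p - o)
  simp only [orthantSimplex, mem_ofPred_eq, b.reindex_apply, hsum,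
    e.symm.forall_congr_left, Equiv.symm_symm, Equiv.symm_apply_apply]

/-- The frame `b` with its `k`-th vector negated, which spans the mirror image of the orthant of `b`
in the hyperplane orthogonal to `b k`. -/
def flipAxis (b : OrthonormalBasis ι ℝ E) (k : ι) : OrthonormalBasis ι ℝ E :=
  b.map (ℝ ∙ b k)ᗮ.reflection

variable {b}

theorem flipAxis_apply_self (k : ι) : flipAxis b k k = -b k :=
  Submodule.reflection_orthogonalComplement_singleton_eq_neg (b k)

theorem flipAxis_apply_of_ne {i k : ι} (hik : i ≠ k) : flipAxis b k i = b i :=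
  Submodule.reflection_mem_subspace_eq_self
    (Submodule.mem_orthogonal_singleton_iff_inner_right.2 (b.inner_eq_zero hik.symm))

end OrthantSimplex

section Volume

variable {E : Type*} [NormedAddCommGroup E] [InnerProductSpace ℝ E]

/-- Orthonormal coordinates that put the vertex `o + h • b 0` of `orthantSimplex b o h` at the
origin, as the apex of `quarterVertexCone`; the first coordinate is the depth below this vertex. -/
def vertexCoords (b : OrthonormalBasis (Fin 3) ℝ E) (o : E) (h : ℝ) (p : E) : ℝ × ℝ × ℝ :=
  (h - inner ℝ (b 0) (p - o), inner ℝ (b 1) (p - o), inner ℝ (b 2) (p - o))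

variable (b : OrthonormalBasis (Fin 3) ℝ E) (o : E) {h r : ℝ}

theorem orthantSimplex_eq_preimage_vertexCoords :
    orthantSimplex b o h = vertexCoords b o h ⁻¹' (quarterVertexCone ∩ {q | q.1 ≤ h}) := by
  ext p
  simp only [orthantSimplex, vertexCoords, quarterVertexCone, Fin.forall_fin_succ,
    Fin.sum_univ_three, mem_ofPred_eq, mem_preimage, mem_inter_iff, sub_le_self_iff]
  grind

theorem orthantSimplex_inter_closedBall_eq_preimage_vertexCoords (hr : 0 ≤ r) (hrh : r ≤ h) :
    orthantSimplex b o h ∩ closedBall (o + h • b 0) r = vertexCoords b o h ⁻¹'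
      (quarterVertexCone ∩ {q | q.1 ^ 2 + q.2.1 ^ 2 + q.2.2 ^ 2 ≤ r ^ 2}) := by
  ext p
  have mem_ball_iff : p ∈ closedBall (o + h • b 0) r ↔ (h - inner ℝ (b 0) (p - o)) ^ 2 +
      inner ℝ (b 1) (p - o) ^ 2 + inner ℝ (b 2) (p - o) ^ 2 ≤ r ^ 2 := by
    rw [mem_closedBall, dist_eq_norm, ← sub_sub, ← sq_le_sq₀ (norm_nonneg _) hr,
      ← b.sum_sq_norm_inner_right]
    simp [Fin.sum_univ_three, inner_sub_right, inner_smul_right, b.inner_eq_ite, sub_sq_comm h]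
  rw [orthantSimplex_eq_preimage_vertexCoords, mem_inter_iff, mem_ball_iff]
  simp only [vertexCoords, mem_preimage, mem_inter_iff, mem_ofPred_eq]
  refine ⟨fun ⟨⟨hcone, _⟩, hball⟩ ↦ ⟨hcone, hball⟩, fun ⟨hcone, hball⟩ ↦ ⟨⟨hcone, ?_⟩, hball⟩⟩
  exact (abs_le_of_sq_le_sq' (by nlinarith) hr).2.trans hrh

variable [MeasurableSpace E] [BorelSpace E] [FiniteDimensional ℝ E]

theorem measurePreserving_vertexCoords (h : ℝ) :
    MeasurePreserving (vertexCoords b o h) volume volume := by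
  have flip_prod_pair := (Measure.measurePreserving_sub_left (volume : Measure ℝ) h).prod
    (volume_preserving_finTwoArrow ℝ)
  have repr := (PiLp.volume_preserving_ofLp (Fin 3)).comp
    (b.measurePreserving_repr.comp (measurePreserving_sub_right volume o))
  have split := (volume_preserving_piFinSuccAbove (fun _ : Fin 3 ↦ ℝ) 0).comp repr
  convert! flip_prod_pair.comp split using 2
  ext1 p
  simp [vertexCoords, b.repr_apply_apply, Fin.tail, inner_sub_right]

theorem volume_orthantSimplex (hh : 0 ≤ h) :
    volume (orthantSimplex b o h) = ENNReal.ofReal (h ^ 3 / 6) := by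
  rw [orthantSimplex_eq_preimage_vertexCoords,
    (measurePreserving_vertexCoords b o h).measure_preimage
      (measurableSet_quarterVertexCone.inter (by measurability)).nullMeasurableSet,
    volume_quarterVertexCone_inter_fst_le hh]

theorem volume_orthantSimplex_inter_closedBall (hr : 0 ≤ r) (hrh : r ≤ h) (i : Fin 3) :
    volume (orthantSimplex b o h ∩ closedBall (o + h • b i) r) =
      ENNReal.ofReal (r ^ 3 * (4 * arccos (1 / √3) - π) / 6) := by
  have vertex_zero (c : OrthonormalBasis (Fin 3) ℝ E) :
      volume (orthantSimplex c o h ∩ closedBall (o + h • c 0) r) =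
        ENNReal.ofReal (r ^ 3 * (4 * arccos (1 / √3) - π) / 6) := by
    rw [orthantSimplex_inter_closedBall_eq_preimage_vertexCoords c o hr hrh,
      (measurePreserving_vertexCoords c o h).measure_preimage
        (measurableSet_quarterVertexCone.inter (by measurability)).nullMeasurableSet,
      volume_quarterVertexCone_inter_ball hr]
  simpa [orthantSimplex_reindex] using vertex_zero (b.reindex (Equiv.swap i 0))

theorem volume_orthantSimplex_inter_iUnion_closedBall (hr : 0 < r) (hrh : √2 * r ≤ h) :
    volume (orthantSimplex b o h ∩ ⋃ i, closedBall (o + h • b i) r) =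
      ENNReal.ofReal (r ^ 3 * (4 * arccos (1 / √3) - π) / 2) := by
  have hrh' : r ≤ h := (le_mul_of_one_le_left hr.le (one_le_sqrt.2 one_le_two)).trans hrh
  have disjoint_balls : Pairwise (Function.onFun (AEDisjoint volume) fun i ↦
      orthantSimplex b o h ∩ closedBall (o + h • b i) r) := fun i j hij ↦
    (aedisjoint_closedBall volume hr.ne' (by
      rw [dist_vertices_orthantSimplex b o (hr.le.trans hrh') hij]
      nlinarith [mul_self_sqrt zero_le_two, sqrt_nonneg 2])).mono
      inter_subset_right inter_subset_right
  rw [inter_iUnion, measure_iUnion₀ disjoint_balls fun i ↦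
    ((measurableSet_orthantSimplex b o).inter measurableSet_closedBall).nullMeasurableSet]
  simp only [volume_orthantSimplex_inter_closedBall b o hr.le hrh', tsum_fintype, Finset.sum_const,
    Finset.card_univ, Fintype.card_fin, nsmul_eq_mul]
  rw [← ENNReal.ofReal_natCast, ← ENNReal.ofReal_mul (by positivity)]
  congr 1
  push_cast
  ring

end Volume

section Wedge

variable {ι E : Type*} [Fintype ι] [NormedAddCommGroup E] [InnerProductSpace ℝ E]

/-- The vertices of a wedge of the cross-polytope with centre `o` and semi-axes `h • b i`: both
vertices on the `k`-th axis, and the positive one on every other axis. -/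
def wedgeVertices (b : OrthonormalBasis ι ℝ E) (o : E) (h : ℝ) (k : ι) : Set E :=
  insert (o - h • b k) (range fun i ↦ o + h • b i)

variable (b : OrthonormalBasis ι ℝ E) (o : E) {h r : ℝ} (k : ι)

theorem insert_image_compl_flipAxis (h : ℝ) :
    insert (o - h • b k) ((fun i ↦ o + h • b i) '' {k}ᶜ) =
      range fun i ↦ o + h • flipAxis b k i := by
  rw [← insert_image_compl_eq_range _ k, flipAxis_apply_self, smul_neg, ← sub_eq_add_neg]
  congr 1
  exact image_congr fun i hi ↦ by rw [flipAxis_apply_of_ne hi]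

theorem wedgeVertices_flipAxis (h : ℝ) :
    wedgeVertices (flipAxis b k) o h k = wedgeVertices b o h k := by
  rw [wedgeVertices, wedgeVertices, ← insert_image_compl_flipAxis, insert_comm, flipAxis_apply_self,
    smul_neg, sub_neg_eq_add, insert_image_compl_eq_range fun i ↦ o + h • b i]

theorem convexHull_wedgeVertices [Nontrivial ι] (hh : 0 < h) :
    convexHull ℝ (wedgeVertices b o h k) =
      orthantSimplex b o h ∪ orthantSimplex (flipAxis b k) o h := by
  have centre_mem : o ∈ segment ℝ (o - h • b k) (o + h • b k) :=
    mem_segment_sub_add o _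
  rw [wedgeVertices, ← insert_image_compl_eq_range _ k,
    convexHull_insert_insert_of_mem_segment centre_mem (by simp), insert_comm,
    insert_image_compl_flipAxis, insert_image_compl_eq_range fun i ↦ o + h • b i,
    convexHull_insert_range_eq_orthantSimplex _ o hh,
    convexHull_insert_range_eq_orthantSimplex _ o hh, union_comm]

theorem disjoint_orthantSimplex_closedBall (hrh : r < h) :
    Disjoint (orthantSimplex b o h) (closedBall (o - h • b k) r) := by
  refine disjoint_left.2 fun p hp hball ↦ hrh.not_ge ?_
  calc
    h ≤ inner ℝ (b k) (p - o) + h := le_add_of_nonneg_left (hp.1 k)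
    _ = inner ℝ (b k) (p - (o - h • b k)) := by
      rw [sub_sub_eq_add_sub, add_sub_right_comm, inner_add_right, inner_smul_right, b.inner_eq_one,
        mul_one]
    _ ≤ ‖b k‖ * ‖p - (o - h • b k)‖ := real_inner_le_norm _ _
    _ ≤ r := by rwa [b.norm_eq_one, one_mul, ← dist_eq_norm]

theorem orthantSimplex_inter_biUnion_wedgeVertices (hrh : r < h) :
    orthantSimplex b o h ∩ ⋃ q ∈ wedgeVertices b o h k, closedBall q r =
      orthantSimplex b o h ∩ ⋃ i, closedBall (o + h • b i) r := by
  rw [wedgeVertices, biUnion_insert, biUnion_range, inter_union_distrib_left,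
    (disjoint_orthantSimplex_closedBall b o k hrh).inter_eq, empty_union]

theorem aedisjoint_orthantSimplex_flipAxis [MeasurableSpace E] [BorelSpace E]
    [FiniteDimensional ℝ E] (μ : Measure E) [μ.IsAddHaarMeasure] :
    AEDisjoint μ (orthantSimplex b o h) (orthantSimplex (flipAxis b k) o h) := by
  let mirror : AffineSubspace ℝ E := .mk' o (ℝ ∙ b k)ᗮ
  have mem_mirror (p : E) : p ∈ mirror ↔ inner ℝ (b k) (p - o) = 0 := by
    rw [AffineSubspace.mem_mk', vsub_eq_sub, Submodule.mem_orthogonal_singleton_iff_inner_right]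
  refine measure_mono_null (t := mirror) (fun p ⟨hp, hp'⟩ ↦ ?_)
    (Measure.addHaar_affineSubspace μ _ fun htop ↦ ?_)
  · have := hp'.1 k
    rw [flipAxis_apply_self, inner_neg_left] at this
    exact (mem_mirror p).2 (le_antisymm (neg_nonneg.1 this) (hp.1 k))
  · have : o + b k ∈ mirror := htop ▸ AffineSubspace.mem_top ℝ E _
    rw [mem_mirror, add_sub_cancel_left, b.inner_eq_one] at this
    exact one_ne_zero this

end Wedge

section WedgeVolume

variable {E : Type*} [NormedAddCommGroup E] [InnerProductSpace ℝ E] [MeasurableSpace E]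
  [BorelSpace E] [FiniteDimensional ℝ E] (b : OrthonormalBasis (Fin 3) ℝ E) (o : E) {h r : ℝ}
  (k : Fin 3)

theorem volume_convexHull_wedgeVertices (hh : 0 < h) :
    volume (convexHull ℝ (wedgeVertices b o h k)) = ENNReal.ofReal (h ^ 3 / 3) := by
  rw [convexHull_wedgeVertices b o k hh,
    measure_union₀ (measurableSet_orthantSimplex _ o).nullMeasurableSet
      (aedisjoint_orthantSimplex_flipAxis b o k volume),
    volume_orthantSimplex _ o hh.le, volume_orthantSimplex _ o hh.le,
    ← ENNReal.ofReal_add (by positivity) (by positivity)]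
  congr 1
  ring

theorem volume_convexHull_wedgeVertices_inter_biUnion_closedBall (hr : 0 < r) (hrh : √2 * r ≤ h) :
    volume (convexHull ℝ (wedgeVertices b o h k) ∩ ⋃ q ∈ wedgeVertices b o h k, closedBall q r) =
      ENNReal.ofReal (r ^ 3 * (4 * arccos (1 / √3) - π)) := by
  have hrh' : r < h := (lt_mul_of_one_lt_left hr one_lt_sqrt_two).trans_le hrh
  have volume_half (c : OrthonormalBasis (Fin 3) ℝ E) :
      volume (orthantSimplex c o h ∩ ⋃ q ∈ wedgeVertices c o h k, closedBall q r) =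
        ENNReal.ofReal (r ^ 3 * (4 * arccos (1 / √3) - π) / 2) := by
    rw [orthantSimplex_inter_biUnion_wedgeVertices c o k hrh',
      volume_orthantSimplex_inter_iUnion_closedBall c o hr hrh]
  have volume_flipped_half := volume_half (flipAxis b k)
  rw [wedgeVertices_flipAxis] at volume_flipped_half
  have nonneg : 0 ≤ r ^ 3 * (4 * arccos (1 / √3) - π) / 2 := by
    have := sub_nonneg.2 pi_le_four_mul_arccos_one_div_sqrt_three
    positivity
  have measurable_balls : MeasurableSet (⋃ q ∈ wedgeVertices b o h k, closedBall q r) :=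
    .biUnion ((finite_range _).insert _).countable fun _ _ ↦ measurableSet_closedBall
  rw [convexHull_wedgeVertices b o k (hr.trans hrh'), union_inter_distrib_right,
    measure_union₀ ((measurableSet_orthantSimplex _ o).inter measurable_balls).nullMeasurableSet
      ((aedisjoint_orthantSimplex_flipAxis b o k volume).mono inter_subset_left inter_subset_left),
    volume_half, volume_flipped_half, ← ENNReal.ofReal_add nonneg nonneg, add_halves]

end WedgeVolume

section Frame

variable {E : Type*} [NormedAddCommGroup E] [InnerProductSpace ℝ E] {h : ℝ}

theorem inner_eq_zero_and_norm_eq {x y : E} (hh : 0 ≤ h) (hx : ‖x‖ = h)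
    (hsub : ‖x - y‖ = √2 * h) (hadd : ‖x + y‖ = √2 * h) : inner ℝ x y = 0 ∧ ‖y‖ = h := by
  have sub_sq := norm_sub_sq_real x y
  have add_sq := norm_add_sq_real x y
  rw [hsub, hx, mul_pow, sq_sqrt zero_le_two] at sub_sq
  rw [hadd, hx, mul_pow, sq_sqrt zero_le_two] at add_sq
  exact ⟨by linarith, (sq_eq_sq₀ (norm_nonneg y) hh).1 (by linarith)⟩

theorem exists_orthonormalBasis_smul_eq (hE : finrank ℝ E = 3) (hh : 0 < h) {x : Fin 3 → E}
    (hnorm : ∀ i, ‖x i‖ = h) (hinner : Pairwise fun i j ↦ inner ℝ (x i) (x j) = 0) :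
    ∃ b : OrthonormalBasis (Fin 3) ℝ E, ∀ i, h • b i = x i := by
  have orthonormal : Orthonormal ℝ fun i ↦ h⁻¹ • x i :=
    ⟨fun i ↦ by rw [norm_smul, hnorm, norm_of_nonneg (by positivity), inv_mul_cancel₀ hh.ne'],
      fun i j hij ↦ by simp only [inner_smul_left, inner_smul_right, hinner hij, mul_zero]⟩
  have : FiniteDimensional ℝ E := .of_finrank_pos (by omega)
  refine ⟨.mk orthonormal (orthonormal.linearIndependent.span_eq_top_of_card_eq_finrank
    (by rw [hE, Fintype.card_fin])).ge, fun i ↦ ?_⟩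
  rw [OrthonormalBasis.coe_mk, smul_inv_smul₀ hh.ne']

theorem exists_eq_wedgeVertices (hE : finrank ℝ E = 3) (hh : 0 < h) {p q u v : E}
    (hpq : dist p q = 2 * h) (hpu : dist p u = √2 * h) (hpv : dist p v = √2 * h)
    (hqu : dist q u = √2 * h) (hqv : dist q v = √2 * h) (huv : dist u v = √2 * h) :
    ∃ (b : OrthonormalBasis (Fin 3) ℝ E) (o : E), {p, q, u, v} = wedgeVertices b o h 0 := by
  set o := midpoint ℝ p q with ho
  have hqo : q - o = -(p - o) := by
    rw [ho, right_sub_midpoint, left_sub_midpoint, ← smul_neg, neg_sub]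
  have hp : ‖p - o‖ = h := by
    rw [← dist_eq_norm, ho, dist_left_midpoint, hpq, norm_two, inv_mul_cancel_left₀ two_ne_zero]
  have orthogonal_to_axis {w : E} (hpw : dist p w = √2 * h) (hqw : dist q w = √2 * h) :
      inner ℝ (p - o) (w - o) = 0 ∧ ‖w - o‖ = h := by
    refine inner_eq_zero_and_norm_eq hh.le hp ?_ ?_
    · rw [sub_sub_sub_cancel_right, ← dist_eq_norm, hpw]
    · rw [← norm_neg, neg_add', ← hqo, sub_sub_sub_cancel_right, ← dist_eq_norm, hqw]
  obtain ⟨hpu, hu⟩ := orthogonal_to_axis hpu hqu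
  obtain ⟨hpv, hv⟩ := orthogonal_to_axis hpv hqv
  have huv : inner ℝ (u - o) (v - o) = 0 := by
    have := norm_sub_sq_real (u - o) (v - o)
    rw [sub_sub_sub_cancel_right, ← dist_eq_norm, huv, hu, hv, mul_pow, sq_sqrt zero_le_two] at this
    linarith
  obtain ⟨b, hb⟩ := exists_orthonormalBasis_smul_eq (x := ![p - o, u - o, v - o]) hE hh
    (by simp [Fin.forall_fin_succ, hp, hu, hv])
    (by
      intro i j hij
      fin_cases i <;> fin_cases j <;>
        first | exact absurd rfl hij | simpa | simpa [real_inner_comm])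
  refine ⟨b, o, ?_⟩
  have hb₀ : h • b 0 = p - o := hb 0
  have hrange : range (fun i ↦ o + h • b i) = {p, u, v} := by
    ext
    simp [hb, Fin.exists_fin_succ, eq_comm]
  rw [wedgeVertices, hrange, hb₀, sub_eq_add_neg, ← hqo, add_sub_cancel, insert_comm]

end Frame

section Density

theorem δoct_mul_sqrt_two_pow_three : δoct * (√2 ^ 3 / 3) = 4 * arccos (1 / √3) - π := by
  have sqrt_eight : √8 = √2 ^ 3 := by
    rw [sqrt_eq_iff_mul_self_eq (by norm_num) (by positivity), ← mul_pow,
      mul_self_sqrt zero_le_two]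
    norm_num
  rw [δoct, sqrt_eight]
  field_simp
  ring

theorem toReal_volume_convexHull_wedgeVertices_inter_biUnion_closedBall {E : Type*}
    [NormedAddCommGroup E] [InnerProductSpace ℝ E] [MeasurableSpace E] [BorelSpace E]
    [FiniteDimensional ℝ E] (b : OrthonormalBasis (Fin 3) ℝ E) (o : E) (k : Fin 3) {r : ℝ}
    (hr : 0 < r) :
    (volume (convexHull ℝ (wedgeVertices b o (√2 * r) k) ∩
      ⋃ q ∈ wedgeVertices b o (√2 * r) k, closedBall q r)).toReal =
      δoct * (volume (convexHull ℝ (wedgeVertices b o (√2 * r) k))).toReal := by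
  have solidAngle_nonneg := sub_nonneg.2 pi_le_four_mul_arccos_one_div_sqrt_three
  rw [volume_convexHull_wedgeVertices_inter_biUnion_closedBall b o k hr le_rfl,
    volume_convexHull_wedgeVertices b o k (by positivity), ENNReal.toReal_ofReal (by positivity),
    ENNReal.toReal_ofReal (by positivity), ← δoct_mul_sqrt_two_pow_three]
  ring

theorem exists_eq_wedgeVertices_sqrt_two {p q u v : E3} (hpq : dist p q = 2 * √2)
    (hpu : dist p u = 2) (hpv : dist p v = 2) (hqu : dist q u = 2) (hqv : dist q v = 2)
    (huv : dist u v = 2) :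
    ∃ (b : OrthonormalBasis (Fin 3) ℝ E3) (o : E3), {p, q, u, v} = wedgeVertices b o √2 0 := by
  have two_eq : (2 : ℝ) = √2 * √2 := (mul_self_sqrt zero_le_two).symm
  exact exists_eq_wedgeVertices finrank_euclideanSpace_fin (sqrt_pos.2 zero_lt_two) hpq
    (hpu.trans two_eq) (hpv.trans two_eq) (hqu.trans two_eq) (hqv.trans two_eq) (huv.trans two_eq)

end Density

/-- A quarter of a regular octahedron of edge `2` (five edges of length `2`, one of
length `2√2`) has compression `Γ(S) = 0`; equivalently its density is `δ_oct`. -/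
theorem octahedron_wedge_compression_zero (p₀ p₁ p₂ p₃ : E3)
    (hedges : (dist p₀ p₁ = 2 * Real.sqrt 2 ∧ dist p₀ p₂ = 2 ∧ dist p₀ p₃ = 2 ∧ dist p₂ p₃ = 2 ∧ dist p₁ p₃ = 2 ∧ dist p₁ p₂ = 2) ∨
      (dist p₀ p₁ = 2 ∧ dist p₀ p₂ = 2 * Real.sqrt 2 ∧ dist p₀ p₃ = 2 ∧ dist p₂ p₃ = 2 ∧ dist p₁ p₃ = 2 ∧ dist p₁ p₂ = 2) ∨
      (dist p₀ p₁ = 2 ∧ dist p₀ p₂ = 2 ∧ dist p₀ p₃ = 2 * Real.sqrt 2 ∧ dist p₂ p₃ = 2 ∧ dist p₁ p₃ = 2 ∧ dist p₁ p₂ = 2) ∨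
      (dist p₀ p₁ = 2 ∧ dist p₀ p₂ = 2 ∧ dist p₀ p₃ = 2 ∧ dist p₂ p₃ = 2 * Real.sqrt 2 ∧ dist p₁ p₃ = 2 ∧ dist p₁ p₂ = 2) ∨
      (dist p₀ p₁ = 2 ∧ dist p₀ p₂ = 2 ∧ dist p₀ p₃ = 2 ∧ dist p₂ p₃ = 2 ∧ dist p₁ p₃ = 2 * Real.sqrt 2 ∧ dist p₁ p₂ = 2) ∨
      (dist p₀ p₁ = 2 ∧ dist p₀ p₂ = 2 ∧ dist p₀ p₃ = 2 ∧ dist p₂ p₃ = 2 ∧ dist p₁ p₃ = 2 ∧ dist p₁ p₂ = 2 * Real.sqrt 2)) :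
    Gamma p₀ p₁ p₂ p₃ = 0 ∧
    (volume (convexHull ℝ ({p₀, p₁, p₂, p₃} : Set E3) ∩
        (Metric.closedBall p₀ 1 ∪ Metric.closedBall p₁ 1 ∪ Metric.closedBall p₂ 1 ∪
          Metric.closedBall p₃ 1))).toReal =
      δoct * (volume (convexHull ℝ ({p₀, p₁, p₂, p₃} : Set E3))).toReal := by
  refine (and_iff_right_of_imp fun density ↦ by rw [_root_.Gamma, density]; ring).2 ?_
  have wedge : ∃ (b : OrthonormalBasis (Fin 3) ℝ E3) (o : E3),
      {p₀, p₁, p₂, p₃} = wedgeVertices b o √2 0 := by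
    rcases hedges with h | h | h | h | h | h <;> obtain ⟨h₀₁, h₀₂, h₀₃, h₂₃, h₁₃, h₁₂⟩ := h
    · exact exists_eq_wedgeVertices_sqrt_two h₀₁ h₀₂ h₀₃ h₁₂ h₁₃ h₂₃
    · simpa only [insert_eq, union_comm, union_left_comm] using
        exists_eq_wedgeVertices_sqrt_two h₀₂ h₀₁ h₀₃ (by rwa [dist_comm]) h₂₃ h₁₃
    · simpa only [insert_eq, union_comm, union_left_comm] using
        exists_eq_wedgeVertices_sqrt_two h₀₃ h₀₁ h₀₂ (by rwa [dist_comm]) (by rwa [dist_comm]) h₁₂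
    · simpa only [insert_eq, union_comm, union_left_comm] using
        exists_eq_wedgeVertices_sqrt_two h₂₃ (by rwa [dist_comm]) (by rwa [dist_comm])
          (by rwa [dist_comm]) (by rwa [dist_comm]) h₀₁
    · simpa only [insert_eq, union_comm, union_left_comm] using
        exists_eq_wedgeVertices_sqrt_two h₁₃ (by rwa [dist_comm]) h₁₂ (by rwa [dist_comm])
          (by rwa [dist_comm]) h₀₂
    · simpa only [insert_eq, union_comm, union_left_comm] using
        exists_eq_wedgeVertices_sqrt_two h₁₂ (by rwa [dist_comm]) h₁₃ (by rwa [dist_comm]) h₂₃ h₀₃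
  obtain ⟨b, o, hvertices⟩ := wedge
  have density := toReal_volume_convexHull_wedgeVertices_inter_biUnion_closedBall b o 0 one_pos
  rw [mul_one, ← hvertices] at density
  simpa only [biUnion_insert, biUnion_singleton, union_assoc] using density
end
end
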